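/- arXiv:1807.01005 — 3 statements merged into one kernel-verified Lean document; each statement's English description precedes it below -/
import Mathlib

section
/- Let X be a finite abstract simplicial complex and Γ a finite collection of subcomplexes with union X. Let F be a field and ℓ an integer with -1 ≤ ℓ < |Γ|. Suppose that for every simplex σ of the nerve N(Γ) of dimension at most ℓ, the reduced homology group H̃_{|σ|-2}(⋃σ, F) vanishes (where H̃_{-1}(K,F)=0 means K is nonempty). Then dim H̃_ℓ(N(Γ), F) ≤ dim H̃_ℓ(X, F). -/
open Finset

/-- The faces of an abstract simplicial complex: a set of nonempty finite sets of
vertices, closed under taking nonempty subsets. -/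
def IsComplex {V : Type*} (S : Set (Finset V)) : Prop :=
  (∀ s ∈ S, s.Nonempty) ∧ ∀ s ∈ S, ∀ t ⊆ s, t.Nonempty → t ∈ S

/-- The nerve of a collection `Γ` of (sub)complexes, as a set of finsets of the index
type: the simplices are the nonempty subcollections with a common face. -/
def nerveC {ι V : Type*} (Γ : ι → Set (Finset V)) : Set (Finset ι) :=
  {σ | σ.Nonempty ∧ (⋂ i ∈ (σ : Finset ι), Γ i).Nonempty}

/-- Simplicial `n`-chains (dimension `n`, i.e. on vertex sets of cardinality `n+1`)
on the vertex type `V`, with coefficients in `A`. -/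
abbrev Chains (A V : Type*) [AddCommGroup A] [LinearOrder V] (n : ℕ) : Type _ :=
  {s : Finset V // s.card = n + 1} →₀ A

variable (R : Type*) [CommRing R] (A : Type*) [AddCommGroup A] [Module R A]
variable (V : Type*) [LinearOrder V]

/-- The simplicial boundary map, with the usual alternating signs determined by the
linear order on the vertices. -/
noncomputable def bdry (n : ℕ) : Chains A V (n + 1) →ₗ[R] Chains A V n :=
  Finsupp.lsum R fun s =>
    ∑ v ∈ (s : Finset V).attach,
      ((-1 : ℤ) ^ (((s : Finset V).filter (fun w => w < v.1)).card)) •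
        (Finsupp.lsingle (R := R) ⟨(s : Finset V).erase v.1, by
          rw [Finset.card_erase_of_mem v.2, s.2]; rfl⟩)

/-- The augmentation map on `0`-chains. -/
noncomputable def aug : Chains A V 0 →ₗ[R] A :=
  Finsupp.lsum R fun _ => LinearMap.id

/-- Reduced cycles: kernel of the boundary map, resp. of the augmentation in degree 0. -/
noncomputable def cycles : (n : ℕ) → Submodule R (Chains A V n)
  | 0 => LinearMap.ker (aug R A V)
  | (n + 1) => LinearMap.ker (bdry R A V n)

/-- Chains supported on the simplices belonging to `S`. -/
def chainsIn (S : Set (Finset V)) (n : ℕ) : Submodule R (Chains A V n) :=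
  Finsupp.supported A R {s : {s : Finset V // s.card = n + 1} | ↑s ∈ S}

/-- Reduced cycles of the complex `S`. -/
noncomputable def cyclesIn (S : Set (Finset V)) (n : ℕ) : Submodule R (Chains A V n) :=
  cycles R A V n ⊓ chainsIn R A V S n

/-- Boundaries of chains of the complex `S`. -/
noncomputable def boundariesIn (S : Set (Finset V)) (n : ℕ) : Submodule R (Chains A V n) :=
  Submodule.map (bdry R A V n) (chainsIn R A V S (n + 1))

/-- Reduced simplicial homology of the complex `S` in degree `n ≥ 0`,
with coefficients in the `R`-module `A`. -/
noncomputable abbrev redH (S : Set (Finset V)) (n : ℕ) : Type _ :=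
  (cyclesIn R A V S n) ⧸
    (Submodule.comap (cyclesIn R A V S n).subtype (boundariesIn R A V S n))

/-- Vanishing of the reduced homology of `S` in degree `n : ℤ`, with the convention
that `H̃₋₁(S) = 0` iff `S` is nonempty (and trivial vanishing below degree `-1`). -/
def RedHVanish (S : Set (Finset V)) (n : ℤ) : Prop :=
  if n < -1 then True
  else if n = -1 then S.Nonempty
  else Subsingleton (redH R A V S n.toNat)

open scoped Classical in
/-- The dimension (rank) of the reduced homology of `S` in degree `n : ℤ`; in degree `-1`
it is `0` iff `S` is nonempty, in accordance with the convention. -/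
noncomputable def redHRank (S : Set (Finset V)) (n : ℤ) : Cardinal :=
  if n < -1 then 0
  else if n = -1 then (if S.Nonempty then (0 : Cardinal) else 1)
  else Module.rank R (redH R A V S n.toNat)

universe u

/-! The vanishing hypotheses are exactly what is needed to build, face by face, a chain map `f`
from the chains of dimension at most `ℓ` of the nerve to the chains of `X`, carried by
`σ ↦ ⋃ i ∈ σ, Γ i`. Both the nerve and `X` sit in the complex of the joins `τ ∗ ρ` with `τ ∈ Γ j`
for all `j ∈ ρ`. Over a single simplex `σ` of the nerve this complex is acyclic, so there the
inclusion of the nerve and `f` followed by the inclusion of `X` are chain homotopic. The whole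
complex collapses onto the nerve, by coning a face `τ ∗ ρ` with some `i` such that `τ ∈ Γ i`. Hence
an `ℓ`-cycle of the nerve whose image under `f` bounds in `X` is itself a boundary: `f` is injective
on `H̃_ℓ`. -/

section Complexes

variable {V ι : Type*} {Γ : ι → Set (Finset V)}

lemma IsComplex.biUnion (hΓ : ∀ i, IsComplex (Γ i)) (σ : Set ι) : IsComplex (⋃ i ∈ σ, Γ i) := by
  simp only [IsComplex, Set.mem_iUnion₂]
  exact ⟨fun s ⟨i, _, hs⟩ => (hΓ i).1 s hs,
    fun s ⟨i, hi, hs⟩ t hts ht => ⟨i, hi, (hΓ i).2 s hs t hts ht⟩⟩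

lemma isComplex_nerveC (Γ : ι → Set (Finset V)) : IsComplex (nerveC Γ) :=
  ⟨fun _ hσ => hσ.1, fun _ hσ _ hτσ hτ =>
    ⟨hτ, hσ.2.mono (Set.biInter_subset_biInter_left hτσ)⟩⟩

lemma IsComplex.isLowerSet_insert_empty {S : Set (Finset V)} (hS : IsComplex S) :
    IsLowerSet (insert ∅ S) := by
  rintro s t hts (rfl | hs)
  · exact Or.inl (subset_empty.1 hts)
  · exact t.eq_empty_or_nonempty.imp id (hS.2 s hs t hts)

end Complexes

section NerveJoin

variable {V ι : Type*} [LinearOrder V] [LinearOrder ι] {Γ : ι → Set (Finset V)} {σ : Set ι}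
  {s : Finset (V ⊕ₗ ι)} {i : ι}

/-- The inclusion of the left vertices into the vertices of a join. -/
def lexInl : V ↪o V ⊕ₗ ι := .ofStrictMono _ Sum.Lex.inl_strictMono

/-- The inclusion of the right vertices into the vertices of a join. -/
def lexInr : ι ↪o V ⊕ₗ ι := .ofStrictMono _ Sum.Lex.inr_strictMono

/-- The left factor `τ` of a face `τ ∗ ρ` of a join. -/
noncomputable def leftPart (s : Finset (V ⊕ₗ ι)) : Finset V :=
  s.preimage lexInl lexInl.injective.injOn

/-- The right factor `ρ` of a face `τ ∗ ρ` of a join. -/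
noncomputable def rightPart (s : Finset (V ⊕ₗ ι)) : Finset ι :=
  s.preimage lexInr lexInr.injective.injOn

lemma lexInl_ne_lexInr (v : V) (i : ι) : lexInl v ≠ (lexInr i : V ⊕ₗ ι) :=
  Sum.Lex.inl_lt_inr v i |>.ne

lemma leftPart_mono : Monotone (leftPart (V := V) (ι := ι)) :=
  monotone_preimage lexInl.injective

lemma rightPart_mono : Monotone (rightPart (V := V) (ι := ι)) :=
  monotone_preimage lexInr.injective

lemma leftPart_insert_inr [DecidableEq (V ⊕ₗ ι)] (i : ι) (s : Finset (V ⊕ₗ ι)) :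
    leftPart (insert (lexInr i) s) = leftPart s := by
  ext v
  simp [leftPart, lexInl_ne_lexInr]

lemma rightPart_insert_inr [DecidableEq (V ⊕ₗ ι)] (i : ι) (s : Finset (V ⊕ₗ ι)) :
    rightPart (insert (lexInr i) s) = insert i (rightPart s) := by
  ext j
  simp [rightPart]

lemma leftPart_map_inl (t : Finset V) :
    leftPart (t.map (lexInl (ι := ι)).toEmbedding) = t :=
  preimage_map _ _

lemma rightPart_map_inl (t : Finset V) :
    rightPart (t.map (lexInl (ι := ι)).toEmbedding) = ∅ := by
  ext j
  simp [rightPart, lexInl_ne_lexInr]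

lemma leftPart_map_inr (ρ : Finset ι) :
    leftPart (ρ.map (lexInr (V := V)).toEmbedding) = ∅ := by
  ext v
  simp [leftPart, (lexInl_ne_lexInr _ _).symm]

lemma rightPart_map_inr (ρ : Finset ι) :
    rightPart (ρ.map (lexInr (V := V)).toEmbedding) = ρ :=
  preimage_map _ _

lemma map_inr_rightPart (h : leftPart s = ∅) : (rightPart s).map lexInr.toEmbedding = s := by
  ext x
  induction x using Lex.rec with | _ x
  rcases x with v | i
  · change lexInl v ∈ _ ↔ lexInl v ∈ s
    have hv : lexInl v ∉ s := fun hv => notMem_empty v (h ▸ mem_preimage.2 hv)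
    simp [hv, (lexInl_ne_lexInr _ _).symm]
  · change lexInr i ∈ _ ↔ lexInr i ∈ s
    simp [rightPart]

/-- The faces `τ ∗ ρ` with `ρ ⊆ σ` and `τ` contained in a face (or `∅`) of `⋃ i ∈ σ, Γ i` that
lies in every `Γ j` with `j ∈ ρ`. It contains the union and the nerve of the `Γ i` with `i ∈ σ`. -/
def nerveJoin (Γ : ι → Set (Finset V)) (σ : Set ι) : Set (Finset (V ⊕ₗ ι)) :=
  {s | ∃ τ ∈ insert ∅ (⋃ i ∈ σ, Γ i), leftPart s ⊆ τ ∧ ∀ j ∈ rightPart s, j ∈ σ ∧ τ ∈ Γ j}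

lemma isLowerSet_nerveJoin (Γ : ι → Set (Finset V)) (σ : Set ι) : IsLowerSet (nerveJoin Γ σ) :=
  fun _ _ hts ⟨τ, hτ, hl, hr⟩ =>
    ⟨τ, hτ, (leftPart_mono hts).trans hl, fun j hj => hr j (rightPart_mono hts hj)⟩

lemma nerveJoin_mono (Γ : ι → Set (Finset V)) : Monotone (nerveJoin Γ) :=
  fun _ _ hσ _ ⟨τ, hτ, hl, hr⟩ =>
    ⟨τ, Set.insert_subset_insert (Set.biUnion_subset_biUnion_left hσ) hτ, hl,
      fun j hj => ⟨hσ (hr j hj).1, (hr j hj).2⟩⟩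

lemma map_inl_mem_nerveJoin {t : Finset V} (ht : t ∈ insert ∅ (⋃ i ∈ σ, Γ i)) :
    t.map lexInl.toEmbedding ∈ nerveJoin Γ σ :=
  ⟨t, ht, (leftPart_map_inl t).subset, by simp [rightPart_map_inl]⟩

lemma map_inr_mem_nerveJoin {ρ : Finset ι} (hρ : ρ ∈ insert ∅ (nerveC Γ)) (hρσ : ↑ρ ⊆ σ) :
    ρ.map lexInr.toEmbedding ∈ nerveJoin Γ σ := by
  obtain rfl | ⟨⟨i, hi⟩, τ, hτ⟩ := hρ
  · simpa only [map_empty] using map_inl_mem_nerveJoin (Set.mem_insert ∅ (⋃ i ∈ σ, Γ i))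
  · rw [Set.mem_iInter₂] at hτ
    refine ⟨τ, Or.inr (Set.mem_biUnion (hρσ hi) (hτ i hi)), ?_, fun j hj => ?_⟩
    · rw [leftPart_map_inr]
      exact empty_subset τ
    · rw [rightPart_map_inr] at hj
      exact ⟨hρσ hj, hτ j hj⟩

lemma rightPart_mem_nerveC (hs : s ∈ nerveJoin Γ σ) : rightPart s ∈ insert ∅ (nerveC Γ) := by
  obtain ⟨τ, _, _, hr⟩ := hs
  exact (rightPart s).eq_empty_or_nonempty.imp id fun hne =>
    ⟨hne, τ, Set.mem_iInter₂.2 fun j hj => (hr j hj).2⟩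

lemma exists_leftPart_mem (hΓ : ∀ i, IsComplex (Γ i)) (hs : s ∈ nerveJoin Γ σ)
    (hne : (leftPart s).Nonempty) : ∃ i ∈ σ, leftPart s ∈ Γ i := by
  obtain ⟨τ, hτ | hτ, hl, _⟩ := hs
  · exact absurd (subset_empty.1 (hτ ▸ hl)) hne.ne_empty
  · obtain ⟨i, hi, hτi⟩ := Set.mem_iUnion₂.1 hτ
    exact ⟨i, hi, (hΓ i).2 τ hτi _ hl hne⟩

lemma insert_inr_mem_nerveJoin [DecidableEq (V ⊕ₗ ι)] (hΓ : ∀ i, IsComplex (Γ i))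
    (hs : s ∈ nerveJoin Γ σ) (hi : i ∈ σ) (hsi : leftPart s ∈ Γ i) :
    insert (lexInr i) s ∈ nerveJoin Γ σ := by
  obtain ⟨τ, _, hl, hr⟩ := hs
  refine ⟨leftPart s, Or.inr (Set.mem_biUnion hi hsi), (leftPart_insert_inr i s).subset, ?_⟩
  rw [rightPart_insert_inr, forall_mem_insert]
  exact ⟨⟨hi, hsi⟩, fun j hj =>
    ⟨(hr j hj).1, (hΓ j).2 τ (hr j hj).2 _ hl ((hΓ i).1 _ hsi)⟩⟩

lemma insert_inr_mem_nerveJoin_of_mem_nerveC [DecidableEq (V ⊕ₗ ι)] {σ : Finset ι}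
    (hσ : σ ∈ nerveC Γ) (hs : s ∈ nerveJoin Γ σ) (hl : leftPart s = ∅) (hi : i ∈ σ) :
    insert (lexInr i) s ∈ nerveJoin Γ σ := by
  have hρσ : insert i (rightPart s) ⊆ σ := insert_subset hi fun j hj =>
    have ⟨_, _, _, hr⟩ := hs
    mem_coe.1 (hr j hj).1
  rw [← map_inr_rightPart hl, ← RelEmbedding.coe_toEmbedding, ← map_insert]
  exact map_inr_mem_nerveJoin
    (Or.inr ((isComplex_nerveC Γ).2 σ hσ _ hρσ (insert_nonempty _ _))) (coe_subset.2 hρσ)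

end NerveJoin

section Supported

open Finsupp (single supported)

variable {S γ M : Type*} [Semiring S] [AddCommMonoid M] [Module S M] {P : Set γ} {x : γ →₀ S}

lemma map_mem_of_mem_supported {T : (γ →₀ S) →ₗ[S] M} {Q : Submodule S M}
    (h : ∀ s ∈ P, T (single s 1) ∈ Q) (hx : x ∈ supported S S P) : T x ∈ Q := by
  have hle : supported S S P ≤ Q.comap T := by
    rw [Finsupp.supported_eq_span_single, Submodule.span_le]
    rintro _ ⟨s, hs, rfl⟩
    exact h s hs
  exact hle hx

lemma map_eq_of_mem_supported {T U : (γ →₀ S) →ₗ[S] M}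
    (h : ∀ s ∈ P, T (single s 1) = U (single s 1)) (hx : x ∈ supported S S P) : T x = U x :=
  map_mem_of_mem_supported (T := LinearMap.id) (Q := LinearMap.eqLocus T U) h hx

end Supported

/-- The augmented chains of the full simplex on `α`, all degrees together: a face with `k` vertices
sits in degree `k - 1`, and `∅` spans degree `-1`. The chains of a complex `S` in this sense are the
chains supported on `insert ∅ S`. -/
abbrev AugChain (R α : Type*) [CommRing R] : Type _ := Finset α →₀ R

namespace AugChain

open Finsupp (single supported)

section Boundary

variable {R α β M : Type*} [CommRing R] [LinearOrder α] [LinearOrder β]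
  [AddCommGroup M] [Module R M]

variable (R) in
/-- The incidence sign of the vertex `v` in the face `s`. -/
def sign (v : α) (s : Finset α) : R := (-1) ^ #{w ∈ s | w < v}

lemma sign_mul_self (v : α) (s : Finset α) : sign R v s * sign R v s = 1 := by
  rw [sign, ← mul_pow, neg_one_mul, neg_neg, one_pow]

lemma sign_insert_of_lt {v w : α} {s : Finset α} (hv : v ∉ s) (h : v < w) :
    sign R w (insert v s) = -sign R w s := by
  rw [sign, filter_insert, if_pos h, card_insert_of_notMem (by simp [hv]), pow_succ, mul_neg_one,
    sign]

lemma sign_insert_of_le {v w : α} (s : Finset α) (h : w ≤ v) :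
    sign R w (insert v s) = sign R w s := by
  rw [sign, filter_insert, if_neg h.not_gt, sign]

lemma sign_map (e : α ↪o β) (v : α) (s : Finset α) :
    sign R (e v) (s.map e.toEmbedding) = sign R v s := by
  simp [sign, filter_map]

/-- The augmented simplicial boundary. -/
noncomputable def d : AugChain R α →ₗ[R] AugChain R α :=
  Finsupp.linearCombination R fun s => ∑ v ∈ s, sign R v s • single (s.erase v) 1

lemma d_single (s : Finset α) :
    d (single s (1 : R)) = ∑ v ∈ s, sign R v s • single (s.erase v) 1 := by
  simp [d]

lemma map_d_single (T : AugChain R α →ₗ[R] M) (s : Finset α) :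
    T (d (single s 1)) = ∑ v ∈ s, sign R v s • T (single (s.erase v) 1) := by
  simp only [d_single, map_sum, map_smul]

lemma map_d_single_mem {T : AugChain R α →ₗ[R] M} {Q : Submodule R M} {s : Finset α}
    (h : ∀ v ∈ s, T (single (s.erase v) 1) ∈ Q) : T (d (single s 1)) ∈ Q := by
  rw [map_d_single]
  exact Q.sum_mem fun v hv => Q.smul_mem _ (h v hv)

lemma map_d_single_congr {T U : AugChain R α →ₗ[R] M} {s : Finset α}
    (h : ∀ v ∈ s, T (single (s.erase v) 1) = U (single (s.erase v) 1)) :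
    T (d (single s 1)) = U (d (single s 1)) :=
  map_d_single_mem (T := LinearMap.id) (Q := LinearMap.eqLocus T U) h

lemma d_single_mem_supported {P : Set (Finset α)} {s : Finset α} (h : ∀ v ∈ s, s.erase v ∈ P) :
    d (single s (1 : R)) ∈ supported R R P :=
  map_d_single_mem (T := (LinearMap.id : AugChain R α →ₗ[R] AugChain R α)) fun v hv =>
    Finsupp.single_mem_supported R 1 (h v hv)

lemma d_mem_supported {P : Set (Finset α)} (hP : IsLowerSet P) {x : AugChain R α}
    (hx : x ∈ supported R R P) : d x ∈ supported R R P :=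
  map_mem_of_mem_supported
    (fun s hs => d_single_mem_supported fun v _ => hP (erase_subset v s) hs) hx

lemma d_single_empty : d (single (∅ : Finset α) (1 : R)) = 0 := by
  simp [d_single]

/-- The operator joining a face with the vertex `w`; it kills the faces that contain `w`. -/
noncomputable def cone (w : α) : AugChain R α →ₗ[R] AugChain R α :=
  Finsupp.linearCombination R fun s =>
    if w ∈ s then 0 else sign R w s • single (insert w s) 1

lemma cone_single_of_mem {w : α} {s : Finset α} (h : w ∈ s) :
    cone w (single s (1 : R)) = 0 := by
  simp [cone, h]

lemma cone_single_of_notMem {w : α} {s : Finset α} (h : w ∉ s) :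
    cone w (single s (1 : R)) = sign R w s • single (insert w s) 1 := by
  simp [cone, h]

lemma cone_mem_supported {w : α} {P Q : Set (Finset α)} (h : ∀ s ∈ P, insert w s ∈ Q)
    {x : AugChain R α} (hx : x ∈ supported R R P) : cone w x ∈ supported R R Q := by
  refine map_mem_of_mem_supported (fun s hs => ?_) hx
  by_cases hw : w ∈ s
  · rw [cone_single_of_mem hw]
    exact zero_mem _
  · rw [cone_single_of_notMem hw]
    exact Submodule.smul_mem _ _ (Finsupp.single_mem_supported R 1 (h s hs))

lemma sign_mul_sign_insert_add {v w : α} {s : Finset α} (hv : v ∉ s) (hw : w ∉ s) (hvw : v ≠ w) :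
    sign R w (insert v s) * sign R v (insert w (insert v s))
      + sign R v (insert v s) * sign R w s = 0 := by
  rw [insert_comm, sign_insert_of_le _ le_rfl, sign_insert_of_le _ le_rfl]
  rcases hvw.lt_or_gt with h | h
  · rw [sign_insert_of_lt hv h, sign_insert_of_le _ h.le]
    ring
  · rw [sign_insert_of_le _ h.le, sign_insert_of_lt hw h]
    ring

lemma d_cone_add_cone_d_single (w : α) (s : Finset α) :
    d (cone w (single s (1 : R))) + cone w (d (single s 1)) = single s 1 := by
  by_cases hw : w ∈ s
  · rw [cone_single_of_mem hw, map_zero, zero_add, map_d_single, sum_eq_single_of_mem w hw]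
    · rw [cone_single_of_notMem (notMem_erase w s), smul_smul]
      have hsign : sign R w s = sign R w (s.erase w) := by
        conv_lhs => rw [← insert_erase hw, sign_insert_of_le _ le_rfl]
      rw [hsign, sign_mul_self, one_smul, insert_erase hw]
    · intro v _ hvw
      rw [cone_single_of_mem (mem_erase.2 ⟨hvw.symm, hw⟩), smul_zero]
  · rw [cone_single_of_notMem hw, map_d_single, map_smul, d_single, sum_insert hw,
      erase_insert hw, sign_insert_of_le _ le_rfl, smul_add, smul_smul, sign_mul_self, one_smul,
      add_assoc, add_eq_left, smul_sum, ← sum_add_distrib]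
    refine sum_eq_zero fun v hv => ?_
    have hvw : v ≠ w := ne_of_mem_of_not_mem hv hw
    have hcancel := sign_mul_sign_insert_add (R := R) (notMem_erase v s)
      (notMem_mono (erase_subset v s) hw) hvw
    rw [insert_erase hv] at hcancel
    rw [cone_single_of_notMem (notMem_mono (erase_subset v s) hw), erase_insert_of_ne hvw.symm,
      smul_smul, smul_smul, ← add_smul, hcancel, zero_smul]

lemma d_cone_add_cone_d (w : α) (x : AugChain R α) : d (cone w x) + cone w (d x) = x :=
  LinearMap.congr_fun (f := d ∘ₗ cone w + cone w ∘ₗ d) (g := LinearMap.id)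
    (Finsupp.lhom_ext' fun s => LinearMap.ext_ring (d_cone_add_cone_d_single w s)) x

lemma d_cone_of_d_eq_zero (w : α) {x : AugChain R α} (hx : d x = 0) : d (cone w x) = x := by
  simpa only [hx, map_zero, add_zero] using d_cone_add_cone_d w x

lemma d_d_single (s : Finset α) : d (d (single s (1 : R))) = 0 := by
  induction s using Finset.induction_on with
  | empty => rw [d_single_empty, map_zero]
  | insert w s hw ih =>
    -- A face is a cone up to sign, and the cone formula gives `d d (cone w x) = cone w (d d x)`.
    have hcone : single (insert w s) (1 : R) = sign R w s • cone w (single s 1) := by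
      rw [cone_single_of_notMem hw, smul_smul, sign_mul_self, one_smul]
    have hd : d (cone w (single s (1 : R))) = single s 1 - cone w (d (single s 1)) :=
      eq_sub_of_add_eq (d_cone_add_cone_d_single w s)
    rw [hcone, map_smul, hd, map_smul, map_sub, d_cone_of_d_eq_zero w ih, sub_self, smul_zero]

lemma d_d (x : AugChain R α) : d (d x) = 0 :=
  LinearMap.congr_fun (f := d ∘ₗ d) (g := 0)
    (Finsupp.lhom_ext' fun s => LinearMap.ext_ring (d_d_single s)) x

/-- The chain map induced by an order embedding of the vertices. -/
noncomputable def push (e : α ↪o β) : AugChain R α →ₗ[R] AugChain R β :=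
  Finsupp.lmapDomain R R (Finset.map e.toEmbedding)

lemma push_single (e : α ↪o β) (s : Finset α) (c : R) :
    push e (single s c) = single (s.map e.toEmbedding) c :=
  Finsupp.mapDomain_single

lemma push_injective (e : α ↪o β) : Function.Injective (push (R := R) e) :=
  Finsupp.mapDomain_injective (Finset.map_injective _)

lemma push_mem_supported {e : α ↪o β} {P : Set (Finset α)} {Q : Set (Finset β)}
    (h : ∀ s ∈ P, s.map e.toEmbedding ∈ Q) {x : AugChain R α} (hx : x ∈ supported R R P) :
    push e x ∈ supported R R Q :=
  map_mem_of_mem_supported (fun s hs => by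
    rw [push_single]
    exact Finsupp.single_mem_supported R 1 (h s hs)) hx

lemma d_push (e : α ↪o β) (x : AugChain R α) : d (push e x) = push e (d x) := by
  refine LinearMap.congr_fun (f := d ∘ₗ push e) (g := push e ∘ₗ d)
    (Finsupp.lhom_ext' fun s => LinearMap.ext_ring ?_) x
  change d (push e (single s 1)) = push e (d (single s 1))
  rw [push_single, d_single, map_d_single, sum_map]
  refine sum_congr rfl fun v _ => ?_
  rw [push_single, map_erase]
  exact congrArg (· • _) (sign_map e v s)

end Boundary

section AcyclicCarrier

variable {R α β M : Type*} [CommRing R] [LinearOrder α] [LinearOrder β]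
  [AddCommGroup M] [Module R M]

/-- The linear map `F` built face by face by the recursion `F s = Θ s (F (d s))`. -/
noncomputable def recMap (Θ : Finset α → M → M) : AugChain R α →ₗ[R] M :=
  Finsupp.linearCombination R <| Finset.strongInduction fun s F =>
    Θ s (∑ v ∈ s.attach, sign R v.1 s • F (s.erase v) (erase_ssubset v.2))

lemma recMap_single (Θ : Finset α → M → M) (s : Finset α) :
    recMap Θ (single s (1 : R)) = Θ s (recMap Θ (d (single s (1 : R)))) := by
  rw [map_d_single, ← sum_attach]
  simp only [recMap, Finsupp.linearCombination_single, one_smul]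
  rw [Finset.strongInduction_eq]

variable (R) in
/-- Every cycle on faces of `S` with `k` vertices bounds a chain on faces of `S` with `k + 1`
vertices. -/
def ExactAt (S : Set (Finset α)) (k : ℕ) : Prop :=
  ∀ z ∈ supported R R {s ∈ S | #s = k}, d z = 0 →
    ∃ y ∈ supported R R {s ∈ S | #s = k + 1}, d y = z

variable (R) in
/-- Every cycle on faces of `S` bounds a chain on faces of `S`, with no control of degrees. -/
def Acyclic (S : Set (Finset α)) : Prop :=
  ∀ z ∈ supported R R S, d z = 0 → ∃ y ∈ supported R R S, d y = z

variable {K : Set (Finset α)} {Φ : Finset α → Set (Finset β)}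

theorem exists_chainMap_of_exactAt (hK : IsLowerSet K) (hΦ : Monotone Φ) (hempty : ∅ ∈ Φ ∅)
    (hex : ∀ s ∈ K, ∀ k, #s = k + 1 → ExactAt R (Φ s) k) :
    ∃ f : AugChain R α →ₗ[R] AugChain R β, f (single ∅ 1) = single ∅ 1 ∧ ∀ s ∈ K,
      f (single s 1) ∈ supported R R {t ∈ Φ s | #t = #s} ∧
      d (f (single s 1)) = f (d (single s 1)) := by
  choose! fill hfill_mem hd_fill using hex
  let f : AugChain R α →ₗ[R] AugChain R β := recMap fun s m =>
    if s = ∅ then single ∅ 1 else fill s (#s - 1) m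
  have hf_empty : f (single ∅ 1) = single ∅ 1 := by
    rw [recMap_single, if_pos rfl]
  refine ⟨f, hf_empty, fun s => ?_⟩
  induction s using Finset.strongInduction with
  | H s ih =>
    intro hs
    rcases s.eq_empty_or_nonempty with rfl | hne
    · rw [hf_empty, d_single_empty, d_single_empty, map_zero]
      exact ⟨Finsupp.single_mem_supported R 1 ⟨hempty, rfl⟩, rfl⟩
    have hface : ∀ v ∈ s, s.erase v ∈ K := fun v _ => hK (erase_subset v s) hs
    have hcard : #s = #s - 1 + 1 := (Nat.sub_add_cancel hne.card_pos).symm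
    have hmem : f (d (single s 1)) ∈ supported R R {t ∈ Φ s | #t = #s - 1} :=
      map_d_single_mem fun v hv =>
        have hsub : {t ∈ Φ (s.erase v) | #t = #(s.erase v)} ⊆ {t ∈ Φ s | #t = #s - 1} :=
          fun _ ht => ⟨hΦ (erase_subset v s) ht.1, ht.2.trans (card_erase_of_mem hv)⟩
        Finsupp.supported_mono hsub (ih _ (erase_ssubset hv) (hface v hv)).1
    have hcycle : d (f (d (single s 1))) = 0 := by
      have hcomm : d (f (d (single s 1))) = f (d (d (single s 1))) :=
        map_d_single_congr (T := d ∘ₗ f) (U := f ∘ₗ d) fun v hv =>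
          (ih _ (erase_ssubset hv) (hface v hv)).2
      rw [hcomm, d_d, map_zero]
    have hfs : f (single s 1) = fill s (#s - 1) (f (d (single s 1))) := by
      rw [recMap_single, if_neg hne.ne_empty]
    rw [hfs]
    refine ⟨?_, hd_fill s hs _ hcard _ hmem hcycle⟩
    simpa only [← hcard] using hfill_mem s hs _ hcard _ hmem hcycle

theorem exists_nullHomotopy_of_acyclic (hK : IsLowerSet K) (hΦ : Monotone Φ)
    {g : AugChain R α →ₗ[R] AugChain R β} (hg_empty : g (single ∅ 1) = 0)
    (hg_mem : ∀ s ∈ K, g (single s 1) ∈ supported R R (Φ s))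
    (hdg : ∀ s ∈ K, d (g (single s 1)) = g (d (single s 1)))
    (hac : ∀ s ∈ K, s.Nonempty → Acyclic R (Φ s)) :
    ∃ D : AugChain R α →ₗ[R] AugChain R β, ∀ s ∈ K,
      D (single s 1) ∈ supported R R (Φ s) ∧
      d (D (single s 1)) + D (d (single s 1)) = g (single s 1) := by
  choose! fill hfill_mem hd_fill using hac
  let D : AugChain R α →ₗ[R] AugChain R β := recMap fun s m =>
    if s = ∅ then 0 else fill s (g (single s 1) - m)
  refine ⟨D, fun s => ?_⟩
  induction s using Finset.strongInduction with
  | H s ih =>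
    intro hs
    rcases s.eq_empty_or_nonempty with rfl | hne
    · rw [hg_empty, d_single_empty, map_zero, add_zero, recMap_single, if_pos rfl, map_zero]
      exact ⟨zero_mem _, rfl⟩
    have hface : ∀ v ∈ s, s.erase v ∈ K := fun v _ => hK (erase_subset v s) hs
    have hmem : g (single s 1) - D (d (single s 1)) ∈ supported R R (Φ s) :=
      sub_mem (hg_mem s hs) <| map_d_single_mem fun v hv =>
        Finsupp.supported_mono (hΦ (erase_subset v s)) (ih _ (erase_ssubset hv) (hface v hv)).1
    have hdD : d (D (d (single s 1))) + D (d (d (single s 1))) = g (d (single s 1)) :=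
      map_d_single_congr (T := d ∘ₗ D + D ∘ₗ d) fun v hv =>
        (ih _ (erase_ssubset hv) (hface v hv)).2
    have hcycle : d (g (single s 1) - D (d (single s 1))) = 0 := by
      rw [d_d, map_zero, add_zero] at hdD
      rw [map_sub, hdg s hs, hdD, sub_self]
    have hDs : D (single s 1) = fill s (g (single s 1) - D (d (single s 1))) := by
      rw [recMap_single, if_neg hne.ne_empty]
    rw [hDs, hd_fill s hs hne _ hmem hcycle, sub_add_cancel]
    exact ⟨hfill_mem s hs hne _ hmem hcycle, rfl⟩

end AcyclicCarrier

section Collapse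

variable {R V ι : Type*} [CommRing R] [LinearOrder V] [LinearOrder ι] {Γ : ι → Set (Finset V)}
  {σ : Set ι} {s : Finset (V ⊕ₗ ι)}

open scoped Classical in
/-- The homotopy that pushes the faces of `nerveJoin Γ σ` onto those with empty left part: a face
with left part in `Γ i` is moved along the cone with apex `lexInr i`. -/
noncomputable def collapse (Γ : ι → Set (Finset V)) (σ : Set ι) :
    AugChain R (V ⊕ₗ ι) →ₗ[R] AugChain R (V ⊕ₗ ι) :=
  recMap fun s m =>
    if h : ∃ i ∈ σ, leftPart s ∈ Γ i then cone (lexInr h.choose) (single s 1 - m) else 0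

lemma collapse_single_of_leftPart_eq_empty (hΓ : ∀ i, IsComplex (Γ i)) (h : leftPart s = ∅) :
    collapse Γ σ (single s (1 : R)) = 0 := by
  have hnot : ¬∃ i ∈ σ, leftPart s ∈ Γ i := fun ⟨i, _, hi⟩ => ((hΓ i).1 _ hi).ne_empty h
  rw [collapse, recMap_single, dif_neg hnot]

lemma collapse_eq_zero (hΓ : ∀ i, IsComplex (Γ i)) {x : AugChain R (V ⊕ₗ ι)}
    (hx : x ∈ supported R R {s | leftPart s = ∅}) : collapse Γ σ x = 0 :=
  map_eq_of_mem_supported (U := 0)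
    (fun _ hs => collapse_single_of_leftPart_eq_empty hΓ hs) hx

lemma exists_collapse_single_eq_cone (hΓ : ∀ i, IsComplex (Γ i)) (hs : s ∈ nerveJoin Γ σ)
    (hne : (leftPart s).Nonempty) :
    ∃ i ∈ σ, leftPart s ∈ Γ i ∧ collapse Γ σ (single s (1 : R)) =
      cone (lexInr i) (single s 1 - collapse Γ σ (d (single s 1))) := by
  classical
  have h := exists_leftPart_mem hΓ hs hne
  refine ⟨h.choose, h.choose_spec.1, h.choose_spec.2, ?_⟩
  rw [collapse, recMap_single, dif_pos h]

lemma collapse_single_mem (hΓ : ∀ i, IsComplex (Γ i)) (hs : s ∈ nerveJoin Γ σ) :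
    collapse Γ σ (single s (1 : R)) ∈ supported R R
      {t ∈ nerveJoin Γ σ | (leftPart t).Nonempty ∧ leftPart t ⊆ leftPart s} := by
  induction s using Finset.strongInduction with
  | H s ih =>
    rcases (leftPart s).eq_empty_or_nonempty with hl | hne
    · rw [collapse_single_of_leftPart_eq_empty hΓ hl]
      exact zero_mem _
    obtain ⟨i, hi, hsi, hcone⟩ := exists_collapse_single_eq_cone (R := R) hΓ hs hne
    have hface : collapse Γ σ (d (single s (1 : R))) ∈ supported R R
        {t ∈ nerveJoin Γ σ | (leftPart t).Nonempty ∧ leftPart t ⊆ leftPart s} := by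
      refine map_d_single_mem fun v hv => ?_
      refine Finsupp.supported_mono (fun t ht => ?_)
        (ih _ (erase_ssubset hv) (isLowerSet_nerveJoin Γ σ (erase_subset v s) hs))
      exact ⟨ht.1, ht.2.1, ht.2.2.trans (leftPart_mono (erase_subset v s))⟩
    rw [hcone]
    refine cone_mem_supported ?_
      (sub_mem (Finsupp.single_mem_supported R 1 ?_) hface)
    · rintro t ⟨htσ, htne, hts⟩
      rw [Set.mem_ofPred_eq, leftPart_insert_inr]
      exact ⟨insert_inr_mem_nerveJoin hΓ htσ hi ((hΓ i).2 _ hsi _ hts htne), htne, hts⟩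
    · exact ⟨hs, hne, subset_rfl⟩

/-- What `collapse` leaves of a chain: the endomorphism of the chains that it makes chain homotopic
to the identity. -/
noncomputable def retract (Γ : ι → Set (Finset V)) (σ : Set ι) :
    AugChain R (V ⊕ₗ ι) →ₗ[R] AugChain R (V ⊕ₗ ι) :=
  LinearMap.id - d ∘ₗ collapse Γ σ - collapse Γ σ ∘ₗ d

lemma retract_apply (x : AugChain R (V ⊕ₗ ι)) :
    retract Γ σ x = x - d (collapse Γ σ x) - collapse Γ σ (d x) := rfl

lemma retract_single_mem (hΓ : ∀ i, IsComplex (Γ i)) (hs : s ∈ nerveJoin Γ σ) :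
    retract Γ σ (single s (1 : R)) ∈ supported R R {t | leftPart t = ∅} := by
  induction s using Finset.strongInduction with
  | H s ih =>
    rcases (leftPart s).eq_empty_or_nonempty with hl | hne
    · have hd : d (single s (1 : R)) ∈ supported R R {t | leftPart t = ∅} :=
        d_single_mem_supported fun v _ => subset_empty.1 (hl ▸ leftPart_mono (erase_subset v s))
      rw [retract_apply, collapse_single_of_leftPart_eq_empty hΓ hl, collapse_eq_zero hΓ hd,
        map_zero, sub_zero, sub_zero]
      exact Finsupp.single_mem_supported R 1 hl
    obtain ⟨i, -, -, hcone⟩ := exists_collapse_single_eq_cone (R := R) hΓ hs hne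
    have hretract : retract Γ σ (single s (1 : R)) =
        cone (lexInr i) (retract Γ σ (d (single s 1))) := by
      rw [retract_apply, retract_apply, d_d, map_zero, sub_zero, ← map_sub (d (R := R)), hcone,
        sub_right_comm, sub_eq_iff_eq_add', d_cone_add_cone_d]
    rw [hretract]
    refine cone_mem_supported (P := {t | leftPart t = ∅})
      (fun t ht => (leftPart_insert_inr i t).trans ht) ?_
    exact map_d_single_mem fun v hv =>
      ih _ (erase_ssubset hv) (isLowerSet_nerveJoin Γ σ (erase_subset v s) hs)

theorem exists_sub_d_mem_supported_leftPart_eq_empty (hΓ : ∀ i, IsComplex (Γ i))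
    {c : AugChain R (V ⊕ₗ ι)} (hc : c ∈ supported R R (nerveJoin Γ σ))
    (hdc : d c ∈ supported R R {s | leftPart s = ∅}) :
    ∃ y ∈ supported R R (nerveJoin Γ σ),
      c - d y ∈ supported R R (nerveJoin Γ σ ∩ {s | leftPart s = ∅}) := by
  have hy : collapse Γ σ c ∈ supported R R (nerveJoin Γ σ) :=
    map_mem_of_mem_supported (fun s hs =>
      Finsupp.supported_mono (fun _ ht => ht.1) (collapse_single_mem hΓ hs)) hc
  have hretract : retract Γ σ c ∈ supported R R {s | leftPart s = ∅} :=
    map_mem_of_mem_supported (fun s hs => retract_single_mem hΓ hs) hc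
  rw [retract_apply, collapse_eq_zero hΓ hdc, sub_zero] at hretract
  refine ⟨_, hy, ?_⟩
  rw [Finsupp.supported_inter]
  exact ⟨sub_mem hc (d_mem_supported (isLowerSet_nerveJoin Γ σ) hy), hretract⟩

theorem acyclic_nerveJoin (hΓ : ∀ i, IsComplex (Γ i)) {σ : Finset ι} (hσ : σ ∈ nerveC Γ) :
    Acyclic R (nerveJoin Γ σ) := by
  intro z hz hdz
  obtain ⟨y, hy, hzy⟩ :=
    exists_sub_d_mem_supported_leftPart_eq_empty hΓ hz (hdz ▸ zero_mem _)
  obtain ⟨i, hi⟩ := hσ.1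
  have hcone : cone (lexInr i) (z - d y) ∈ supported R R (nerveJoin Γ σ) :=
    cone_mem_supported
      (fun s hs => insert_inr_mem_nerveJoin_of_mem_nerveC hσ hs.1 hs.2 hi) hzy
  have hd : d (z - d y) = 0 := by rw [map_sub, hdz, d_d, sub_zero]
  exact ⟨y + cone (lexInr i) (z - d y), add_mem hy hcone,
    by rw [map_add, d_cone_of_d_eq_zero _ hd, add_sub_cancel]⟩

end Collapse

section NerveChainMap

variable {R V ι : Type*} [CommRing R] [LinearOrder V] [LinearOrder ι] {Γ : ι → Set (Finset V)}
  {K : Set (Finset ι)}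

theorem exists_chainMap_homotopic_in_nerveJoin (hΓ : ∀ i, IsComplex (Γ i)) (hK : IsLowerSet K)
    (hKΓ : K ⊆ insert ∅ (nerveC Γ))
    (hex : ∀ σ ∈ K, ∀ k, #σ = k + 1 → ExactAt R (insert ∅ (⋃ i ∈ (σ : Set ι), Γ i)) k) :
    ∃ (f : AugChain R ι →ₗ[R] AugChain R V) (D : AugChain R ι →ₗ[R] AugChain R (V ⊕ₗ ι)),
      ∀ σ ∈ K,
        f (single σ 1) ∈ supported R R {t ∈ insert ∅ (⋃ i ∈ (σ : Set ι), Γ i) | #t = #σ} ∧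
        d (f (single σ 1)) = f (d (single σ 1)) ∧
        D (single σ 1) ∈ supported R R (nerveJoin Γ σ) ∧
        d (D (single σ 1)) + D (d (single σ 1)) =
          push lexInr (single σ 1) - push lexInl (f (single σ 1)) := by
  have hmono : Monotone fun σ : Finset ι => insert ∅ (⋃ i ∈ (σ : Set ι), Γ i) := fun _ _ h =>
    Set.insert_subset_insert (Set.biUnion_subset_biUnion_left (coe_subset.2 h))
  obtain ⟨f, hf_empty, hf⟩ := exists_chainMap_of_exactAt hK hmono (Set.mem_insert _ _) hex
  obtain ⟨D, hD⟩ := exists_nullHomotopy_of_acyclic (R := R) (K := K)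
    (Φ := fun σ => nerveJoin Γ σ) (g := push lexInr - push lexInl ∘ₗ f) hK
    (fun _ _ h => nerveJoin_mono Γ (coe_subset.2 h))
    (by simp [hf_empty, push_single])
    (fun σ hσ => sub_mem
      (push_mem_supported (P := {σ}) (by
        rintro _ rfl
        exact map_inr_mem_nerveJoin (hKΓ hσ) subset_rfl)
        (Finsupp.single_mem_supported R 1 rfl))
      (push_mem_supported (fun t ht => map_inl_mem_nerveJoin ht.1) (hf σ hσ).1))
    (fun σ hσ => by
      simp only [LinearMap.sub_apply, LinearMap.comp_apply, map_sub, d_push, (hf σ hσ).2])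
    (fun σ hσ hne => acyclic_nerveJoin hΓ ((hKΓ hσ).resolve_left hne.ne_empty))
  exact ⟨f, D, fun σ hσ => ⟨(hf σ hσ).1, (hf σ hσ).2, (hD σ hσ).1, (hD σ hσ).2⟩⟩

theorem exists_d_eq_of_push_inr_eq_d (hΓ : ∀ i, IsComplex (Γ i)) {z : AugChain R ι}
    {c : AugChain R (V ⊕ₗ ι)} (hc : c ∈ supported R R (nerveJoin Γ Set.univ))
    (hdc : d c = push lexInr z) :
    ∃ x ∈ supported R R (insert ∅ (nerveC Γ)), d x = z := by
  have hz : push (lexInr (V := V)) z ∈ supported R R {s | leftPart s = ∅} :=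
    push_mem_supported (P := Set.univ) (fun ρ _ => leftPart_map_inr ρ) (by simp)
  obtain ⟨y, -, hcy⟩ := exists_sub_d_mem_supported_leftPart_eq_empty hΓ hc (hdc ▸ hz)
  have hsub : nerveJoin Γ Set.univ ∩ {s | leftPart s = ∅} ⊆
      Finset.map lexInr.toEmbedding '' insert ∅ (nerveC Γ) :=
    fun s hs => ⟨rightPart s, rightPart_mem_nerveC hs.1, map_inr_rightPart hs.2⟩
  have himage := Finsupp.supported_mono hsub hcy
  rw [← Finsupp.lmapDomain_supported] at himage
  obtain ⟨x, hx, hxc⟩ := himage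
  refine ⟨x, hx, push_injective (lexInr (V := V)) ?_⟩
  rw [← d_push, ← hdc, ← sub_zero (d c), ← d_d y, ← map_sub]
  exact congrArg d hxc

theorem exists_chainMap_nerve_reflecting_boundaries (hΓ : ∀ i, IsComplex (Γ i))
    (hK : IsLowerSet K) (hKΓ : K ⊆ insert ∅ (nerveC Γ))
    (hex : ∀ σ ∈ K, ∀ k, #σ = k + 1 → ExactAt R (insert ∅ (⋃ i ∈ (σ : Set ι), Γ i)) k) :
    ∃ f : AugChain R ι →ₗ[R] AugChain R V,
      (∀ σ ∈ K, f (single σ 1) ∈ supported R R {t ∈ insert ∅ (⋃ i, Γ i) | #t = #σ}) ∧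
      ∀ z ∈ supported R R K, d z = 0 → d (f z) = 0 ∧
        ((∃ y ∈ supported R R (insert ∅ (⋃ i, Γ i)), d y = f z) →
          ∃ x ∈ supported R R (insert ∅ (nerveC Γ)), d x = z) := by
  obtain ⟨f, D, hfD⟩ := exists_chainMap_homotopic_in_nerveJoin hΓ hK hKΓ hex
  refine ⟨f, fun σ hσ => ?_, fun z hz hdz => ⟨?_, fun ⟨y, hy, hyz⟩ => ?_⟩⟩
  · have hsub : (⋃ i ∈ (σ : Set ι), Γ i) ⊆ ⋃ i, Γ i := Set.iUnion₂_subset_iUnion _ _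
    refine Finsupp.supported_mono (fun t ht => ?_) (hfD σ hσ).1
    exact ⟨Set.insert_subset_insert hsub ht.1, ht.2⟩
  · have hcomm : d (f z) = f (d z) :=
      map_eq_of_mem_supported (T := d ∘ₗ f) (U := f ∘ₗ d) (fun σ hσ => (hfD σ hσ).2.1) hz
    rw [hcomm, hdz, map_zero]
  · have hDz : D z ∈ supported R R (nerveJoin Γ Set.univ) :=
      map_mem_of_mem_supported (fun σ hσ => Finsupp.supported_mono
        (nerveJoin_mono Γ (Set.subset_univ _)) (hfD σ hσ).2.2.1) hz
    have hpush : push lexInl y ∈ supported R R (nerveJoin Γ Set.univ) :=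
      push_mem_supported
        (fun t ht => map_inl_mem_nerveJoin (by rwa [Set.biUnion_univ])) hy
    have hhomotopy : d (D z) + D (d z) = push lexInr z - push lexInl (f z) :=
      map_eq_of_mem_supported (T := d ∘ₗ D + D ∘ₗ d) (U := push lexInr - push lexInl ∘ₗ f)
        (fun σ hσ => (hfD σ hσ).2.2.2) hz
    rw [hdz, map_zero, add_zero] at hhomotopy
    refine exists_d_eq_of_push_inr_eq_d hΓ (add_mem hDz hpush) ?_
    rw [map_add, hhomotopy, d_push, hyz, sub_add_cancel]

end NerveChainMap

section HomogeneousChains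

variable {R α : Type*} [CommRing R] [LinearOrder α] {S : Set (Finset α)} {n : ℕ}

/-- The inclusion of the `n`-chains into the chains of all degrees. -/
noncomputable def ofChains (n : ℕ) : Chains R α n →ₗ[R] AugChain R α :=
  Finsupp.lmapDomain R R Subtype.val

/-- The component of degree `n` of a chain. -/
noncomputable def toChains (n : ℕ) : AugChain R α →ₗ[R] Chains R α n :=
  Finsupp.lcomapDomain Subtype.val Subtype.val_injective

lemma toChains_ofChains (c : Chains R α n) : toChains n (ofChains n c) = c :=
  Finsupp.leftInverse_lcomapDomain_mapDomain (R := R) _ Subtype.val_injective c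

lemma ofChains_injective : Function.Injective (ofChains (R := R) (α := α) n) :=
  Function.LeftInverse.injective toChains_ofChains

lemma ofChains_toChains {x : AugChain R α} (hx : x ∈ supported R R {s | #s = n + 1}) :
    ofChains n (toChains n x) = x :=
  Finsupp.mapDomain_comapDomain _ Subtype.val_injective x
    (by simpa [Finsupp.mem_supported] using hx)

lemma ofChains_single (s : {s : Finset α // #s = n + 1}) (c : R) :
    ofChains n (single s c) = single s.1 c :=
  Finsupp.mapDomain_single

lemma toChains_single_of_card_ne {s : Finset α} (hs : #s ≠ n + 1) (c : R) :
    toChains n (single s c) = 0 :=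
  Finsupp.ext fun t => Finsupp.single_eq_of_ne fun h => hs (h ▸ t.2)

lemma ofChains_mem_supported {c : Chains R α n} (hc : c ∈ chainsIn R R α S n) :
    ofChains n c ∈ supported R R {s ∈ S | #s = n + 1} :=
  map_mem_of_mem_supported (fun s hs => by
    rw [ofChains_single]
    exact Finsupp.single_mem_supported R 1 ⟨hs, s.2⟩) hc

lemma toChains_mem_chainsIn {x : AugChain R α} (hx : x ∈ supported R R (insert ∅ S)) :
    toChains n x ∈ chainsIn R R α S n := by
  rw [chainsIn, Finsupp.mem_supported']
  rw [Finsupp.mem_supported'] at hx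
  intro s hs
  have hne : s.1 ≠ ∅ := nonempty_iff_ne_empty.1 (card_pos.1 (s.2.symm ▸ n.succ_pos))
  exact hx s.1 (not_or.2 ⟨hne, hs⟩)

lemma d_ofChains_zero (c : Chains R α 0) : d (ofChains 0 c) = single ∅ (aug R R α c) := by
  refine LinearMap.congr_fun (f := d ∘ₗ ofChains 0) (g := Finsupp.lsingle ∅ ∘ₗ aug R R α)
    (Finsupp.lhom_ext' fun s => LinearMap.ext_ring ?_) c
  obtain ⟨s, hs⟩ := s
  obtain ⟨v, rfl⟩ := card_eq_one.1 hs
  simp [ofChains_single, aug, d_single, sign, filter_singleton]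

lemma d_ofChains_succ (c : Chains R α (n + 1)) :
    d (ofChains (n + 1) c) = ofChains n (bdry R R α n c) := by
  refine LinearMap.congr_fun (f := d ∘ₗ ofChains (n + 1)) (g := ofChains n ∘ₗ bdry R R α n)
    (Finsupp.lhom_ext' fun s => LinearMap.ext_ring ?_) c
  change d (ofChains (n + 1) (single s 1)) = ofChains n (bdry R R α n (single s 1))
  rw [ofChains_single, d_single, bdry, Finsupp.lsum_single, LinearMap.sum_apply, map_sum,
    ← sum_attach s.1]
  refine sum_congr rfl fun v _ => ?_
  rw [LinearMap.smul_apply, Finsupp.lsingle_apply, map_zsmul, ofChains_single, sign,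
    ← Int.cast_smul_eq_zsmul R, Int.cast_pow, Int.cast_neg, Int.cast_one]

lemma bdry_toChains (x : AugChain R α) :
    bdry R R α n (toChains (n + 1) x) = toChains n (d x) := by
  refine map_eq_of_mem_supported (P := Set.univ) (T := bdry R R α n ∘ₗ toChains (n + 1))
    (U := toChains n ∘ₗ d) (fun s _ => ?_) (by simp)
  change bdry R R α n (toChains (n + 1) (single s 1)) = toChains n (d (single s 1))
  by_cases hs : #s = n + 1 + 1
  · have hx : single s (1 : R) ∈ supported R R {s | #s = n + 1 + 1} :=
      Finsupp.single_mem_supported R 1 hs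
    rw [← toChains_ofChains (bdry R R α n _), ← d_ofChains_succ, ofChains_toChains hx]
  · rw [toChains_single_of_card_ne hs, map_zero, map_d_single]
    refine (sum_eq_zero fun v hv => ?_).symm
    rw [toChains_single_of_card_ne (by grind [card_erase_of_mem]), smul_zero]

lemma mem_cycles_iff {c : Chains R α n} : c ∈ cycles R R α n ↔ d (ofChains n c) = 0 := by
  cases n with
  | zero => rw [d_ofChains_zero, Finsupp.single_eq_zero, cycles, LinearMap.mem_ker]
  | succ n =>
    rw [d_ofChains_succ, map_eq_zero_iff _ ofChains_injective, cycles, LinearMap.mem_ker]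

lemma mem_boundariesIn_iff {c : Chains R α n} :
    c ∈ boundariesIn R R α S n ↔ ∃ y ∈ supported R R (insert ∅ S), d y = ofChains n c := by
  constructor
  · rintro ⟨b, hb, rfl⟩
    exact ⟨ofChains (n + 1) b, Finsupp.supported_mono (fun s hs => Or.inr hs.1)
      (ofChains_mem_supported hb), d_ofChains_succ b⟩
  · rintro ⟨y, hy, hyc⟩
    exact ⟨toChains (n + 1) y, toChains_mem_chainsIn hy,
      by rw [bdry_toChains, hyc, toChains_ofChains]⟩

lemma exactAt_zero (hS : S.Nonempty) (hSc : IsComplex S) : ExactAt R (insert ∅ S) 0 := by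
  intro z hz hdz
  obtain ⟨s, hs⟩ := hS
  obtain ⟨v, hv⟩ := hSc.1 s hs
  refine ⟨cone v z, cone_mem_supported (fun t ht => ?_) hz, d_cone_of_d_eq_zero v hdz⟩
  obtain rfl := card_eq_zero.1 ht.2
  exact ⟨Or.inr (hSc.2 s hs _ (singleton_subset_iff.2 hv) (singleton_nonempty v)), rfl⟩

lemma exactAt_succ (h : Subsingleton (redH R R α S n)) : ExactAt R (insert ∅ S) (n + 1) := by
  rw [Submodule.Quotient.subsingleton_iff, Submodule.comap_subtype_eq_top] at h
  intro z hz hdz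
  have hofz : ofChains n (toChains n z) = z :=
    ofChains_toChains (Finsupp.supported_mono (fun s hs => hs.2) hz)
  obtain ⟨b, hb, hbz⟩ := h (x := toChains n z) ⟨mem_cycles_iff.2 (by rwa [hofz]),
    toChains_mem_chainsIn (Finsupp.supported_mono (fun s hs => hs.1) hz)⟩
  refine ⟨ofChains (n + 1) b, ?_, by rw [d_ofChains_succ, hbz, hofz]⟩
  refine Finsupp.supported_mono (fun s hs => ?_) (ofChains_mem_supported hb)
  exact ⟨Or.inr hs.1, hs.2⟩

theorem exactAt_of_redHVanish (hS : IsComplex S) {k : ℕ} (h : RedHVanish R R α S (k - 1)) :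
    ExactAt R (insert ∅ S) k := by
  rw [RedHVanish, if_neg (by lia)] at h
  cases k with
  | zero => exact exactAt_zero (by simpa using h) hS
  | succ k =>
    rw [if_neg (by lia)] at h
    exact exactAt_succ (by simpa using h)

end HomogeneousChains

theorem exists_linearMap_cyclesIn_nerveC {R V ι : Type*} [CommRing R] [LinearOrder V]
    [LinearOrder ι] {Γ : ι → Set (Finset V)} (hΓ : ∀ i, IsComplex (Γ i)) {n : ℕ}
    (hunion : ∀ σ ∈ nerveC Γ, #σ ≤ n + 1 → RedHVanish R R V (⋃ i ∈ σ, Γ i) (#σ - 2)) :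
    ∃ g : Chains R ι n →ₗ[R] Chains R V n, ∀ c ∈ cyclesIn R R ι (nerveC Γ) n,
      g c ∈ cyclesIn R R V (⋃ i, Γ i) n ∧
      (g c ∈ boundariesIn R R V (⋃ i, Γ i) n → c ∈ boundariesIn R R ι (nerveC Γ) n) := by
  let K : Set (Finset ι) := insert ∅ (nerveC Γ) ∩ {σ | #σ ≤ n + 1}
  have hK : IsLowerSet K := (isComplex_nerveC Γ).isLowerSet_insert_empty.inter
    fun _ _ hτσ hσ => (card_le_card hτσ).trans hσ
  have hex : ∀ σ ∈ K, ∀ k, #σ = k + 1 → ExactAt R (insert ∅ (⋃ i ∈ (σ : Set ι), Γ i)) k := by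
    intro σ ⟨hσ, hσn⟩ k hk
    have hσΓ := hσ.resolve_left (nonempty_iff_ne_empty.1 (card_pos.1 (hk ▸ k.succ_pos)))
    have hvanish := hunion σ hσΓ hσn
    rw [hk, show ((k + 1 : ℕ) : ℤ) - 2 = k - 1 by lia] at hvanish
    exact exactAt_of_redHVanish (.biUnion hΓ _) hvanish
  obtain ⟨f, hf_mem, hf⟩ :=
    exists_chainMap_nerve_reflecting_boundaries hΓ hK Set.inter_subset_left hex
  have hsub : {σ ∈ nerveC Γ | #σ = n + 1} ⊆ K := fun σ hσ => ⟨Or.inr hσ.1, hσ.2.le⟩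
  refine ⟨toChains n ∘ₗ f ∘ₗ ofChains n, fun c ⟨hcycle, hc⟩ => ?_⟩
  have hcK := ofChains_mem_supported hc
  have hfc : f (ofChains n c) ∈ supported R R {t ∈ insert ∅ (⋃ i, Γ i) | #t = n + 1} := by
    refine map_mem_of_mem_supported (fun σ hσ => ?_) hcK
    exact hσ.2 ▸ hf_mem σ (hsub hσ)
  have hofc : ofChains n (toChains n (f (ofChains n c))) = f (ofChains n c) :=
    ofChains_toChains (Finsupp.supported_mono (fun _ ht => ht.2) hfc)
  obtain ⟨hdf, hbounds⟩ := hf _ (Finsupp.supported_mono hsub hcK) (mem_cycles_iff.1 hcycle)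
  refine ⟨⟨?_, toChains_mem_chainsIn (Finsupp.supported_mono (fun _ ht => ht.1) hfc)⟩, ?_⟩
  · exact mem_cycles_iff.2 (hofc ▸ hdf)
  · intro hg
    exact mem_boundariesIn_iff.2 (hbounds (hofc ▸ mem_boundariesIn_iff.1 hg))

end AugChain

section Rank

universe v w

variable {R : Type u} [CommRing R]

lemma lift_rank_quotient_le_of_ker_le {M : Type v} {M' : Type w} [AddCommGroup M] [Module R M]
    [AddCommGroup M'] [Module R M'] {p : Submodule R M} (ψ : M →ₗ[R] M')
    (h : LinearMap.ker ψ ≤ p) :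
    Cardinal.lift.{w} (Module.rank R (M ⧸ p)) ≤ Cardinal.lift.{v} (Module.rank R M') :=
  (Cardinal.lift_le.2 (LinearMap.rank_le_of_surjective _ (Submodule.factor_surjective h))).trans
    (LinearMap.lift_rank_le_of_injective _
      (LinearMap.ker_eq_bot.1 (Submodule.ker_liftQ_eq_bot _ ψ le_rfl le_rfl)))

lemma lift_rank_redH_le {α : Type v} {β : Type w} [LinearOrder α] [LinearOrder β]
    {S : Set (Finset α)} {T : Set (Finset β)} {n : ℕ} (g : Chains R α n →ₗ[R] Chains R β n)
    (hcycles : ∀ c ∈ cyclesIn R R α S n, g c ∈ cyclesIn R R β T n)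
    (hboundaries : ∀ c ∈ cyclesIn R R α S n,
      g c ∈ boundariesIn R R β T n → c ∈ boundariesIn R R α S n) :
    Cardinal.lift.{max w u} (Module.rank R (redH R R α S n)) ≤
      Cardinal.lift.{max v u} (Module.rank R (redH R R β T n)) := by
  refine lift_rank_quotient_le_of_ker_le (Submodule.mkQ _ ∘ₗ g.restrict hcycles) fun c hc => ?_
  have hgc : g c ∈ boundariesIn R R β T n := by
    simpa [Submodule.Quotient.mk_eq_zero] using hc
  exact hboundaries c c.2 hgc

end Rank

section NerveTheorem

universe v w

variable {R : Type u} [CommRing R] {V : Type v} {ι : Type w} [LinearOrder V] [LinearOrder ι]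
  {Γ : ι → Set (Finset V)}

theorem lift_rank_redH_nerveC_le (hΓ : ∀ i, IsComplex (Γ i)) {n : ℕ}
    (hunion : ∀ σ ∈ nerveC Γ, #σ ≤ n + 1 → RedHVanish R R V (⋃ i ∈ σ, Γ i) (#σ - 2)) :
    Cardinal.lift.{max v u} (Module.rank R (redH R R ι (nerveC Γ) n)) ≤
      Cardinal.lift.{max w u} (Module.rank R (redH R R V (⋃ i, Γ i) n)) := by
  obtain ⟨g, hg⟩ := AugChain.exists_linearMap_cyclesIn_nerveC hΓ hunion
  exact lift_rank_redH_le g (fun c hc => (hg c hc).1) fun c hc => (hg c hc).2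

theorem nerve_theorem_for_unions_general (hΓ : ∀ i, IsComplex (Γ i)) (ℓ : ℤ)
    (hunion : ∀ σ ∈ nerveC Γ, (#σ : ℤ) - 1 ≤ ℓ →
      RedHVanish R R V (⋃ i ∈ σ, Γ i) ((#σ : ℤ) - 2)) :
    Cardinal.lift.{max v u} (redHRank R R ι (nerveC Γ) ℓ) ≤
      Cardinal.lift.{max w u} (redHRank R R V (⋃ i, Γ i) ℓ) := by
  rcases lt_trichotomy ℓ (-1) with hℓ | rfl | hℓ
  · simp [redHRank, hℓ]
  · have hnerve : (⋃ i, Γ i).Nonempty → (nerveC Γ).Nonempty := fun ⟨s, hs⟩ => by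
      obtain ⟨i, hi⟩ := Set.mem_iUnion.1 hs
      exact ⟨{i}, singleton_nonempty i, s, by simpa using hi⟩
    simp only [redHRank]
    split_ifs <;> simp_all
  · lift ℓ to ℕ using by lia
    rw [redHRank, redHRank, if_neg (by lia), if_neg (by lia), if_neg (by lia), if_neg (by lia)]
    exact lift_rank_redH_nerveC_le hΓ fun σ hσ hσℓ => hunion σ hσ (by lia)

end NerveTheorem

/-- Nerve theorem for unions: if `H̃_{|σ|-2}(⋃σ) = 0` for every simplex `σ` of the nerve
of dimension at most `ℓ`, then `dim H̃_ℓ(N(Γ)) ≤ dim H̃_ℓ(X)`. -/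
theorem nerve_theorem_for_unions {V : Type u} [LinearOrder V] [Fintype V]
    (F : Type u) [Field F] {N : ℕ}
    (X : Set (Finset V)) (hX : IsComplex X)
    (Γ : Fin N → Set (Finset V))
    (hΓ : ∀ i, IsComplex (Γ i) ∧ Γ i ⊆ X)
    (hcover : (⋃ i, Γ i) = X)
    (ℓ : ℤ) (hℓ1 : -1 ≤ ℓ) (hℓ2 : ℓ < N)
    (hunion : ∀ σ ∈ nerveC Γ, (σ.card : ℤ) - 1 ≤ ℓ →
      RedHVanish F F V (⋃ i ∈ σ, Γ i) ((σ.card : ℤ) - 2)) :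
    redHRank F F (Fin N) (nerveC Γ) ℓ ≤ redHRank F F V X ℓ := by
  subst hcover
  exact Cardinal.lift_le.1 (nerve_theorem_for_unions_general (fun i => (hΓ i).1) ℓ hunion)
end

section
/- Let X be a finite abstract simplicial complex, Γ a finite collection of subcomplexes covering X, F a field, and k, ℓ integers with -1 ≤ k ≤ ℓ < |Γ|. Suppose (1) H̃_{k-|σ|}(⋂σ, F) = 0 for every simplex σ of the nerve N(Γ) of dimension at most k, and (2) H̃_{|σ|-2}(⋃σ, F) = 0 for every simplex σ of N(Γ) of dimension at least k+1 and at most ℓ. Then dim H̃_ℓ(N(Γ), F) ≤ dim H̃_ℓ(X, F). -/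
open Finset

variable (R : Type*) [CommRing R] (A : Type*) [AddCommGroup A] [Module R A]
variable (V : Type*) [LinearOrder V]

universe u

/-!
Join a face `τ` of the nerve to a face `s` of `X` whenever `s` lies in every member of `τ`, where
either face may be empty. The resulting subcomplex of the join of `N(Γ)` and `X` contains the nerve
as the column of the empty `s` and `X` as the row of the empty `τ`. Its columns at nonempty `s` are
full simplices, hence cones, so a cycle of the nerve that bounds in this complex bounds in the
nerve. If every cycle of the nerve in degree `ℓ` can be moved, by a linear map, to a homologous
cycle of `X`, then `H̃_ℓ(N(Γ))` embeds into `H̃_ℓ(X)`.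

In degree `k` the cycles are moved by contracting the rows at nonempty `τ`, which are the augmented
complexes of the intersections. From then on, one degree at a time, it suffices to extend the
motion to a single simplex `σ`: its boundary has already been moved to a cycle of `⋃σ`, this cycle
bounds in `⋃σ`, and the resulting total cycle bounds because the complex of the subfamily `σ` is
acyclic (its nerve is a full simplex). This requires the motion to be local, a cycle of the nerve
of a subfamily being moved within the complex of that subfamily.
-/

universe r v w

namespace MixedNerve

section LinearAlgebra

variable {α M : Type*} {R : Type*} [Semiring R] [AddCommMonoid M] [Module R M]

lemma map_mem_of_mem_supported (φ : (α →₀ R) →ₗ[R] M) {S : Set α} {P : Submodule R M}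
    (h : ∀ a ∈ S, φ (Finsupp.single a 1) ∈ P) {f : α →₀ R} (hf : f ∈ Finsupp.supported R R S) :
    φ f ∈ P := by
  have hle : Finsupp.supported R R S ≤ P.comap φ := by
    rw [Finsupp.supported_eq_span_single, Submodule.span_le]
    rintro _ ⟨a, ha, rfl⟩
    exact h a ha
  exact hle hf

lemma single_one_mem_supported {S : Set α} {a : α} (ha : a ∈ S) :
    Finsupp.single a (1 : R) ∈ Finsupp.supported R R S :=
  Finsupp.single_mem_supported R 1 ha

lemma exists_section_on_map {K E E' : Type*} [DivisionRing K] [AddCommGroup E] [Module K E]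
    [AddCommGroup E'] [Module K E'] (D : E →ₗ[K] E') (C : Submodule K E) :
    ∃ g : E' →ₗ[K] E, (∀ y, g y ∈ C) ∧ ∀ y ∈ C.map D, D (g y) = y := by
  obtain ⟨g₀, hg₀⟩ := (D.submoduleMap C).exists_rightInverse_of_surjective
    (LinearMap.range_eq_top.2 (D.submoduleMap_surjective C))
  obtain ⟨g, hg⟩ := LinearMap.exists_extend g₀
  refine ⟨C.subtype ∘ₗ g, fun y => (g y).2, fun y hy => ?_⟩
  have hgy : g y = g₀ ⟨y, hy⟩ := LinearMap.congr_fun hg ⟨y, hy⟩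
  change D (g y) = y
  rw [hgy]
  exact congrArg Subtype.val (LinearMap.congr_fun hg₀ ⟨y, hy⟩)

lemma lift_rank_quotient_comap_subtype_le {R : Type*} [Ring R] {E : Type v} {E' : Type w}
    [AddCommGroup E] [Module R E] [AddCommGroup E'] [Module R E']
    {Z B : Submodule R E} {Z' B' : Submodule R E'}
    (φ : E →ₗ[R] E') (hφ : ∀ z ∈ Z, φ z ∈ Z') (hker : ∀ z ∈ Z, φ z ∈ B' → z ∈ B) :
    Cardinal.lift.{w} (Module.rank R (Z ⧸ B.comap Z.subtype)) ≤
      Cardinal.lift.{v} (Module.rank R (Z' ⧸ B'.comap Z'.subtype)) := by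
  let ψ : Z →ₗ[R] Z' ⧸ B'.comap Z'.subtype := (B'.comap Z'.subtype).mkQ ∘ₗ φ.restrict hφ
  have hψ : LinearMap.ker ψ ≤ B.comap Z.subtype := fun z hz =>
    hker z z.2 ((Submodule.Quotient.mk_eq_zero (B'.comap Z'.subtype)).1 hz)
  have hinj : Function.Injective ((LinearMap.ker ψ).liftQ ψ le_rfl) :=
    LinearMap.ker_eq_bot.1 (Submodule.ker_liftQ_eq_bot' _ ψ rfl)
  exact (Cardinal.lift_le.2 (LinearMap.rank_le_of_surjective _
    (Submodule.factor_surjective hψ))).trans (LinearMap.lift_rank_le_of_injective _ hinj)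

end LinearAlgebra

section FaceSign

variable {W : Type*} [LinearOrder W]

/-- The incidence sign of the face `s.erase v` in `s`. For `v ∉ s` it is the incidence sign of `s`
in `insert v s`, which is the sign needed in `cone`. -/
def faceSign (v : W) (s : Finset W) : ℤ :=
  (-1) ^ #{w ∈ s | w < v}

lemma faceSign_mul_self (v : W) (s : Finset W) : faceSign v s * faceSign v s = 1 := by
  rw [faceSign, ← mul_pow]
  simp

lemma faceSign_insert {v w : W} {s : Finset W} (hv : v ∉ s) :
    faceSign w (insert v s) = if v < w then -faceSign w s else faceSign w s := by
  unfold faceSign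
  rw [filter_insert]
  split_ifs with h
  · rw [card_insert_of_notMem (by simp [hv]), pow_succ, mul_neg_one]
  · rfl

lemma faceSign_erase {v w : W} {s : Finset W} (hv : v ∈ s) :
    faceSign w (s.erase v) = if v < w then -faceSign w s else faceSign w s := by
  have h := faceSign_insert (w := w) (notMem_erase v s)
  rw [insert_erase hv] at h
  rw [h]
  split_ifs <;> simp

lemma faceSign_insert_self {v : W} {s : Finset W} (hv : v ∉ s) :
    faceSign v (insert v s) = faceSign v s := by
  rw [faceSign_insert hv, if_neg (lt_irrefl v)]

lemma faceSign_erase_self {v : W} {s : Finset W} (hv : v ∈ s) :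
    faceSign v (s.erase v) = faceSign v s := by
  rw [faceSign_erase hv, if_neg (lt_irrefl v)]

lemma faceSign_mul_erase_comm {v w : W} {s : Finset W} (hv : v ∈ s) (hw : w ∈ s) (hvw : v ≠ w) :
    faceSign v s * faceSign w (s.erase v) = -(faceSign w s * faceSign v (s.erase w)) := by
  rw [faceSign_erase hv, faceSign_erase hw]
  rcases hvw.lt_or_gt with h | h
  · rw [if_pos h, if_neg h.not_gt]; ring
  · rw [if_pos h, if_neg h.not_gt]; ring

end FaceSign

section AugmentedChains

variable (W : Type*) [LinearOrder W]

/-- The boundary operator of the augmented chain complex of the full simplex on `W`, on the sum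
of all degrees. A set of `n` vertices spans a face of dimension `n - 1`, and the boundary of a
vertex is the empty face, so the augmentation is part of this operator. -/
noncomputable def augBoundary : Module.End R (Finset W →₀ R) :=
  Finsupp.linearCombination R fun s => ∑ v ∈ s, faceSign v s • Finsupp.single (s.erase v) 1

variable {W}

/-- The contracting homotopy of the full simplex that adds the vertex `i` to every face. -/
noncomputable def cone (i : W) : Module.End R (Finset W →₀ R) :=
  Finsupp.linearCombination R fun s =>
    if i ∈ s then 0 else faceSign i s • Finsupp.single (insert i s) 1

variable {R}

lemma augBoundary_single (s : Finset W) :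
    augBoundary R W (Finsupp.single s 1) =
      ∑ v ∈ s, faceSign v s • Finsupp.single (s.erase v) 1 := by
  simp [augBoundary]

lemma cone_single_of_mem {i : W} {s : Finset W} (hi : i ∈ s) :
    cone R i (Finsupp.single s 1) = 0 := by
  simp [cone, hi]

lemma cone_single_of_notMem {i : W} {s : Finset W} (hi : i ∉ s) :
    cone R i (Finsupp.single s 1) = faceSign i s • Finsupp.single (insert i s) 1 := by
  simp [cone, hi]

lemma augBoundary_comp_augBoundary : augBoundary R W ∘ₗ augBoundary R W = 0 := by
  refine Finsupp.lhom_ext' fun s => LinearMap.ext_ring ?_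
  simp only [LinearMap.comp_apply, Finsupp.lsingle_apply, augBoundary_single, map_sum, map_zsmul,
    smul_sum, smul_smul, LinearMap.zero_apply]
  rw [sum_sigma']
  refine sum_involution (fun x _ => ⟨x.2, x.1⟩) ?_ ?_ ?_ fun _ _ => rfl
  · rintro ⟨v, w⟩ h
    obtain ⟨hv, hwv, hw⟩ : v ∈ s ∧ w ≠ v ∧ w ∈ s := by simpa using h
    rw [faceSign_mul_erase_comm hv hw hwv.symm, erase_right_comm, neg_smul, neg_add_cancel]
  · rintro ⟨v, w⟩ h _ heq
    obtain ⟨-, hwv, -⟩ : v ∈ s ∧ w ≠ v ∧ w ∈ s := by simpa using h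
    exact hwv (congrArg Sigma.fst heq)
  · rintro ⟨v, w⟩ h
    obtain ⟨hv, hwv, hw⟩ : v ∈ s ∧ w ≠ v ∧ w ∈ s := by simpa using h
    simp [hv, hw, hwv.symm]

lemma augBoundary_augBoundary (f : Finset W →₀ R) : augBoundary R W (augBoundary R W f) = 0 :=
  LinearMap.congr_fun augBoundary_comp_augBoundary f

lemma cone_augBoundary_single_of_mem {i : W} {s : Finset W} (hi : i ∈ s) :
    cone R i (augBoundary R W (Finsupp.single s 1)) = Finsupp.single s 1 := by
  rw [augBoundary_single, map_sum, sum_eq_single_of_mem i hi]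
  · rw [map_zsmul, cone_single_of_notMem (notMem_erase i s), smul_smul, faceSign_erase_self hi,
      faceSign_mul_self, one_smul, insert_erase hi]
  · intro v _ hvi
    rw [map_zsmul, cone_single_of_mem (mem_erase.2 ⟨hvi.symm, hi⟩), smul_zero]

lemma augBoundary_cone_single_of_notMem {i : W} {s : Finset W} (hi : i ∉ s) :
    augBoundary R W (cone R i (Finsupp.single s 1)) +
      cone R i (augBoundary R W (Finsupp.single s 1)) = Finsupp.single s 1 := by
  rw [cone_single_of_notMem hi, map_zsmul, augBoundary_single, sum_insert hi, smul_add, smul_smul,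
    faceSign_insert_self hi, faceSign_mul_self, one_smul, erase_insert hi, add_assoc,
    add_eq_left, augBoundary_single, map_sum, smul_sum, ← sum_add_distrib]
  refine sum_eq_zero fun v hv => ?_
  have hvi : i ≠ v := by rintro rfl; exact hi hv
  have hi' : i ∉ s.erase v := fun h => hi (mem_of_mem_erase h)
  rw [map_zsmul, cone_single_of_notMem hi', smul_smul, smul_smul, erase_insert_of_ne hvi,
    ← add_smul, faceSign_insert hi, faceSign_erase hv]
  rcases hvi.lt_or_gt with h | h
  · rw [if_pos h, if_neg h.not_gt, mul_neg, mul_comm, neg_add_cancel, zero_smul]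
  · rw [if_pos h, if_neg h.not_gt, mul_neg, mul_comm, add_neg_cancel, zero_smul]

lemma augBoundary_cone_add (i : W) (f : Finset W →₀ R) :
    augBoundary R W (cone R i f) + cone R i (augBoundary R W f) = f := by
  suffices augBoundary R W ∘ₗ cone R i + cone R i ∘ₗ augBoundary R W = LinearMap.id from
    LinearMap.congr_fun this f
  refine Finsupp.lhom_ext' fun s => LinearMap.ext_ring ?_
  change augBoundary R W (cone R i (Finsupp.single s 1)) +
    cone R i (augBoundary R W (Finsupp.single s 1)) = Finsupp.single s 1
  by_cases hi : i ∈ s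
  · rw [cone_single_of_mem hi, map_zero, zero_add, cone_augBoundary_single_of_mem hi]
  · exact augBoundary_cone_single_of_notMem hi

lemma augBoundary_mem_supported {S T : Set (Finset W)} (h : ∀ s ∈ S, ∀ v ∈ s, s.erase v ∈ T)
    {f : Finset W →₀ R} (hf : f ∈ Finsupp.supported R R S) :
    augBoundary R W f ∈ Finsupp.supported R R T := by
  refine map_mem_of_mem_supported _ (fun s hs => ?_) hf
  rw [augBoundary_single]
  exact sum_mem fun v hv => zsmul_mem (single_one_mem_supported (h s hs v hv)) _

lemma cone_mem_supported {i : W} {S T : Set (Finset W)} (h : ∀ s ∈ S, i ∉ s → insert i s ∈ T)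
    {f : Finset W →₀ R} (hf : f ∈ Finsupp.supported R R S) :
    cone R i f ∈ Finsupp.supported R R T := by
  refine map_mem_of_mem_supported _ (fun s hs => ?_) hf
  by_cases hi : i ∈ s
  · rw [cone_single_of_mem hi]
    exact zero_mem _
  · rw [cone_single_of_notMem hi]
    exact zsmul_mem (single_one_mem_supported (h s hs hi)) _

end AugmentedChains

section Slices

variable {R} {α β : Type*}

/-- The column at `b` of a finitely supported function on `α × β`. -/
noncomputable def col (b : β) : (α × β →₀ R) →ₗ[R] α →₀ R :=
  Finsupp.lcomapDomain (·, b) (Prod.mk_left_injective b)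

/-- The row at `a` of a finitely supported function on `α × β`. -/
noncomputable def row (a : α) : (α × β →₀ R) →ₗ[R] β →₀ R :=
  Finsupp.lcomapDomain (a, ·) (Prod.mk_right_injective a)

/-- The inclusion of `α →₀ R` as the column at `b`. -/
noncomputable def ofCol (b : β) : (α →₀ R) →ₗ[R] α × β →₀ R :=
  Finsupp.lmapDomain R R (·, b)

/-- The inclusion of `β →₀ R` as the row at `a`. -/
noncomputable def ofRow (a : α) : (β →₀ R) →ₗ[R] α × β →₀ R :=
  Finsupp.lmapDomain R R (a, ·)

/-- The operator that acts on the column at `b` by `h b`. -/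
noncomputable def colMap (h : β → Module.End R (α →₀ R)) : Module.End R (α × β →₀ R) :=
  Finsupp.linearCombination R fun p => ofCol p.2 (h p.2 (Finsupp.single p.1 1))

/-- The operator that acts on the row at `a` by `h a`. -/
noncomputable def rowMap (h : α → Module.End R (β →₀ R)) : Module.End R (α × β →₀ R) :=
  Finsupp.linearCombination R fun p => ofRow p.1 (h p.1 (Finsupp.single p.2 1))

@[simp]
lemma ofCol_single (b : β) (a : α) (r : R) :
    ofCol b (Finsupp.single a r) = Finsupp.single (a, b) r :=
  Finsupp.mapDomain_single

@[simp]
lemma ofRow_single (a : α) (b : β) (r : R) :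
    ofRow a (Finsupp.single b r) = Finsupp.single (a, b) r :=
  Finsupp.mapDomain_single

lemma ofCol_injective (b : β) : Function.Injective (ofCol b : (α →₀ R) →ₗ[R] α × β →₀ R) :=
  Finsupp.mapDomain_injective (Prod.mk_left_injective b)

lemma ofRow_injective (a : α) : Function.Injective (ofRow a : (β →₀ R) →ₗ[R] α × β →₀ R) :=
  Finsupp.mapDomain_injective (Prod.mk_right_injective a)

lemma col_ofCol (b : β) (f : α →₀ R) : col b (ofCol b f) = f :=
  Finsupp.leftInverse_lcomapDomain_mapDomain _ (Prod.mk_left_injective b) f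

lemma row_ofRow (a : α) (f : β →₀ R) : row a (ofRow a f) = f :=
  Finsupp.leftInverse_lcomapDomain_mapDomain _ (Prod.mk_right_injective a) f

lemma col_ofCol_of_ne {b c : β} (hbc : b ≠ c) (f : α →₀ R) : col b (ofCol c f) = 0 := by
  ext a
  exact Finsupp.mapDomain_of_notMem_range _ _ fun ⟨_, h⟩ =>
    hbc (congrArg Prod.snd h).symm

lemma row_ofRow_of_ne {a c : α} (hac : a ≠ c) (f : β →₀ R) : row a (ofRow c f) = 0 := by
  ext b
  exact Finsupp.mapDomain_of_notMem_range _ _ fun ⟨_, h⟩ =>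
    hac (congrArg Prod.fst h).symm

@[simp]
lemma colMap_single (h : β → Module.End R (α →₀ R)) (a : α) (b : β) :
    colMap h (Finsupp.single (a, b) 1) = ofCol b (h b (Finsupp.single a 1)) := by
  simp [colMap]

@[simp]
lemma rowMap_single (h : α → Module.End R (β →₀ R)) (a : α) (b : β) :
    rowMap h (Finsupp.single (a, b) 1) = ofRow a (h a (Finsupp.single b 1)) := by
  simp [rowMap]

lemma colMap_ofCol (h : β → Module.End R (α →₀ R)) (b : β) (f : α →₀ R) :
    colMap h (ofCol b f) = ofCol b (h b f) := by
  suffices colMap h ∘ₗ ofCol b = ofCol b ∘ₗ h b from LinearMap.congr_fun this f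
  refine Finsupp.lhom_ext' fun a => LinearMap.ext_ring ?_
  simp

lemma rowMap_ofRow (h : α → Module.End R (β →₀ R)) (a : α) (f : β →₀ R) :
    rowMap h (ofRow a f) = ofRow a (h a f) := by
  suffices rowMap h ∘ₗ ofRow a = ofRow a ∘ₗ h a from LinearMap.congr_fun this f
  refine Finsupp.lhom_ext' fun b => LinearMap.ext_ring ?_
  simp

lemma col_colMap (h : β → Module.End R (α →₀ R)) (b : β) (f : α × β →₀ R) :
    col b (colMap h f) = h b (col b f) := by
  suffices col b ∘ₗ colMap h = h b ∘ₗ col b from LinearMap.congr_fun this f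
  refine Finsupp.lhom_ext' fun ⟨a, c⟩ => LinearMap.ext_ring ?_
  simp only [LinearMap.comp_apply, Finsupp.lsingle_apply, colMap_single]
  rw [← ofCol_single c a]
  by_cases hbc : b = c
  · rw [hbc, col_ofCol, col_ofCol]
  · rw [col_ofCol_of_ne hbc, col_ofCol_of_ne hbc, map_zero]

lemma row_rowMap (h : α → Module.End R (β →₀ R)) (a : α) (f : α × β →₀ R) :
    row a (rowMap h f) = h a (row a f) := by
  suffices row a ∘ₗ rowMap h = h a ∘ₗ row a from LinearMap.congr_fun this f
  refine Finsupp.lhom_ext' fun ⟨c, b⟩ => LinearMap.ext_ring ?_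
  simp only [LinearMap.comp_apply, Finsupp.lsingle_apply, rowMap_single]
  rw [← ofRow_single c b]
  by_cases hac : a = c
  · rw [hac, row_ofRow, row_ofRow]
  · rw [row_ofRow_of_ne hac, row_ofRow_of_ne hac, map_zero]

lemma ofCol_mem_supported {b : β} {S : Set (α × β)} {f : α →₀ R}
    (hf : f ∈ Finsupp.supported R R {a | (a, b) ∈ S}) : ofCol b f ∈ Finsupp.supported R R S :=
  map_mem_of_mem_supported _ (fun a ha => by
    rw [ofCol_single]; exact single_one_mem_supported ha) hf

lemma ofRow_mem_supported {a : α} {S : Set (α × β)} {f : β →₀ R}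
    (hf : f ∈ Finsupp.supported R R {b | (a, b) ∈ S}) : ofRow a f ∈ Finsupp.supported R R S :=
  map_mem_of_mem_supported _ (fun b hb => by
    rw [ofRow_single]; exact single_one_mem_supported hb) hf

lemma colMap_mem_supported {h : β → Module.End R (α →₀ R)} {S T : Set (α × β)}
    (hST : ∀ a b, (a, b) ∈ S →
      h b (Finsupp.single a 1) ∈ Finsupp.supported R R {a' | (a', b) ∈ T})
    {f : α × β →₀ R} (hf : f ∈ Finsupp.supported R R S) :
    colMap h f ∈ Finsupp.supported R R T :=
  map_mem_of_mem_supported _ (fun ⟨a, b⟩ hp => by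
    simpa using ofCol_mem_supported (hST a b hp)) hf

lemma rowMap_mem_supported {h : α → Module.End R (β →₀ R)} {S T : Set (α × β)}
    (hST : ∀ a b, (a, b) ∈ S →
      h a (Finsupp.single b 1) ∈ Finsupp.supported R R {b' | (a, b') ∈ T})
    {f : α × β →₀ R} (hf : f ∈ Finsupp.supported R R S) :
    rowMap h f ∈ Finsupp.supported R R T :=
  map_mem_of_mem_supported _ (fun ⟨a, b⟩ hp => by
    simpa using ofRow_mem_supported (hST a b hp)) hf

lemma col_mem_supported {b : β} {S : Set (α × β)} {f : α × β →₀ R}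
    (hf : f ∈ Finsupp.supported R R S) :
    col b f ∈ Finsupp.supported R R {a | (a, b) ∈ S} := by
  rw [Finsupp.mem_supported'] at hf ⊢
  exact fun a ha => hf (a, b) ha

lemma row_mem_supported {a : α} {S : Set (α × β)} {f : α × β →₀ R}
    (hf : f ∈ Finsupp.supported R R S) :
    row a f ∈ Finsupp.supported R R {b | (a, b) ∈ S} := by
  rw [Finsupp.mem_supported'] at hf ⊢
  exact fun b hb => hf (a, b) hb

lemma ofCol_col {b : β} {f : α × β →₀ R}
    (hf : f ∈ Finsupp.supported R R {p : α × β | p.2 = b}) : ofCol b (col b f) = f := by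
  suffices f ∈ (LinearMap.eqLocus (ofCol b ∘ₗ col b) LinearMap.id) from this
  refine map_mem_of_mem_supported LinearMap.id ?_ hf
  rintro ⟨a, _⟩ rfl
  change ofCol _ (col _ (Finsupp.single _ 1)) = Finsupp.single _ 1
  rw [← ofCol_single, col_ofCol]

lemma ofRow_row {a : α} {f : α × β →₀ R}
    (hf : f ∈ Finsupp.supported R R {p : α × β | p.1 = a}) : ofRow a (row a f) = f := by
  suffices f ∈ (LinearMap.eqLocus (ofRow a ∘ₗ row a) LinearMap.id) from this
  refine map_mem_of_mem_supported LinearMap.id ?_ hf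
  rintro ⟨_, b⟩ rfl
  change ofRow _ (row _ (Finsupp.single _ 1)) = Finsupp.single _ 1
  rw [← ofRow_single, row_ofRow]

end Slices

section ColBoundary

variable (ι W : Type*) [LinearOrder ι]

/-- The first differential of the double complex of pairs of faces `(τ, s)`: the boundary of
`τ` on every column. -/
noncomputable def colBoundary : Module.End R (Finset ι × Finset W →₀ R) :=
  colMap fun _ => augBoundary R ι

variable {R ι W}

lemma col_colBoundary (s : Finset W) (c : Finset ι × Finset W →₀ R) :
    col s (colBoundary R ι W c) = augBoundary R ι (col s c) :=
  col_colMap _ s c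

lemma colBoundary_ofCol (s : Finset W) (f : Finset ι →₀ R) :
    colBoundary R ι W (ofCol s f) = ofCol s (augBoundary R ι f) :=
  colMap_ofCol _ s f

lemma colBoundary_single (τ : Finset ι) (s : Finset W) :
    colBoundary R ι W (Finsupp.single (τ, s) 1) =
      ∑ i ∈ τ, faceSign i τ • Finsupp.single (τ.erase i, s) 1 := by
  simp [colBoundary, augBoundary_single]

lemma colBoundary_comp_colBoundary : colBoundary R ι W ∘ₗ colBoundary R ι W = 0 := by
  refine LinearMap.ext fun c => Finsupp.ext fun ⟨τ, s⟩ => ?_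
  change col s (colBoundary R ι W (colBoundary R ι W c)) τ = 0
  rw [col_colBoundary, col_colBoundary, augBoundary_augBoundary, Finsupp.zero_apply]

lemma colBoundary_mem_supported {S T : Set (Finset ι × Finset W)}
    (h : ∀ τ s, (τ, s) ∈ S → ∀ i ∈ τ, (τ.erase i, s) ∈ T) {c : Finset ι × Finset W →₀ R}
    (hc : c ∈ Finsupp.supported R R S) : colBoundary R ι W c ∈ Finsupp.supported R R T :=
  colMap_mem_supported (fun τ s hτs => augBoundary_mem_supported (S := {τ})
    (by rintro _ rfl; exact h _ s hτs) (single_one_mem_supported rfl)) hc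

end ColBoundary

section RowBoundary

variable (ι W : Type*) [LinearOrder W]

/-- The second differential of the double complex of pairs of faces `(τ, s)`: the boundary of `s`
on every row, with the sign that makes it anticommute with `colBoundary`. -/
noncomputable def rowBoundary : Module.End R (Finset ι × Finset W →₀ R) :=
  rowMap fun τ => (-1 : ℤ) ^ #τ • augBoundary R W

variable {R ι W}

lemma row_rowBoundary (τ : Finset ι) (c : Finset ι × Finset W →₀ R) :
    row τ (rowBoundary R ι W c) = (-1 : ℤ) ^ #τ • augBoundary R W (row τ c) :=
  row_rowMap _ τ c

lemma rowBoundary_ofRow (τ : Finset ι) (f : Finset W →₀ R) :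
    rowBoundary R ι W (ofRow τ f) = (-1 : ℤ) ^ #τ • ofRow τ (augBoundary R W f) := by
  rw [rowBoundary, rowMap_ofRow, LinearMap.smul_apply, map_zsmul]

lemma rowBoundary_single (τ : Finset ι) (s : Finset W) :
    rowBoundary R ι W (Finsupp.single (τ, s) 1) =
      ∑ v ∈ s, ((-1) ^ #τ * faceSign v s) • Finsupp.single (τ, s.erase v) 1 := by
  simp only [rowBoundary, rowMap_single, LinearMap.smul_apply, augBoundary_single, map_zsmul,
    map_sum, ofRow_single, smul_sum, smul_smul]

lemma rowBoundary_comp_rowBoundary : rowBoundary R ι W ∘ₗ rowBoundary R ι W = 0 := by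
  refine LinearMap.ext fun c => Finsupp.ext fun ⟨τ, s⟩ => ?_
  change row τ (rowBoundary R ι W (rowBoundary R ι W c)) s = 0
  rw [row_rowBoundary, row_rowBoundary, map_zsmul, augBoundary_augBoundary, smul_zero, smul_zero,
    Finsupp.zero_apply]

lemma rowBoundary_mem_supported {S T : Set (Finset ι × Finset W)}
    (h : ∀ τ s, (τ, s) ∈ S → ∀ v ∈ s, (τ, s.erase v) ∈ T) {c : Finset ι × Finset W →₀ R}
    (hc : c ∈ Finsupp.supported R R S) : rowBoundary R ι W c ∈ Finsupp.supported R R T :=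
  rowMap_mem_supported (fun τ s hτs => zsmul_mem (augBoundary_mem_supported (S := {s})
    (by rintro _ rfl; exact h τ _ hτs) (single_one_mem_supported rfl)) _) hc

end RowBoundary

section TotalBoundary

variable {ι W : Type*}

/-- The chains of total degree `n` on the pairs of faces in `T`, where `T` is a subcomplex of the
join, with its empty face included. -/
noncomputable def bichains (T : Set (Finset ι × Finset W)) (n : ℕ) :
    Submodule R (Finset ι × Finset W →₀ R) :=
  Finsupp.supported R R {p | p ∈ T ∧ #p.1 + #p.2 = n}

lemma bichains_mono {T T' : Set (Finset ι × Finset W)} (h : T ⊆ T') (n : ℕ) :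
    bichains R T n ≤ bichains R T' n :=
  Finsupp.supported_mono fun _ hp => by exact ⟨h hp.1, hp.2⟩

variable (ι W) [LinearOrder ι] [LinearOrder W]

/-- The differential of the total complex, in which the pair `(τ, s)` has degree `#τ + #s`; this
is the augmented chain complex of the join of the two full simplices. -/
noncomputable def totalBoundary : Module.End R (Finset ι × Finset W →₀ R) :=
  colBoundary R ι W + rowBoundary R ι W

variable {R ι W}

lemma totalBoundary_apply (c : Finset ι × Finset W →₀ R) :
    totalBoundary R ι W c = colBoundary R ι W c + rowBoundary R ι W c :=
  rfl

lemma colBoundary_comp_rowBoundary_add :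
    colBoundary R ι W ∘ₗ rowBoundary R ι W + rowBoundary R ι W ∘ₗ colBoundary R ι W = 0 := by
  refine Finsupp.lhom_ext' fun ⟨τ, s⟩ => LinearMap.ext_ring ?_
  simp only [LinearMap.comp_apply, LinearMap.add_apply, LinearMap.zero_apply,
    Finsupp.lsingle_apply, colBoundary_single, rowBoundary_single, map_sum, map_zsmul, smul_sum,
    smul_smul]
  rw [sum_comm, ← sum_add_distrib]
  refine sum_eq_zero fun i hi => ?_
  rw [← sum_add_distrib]
  refine sum_eq_zero fun v _ => ?_
  have hsign : (-1 : ℤ) ^ #τ = -(-1) ^ #(τ.erase i) := by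
    rw [← card_erase_add_one hi, pow_succ, mul_neg_one]
  rw [← add_smul, hsign]
  convert zero_smul ℤ _ using 2
  ring

lemma totalBoundary_totalBoundary (c : Finset ι × Finset W →₀ R) :
    totalBoundary R ι W (totalBoundary R ι W c) = 0 := by
  have hcol := LinearMap.congr_fun (colBoundary_comp_colBoundary (R := R) (ι := ι) (W := W)) c
  have hrow := LinearMap.congr_fun (rowBoundary_comp_rowBoundary (R := R) (ι := ι) (W := W)) c
  have hmix := LinearMap.congr_fun (colBoundary_comp_rowBoundary_add (R := R) (ι := ι) (W := W)) c
  simp only [LinearMap.comp_apply, LinearMap.add_apply, LinearMap.zero_apply] at hcol hrow hmix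
  rw [totalBoundary_apply, totalBoundary_apply, map_add, map_add, hcol, hrow, zero_add, add_zero,
    hmix]

lemma totalBoundary_ofCol_empty (z : Finset ι →₀ R) :
    totalBoundary R ι W (ofCol ∅ z) = ofCol ∅ (augBoundary R ι z) := by
  have hrow : rowBoundary R ι W (ofCol ∅ z) = 0 := by
    suffices rowBoundary R ι W ∘ₗ ofCol ∅ = 0 from LinearMap.congr_fun this z
    refine Finsupp.lhom_ext' fun τ => LinearMap.ext_ring ?_
    simp [rowBoundary_single]
  rw [totalBoundary_apply, colBoundary_ofCol, hrow, add_zero]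

lemma totalBoundary_ofRow_empty (y : Finset W →₀ R) :
    totalBoundary R ι W (ofRow ∅ y) = ofRow ∅ (augBoundary R W y) := by
  have hcol : colBoundary R ι W (ofRow ∅ y) = 0 := by
    suffices colBoundary R ι W ∘ₗ ofRow ∅ = 0 from LinearMap.congr_fun this y
    refine Finsupp.lhom_ext' fun s => LinearMap.ext_ring ?_
    simp [colBoundary_single]
  rw [totalBoundary_apply, rowBoundary_ofRow, hcol, zero_add, card_empty, pow_zero, one_smul]

lemma totalBoundary_mem_bichains {T : Set (Finset ι × Finset W)} (hT : IsLowerSet T) {n : ℕ}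
    {c : Finset ι × Finset W →₀ R} (hc : c ∈ bichains R T (n + 1)) :
    totalBoundary R ι W c ∈ bichains R T n := by
  refine add_mem (colBoundary_mem_supported ?_ hc) (rowBoundary_mem_supported ?_ hc)
  · rintro τ s ⟨hτs, hn⟩ i hi
    refine ⟨hT (Prod.mk_le_mk.2 ⟨erase_subset i τ, le_rfl⟩) hτs, ?_⟩
    have := card_erase_add_one hi
    dsimp only at hn ⊢
    omega
  · rintro τ s ⟨hτs, hn⟩ v hv
    refine ⟨hT (Prod.mk_le_mk.2 ⟨le_rfl, erase_subset v s⟩) hτs, ?_⟩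
    have := card_erase_add_one hv
    dsimp only at hn ⊢
    omega

end TotalBoundary

section PushDown

variable {R} {M : Type*} [AddCommGroup M] [Module R M]

/-- The chain accumulated by replacing `c` with `c - D (G c)` a total of `q` times: after these
replacements `c` has become `c - D (pushDown D G q c)`. -/
def pushDown (D G : Module.End R M) : ℕ → Module.End R M
  | 0 => 0
  | q + 1 => G + pushDown D G q * (1 - D * G)

lemma pushDown_succ_apply (D G : Module.End R M) (q : ℕ) (c : M) :
    pushDown D G (q + 1) c = G c + pushDown D G q (c - D (G c)) :=
  rfl

lemma pushDown_spec {D G : Module.End R M} {C C' : Submodule R M} {Fil : ℕ → Submodule R M}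
    (hDD : ∀ c, D (D c) = 0) (hG : ∀ c ∈ C, G c ∈ C') (hD : ∀ c ∈ C', D c ∈ C)
    (hstep : ∀ q, ∀ c ∈ C, c ∈ Fil (q + 1) → D c ∈ Fil 0 → c - D (G c) ∈ Fil q)
    {q : ℕ} {c : M} (hc : c ∈ C) (hq : c ∈ Fil q) (hDc : D c ∈ Fil 0) :
    pushDown D G q c ∈ C' ∧ c - D (pushDown D G q c) ∈ Fil 0 := by
  induction q generalizing c with
  | zero => exact ⟨zero_mem _, by simpa [pushDown] using hq⟩
  | succ q ih =>
    have hDc' : D (c - D (G c)) ∈ Fil 0 := by rwa [map_sub, hDD, sub_zero]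
    obtain ⟨hmem, hrem⟩ :=
      ih (sub_mem hc (hD _ (hG c hc))) (hstep q c hc hq hDc) hDc'
    rw [pushDown_succ_apply]
    exact ⟨add_mem (hG c hc) hmem, by rwa [map_add, ← sub_sub]⟩

end PushDown

section ColumnPush

variable {R} {ι W : Type*} {T : Set (Finset ι × Finset W)} {m n : ℕ}

lemma col_eq_zero_of_mem_supported {α β : Type*} {S : Set (α × β)} {f : α × β →₀ R} {b : β}
    (hf : f ∈ Finsupp.supported R R S) (hb : ∀ a, (a, b) ∉ S) : col b f = 0 :=
  Finsupp.ext fun a => (Finsupp.mem_supported' R f).1 hf (a, b) (hb a)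

lemma row_eq_zero_of_mem_supported {α β : Type*} {S : Set (α × β)} {f : α × β →₀ R} {a : α}
    (hf : f ∈ Finsupp.supported R R S) (ha : ∀ b, (a, b) ∉ S) : row a f = 0 :=
  Finsupp.ext fun b => (Finsupp.mem_supported' R f).1 hf (a, b) (ha b)

variable (R) in
/-- The functions supported on the columns at faces with fewer than `q` vertices. -/
noncomputable def colFiltration (ι W : Type*) (q : ℕ) :
    Submodule R (Finset ι × Finset W →₀ R) :=
  Finsupp.supported R R {p | #p.2 < q}

variable (R) in
/-- The functions supported on the rows at faces with fewer than `q` vertices. -/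
noncomputable def rowFiltration (ι W : Type*) (q : ℕ) :
    Submodule R (Finset ι × Finset W →₀ R) :=
  Finsupp.supported R R {p | #p.1 < q}

lemma colFiltration_mono {k : ℕ} (h : m ≤ k) : colFiltration R ι W m ≤ colFiltration R ι W k :=
  Finsupp.supported_mono fun _ hp => lt_of_lt_of_le hp h

lemma rowFiltration_mono {k : ℕ} (h : m ≤ k) : rowFiltration R ι W m ≤ rowFiltration R ι W k :=
  Finsupp.supported_mono fun _ hp => lt_of_lt_of_le hp h

lemma bichains_le_colFiltration (h : n < m) : bichains R T n ≤ colFiltration R ι W m :=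
  Finsupp.supported_mono fun p hp => by
    have : #p.1 + #p.2 = n := hp.2
    simp only [Set.mem_ofPred_eq]
    omega

lemma bichains_le_rowFiltration (h : n < m) : bichains R T n ≤ rowFiltration R ι W m :=
  Finsupp.supported_mono fun p hp => by
    have : #p.1 + #p.2 = n := hp.2
    simp only [Set.mem_ofPred_eq]
    omega

lemma col_eq_zero_of_mem_colFiltration {c : Finset ι × Finset W →₀ R} {s : Finset W}
    (hc : c ∈ colFiltration R ι W m) (hs : m ≤ #s) : col s c = 0 :=
  col_eq_zero_of_mem_supported hc fun _ => hs.not_gt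

lemma row_eq_zero_of_mem_rowFiltration {c : Finset ι × Finset W →₀ R} {τ : Finset ι}
    (hc : c ∈ rowFiltration R ι W m) (hτ : m ≤ #τ) : row τ c = 0 :=
  row_eq_zero_of_mem_supported hc fun _ => hτ.not_gt

lemma mem_colFiltration_of_succ {c : Finset ι × Finset W →₀ R}
    (hc : c ∈ colFiltration R ι W (m + 1)) (htop : ∀ s, #s = m → col s c = 0) :
    c ∈ colFiltration R ι W m := by
  refine (Finsupp.mem_supported' R c).2 fun ⟨τ, s⟩ hs => ?_
  obtain h | h := (not_lt.1 (show ¬#s < m from hs)).eq_or_lt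
  · exact DFunLike.congr_fun (htop s h.symm) τ
  · exact (Finsupp.mem_supported' R c).1 hc (τ, s) (show ¬#s < m + 1 by omega)

lemma mem_rowFiltration_of_succ {c : Finset ι × Finset W →₀ R}
    (hc : c ∈ rowFiltration R ι W (m + 1)) (htop : ∀ τ, #τ = m → row τ c = 0) :
    c ∈ rowFiltration R ι W m := by
  refine (Finsupp.mem_supported' R c).2 fun ⟨τ, s⟩ hτ => ?_
  obtain h | h := (not_lt.1 (show ¬#τ < m from hτ)).eq_or_lt
  · exact DFunLike.congr_fun (htop τ h.symm) s
  · exact (Finsupp.mem_supported' R c).1 hc (τ, s) (show ¬#τ < m + 1 by omega)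

lemma rowBoundary_mem_colFiltration [LinearOrder W] {c : Finset ι × Finset W →₀ R}
    (hc : c ∈ colFiltration R ι W (m + 1)) : rowBoundary R ι W c ∈ colFiltration R ι W m := by
  refine rowBoundary_mem_supported (fun τ s hs v hv => ?_) hc
  have := card_erase_add_one hv
  simp only [Set.mem_ofPred_eq] at hs ⊢
  omega

lemma colBoundary_mem_rowFiltration [LinearOrder ι] {c : Finset ι × Finset W →₀ R}
    (hc : c ∈ rowFiltration R ι W (m + 1)) : colBoundary R ι W c ∈ rowFiltration R ι W m := by
  refine colBoundary_mem_supported (fun τ s hτ i hi => ?_) hc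
  have := card_erase_add_one hi
  simp only [Set.mem_ofPred_eq] at hτ ⊢
  omega

lemma colMap_mem_colFiltration {c : Finset ι × Finset W →₀ R}
    (h : Finset W → Module.End R (Finset ι →₀ R)) (hc : c ∈ colFiltration R ι W m) :
    colMap h c ∈ colFiltration R ι W m :=
  colMap_mem_supported (fun _ _ hs => Finsupp.mem_supported' R _ |>.2 fun _ ha => absurd hs ha) hc

lemma rowMap_mem_rowFiltration {c : Finset ι × Finset W →₀ R}
    (h : Finset ι → Module.End R (Finset W →₀ R)) (hc : c ∈ rowFiltration R ι W m) :
    rowMap h c ∈ rowFiltration R ι W m :=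
  rowMap_mem_supported (fun _ _ hs => Finsupp.mem_supported' R _ |>.2 fun _ ha => absurd hs ha) hc

lemma exists_column_section [LinearOrder ι] {s : Finset W}
    (hcone : ∀ τ₀, (τ₀, s) ∈ T → ∃ i, ∀ τ, (τ, s) ∈ T → (insert i τ, s) ∈ T) :
    ∃ h : Module.End R (Finset ι →₀ R),
      (∀ τ, (τ, s) ∈ T →
        h (Finsupp.single τ 1) ∈ Finsupp.supported R R {τ' | (τ', s) ∈ T ∧ #τ' = #τ + 1}) ∧
      ∀ f ∈ Finsupp.supported R R {τ | (τ, s) ∈ T},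
        augBoundary R ι f = 0 → augBoundary R ι (h f) = f := by
  by_cases hs : ∃ τ₀, (τ₀, s) ∈ T
  · obtain ⟨i, hi⟩ := hcone _ hs.choose_spec
    refine ⟨cone R i, fun τ hτ => cone_mem_supported (S := {τ}) ?_ (single_one_mem_supported rfl),
      fun f _ hf => ?_⟩
    · rintro _ rfl hiτ
      exact ⟨hi _ hτ, card_insert_of_notMem hiτ⟩
    · simpa [hf] using augBoundary_cone_add i f
  · push Not at hs
    refine ⟨0, fun τ hτ => absurd hτ (hs τ), fun f hf _ => ?_⟩
    have hf0 : f = 0 := Finsupp.ext fun τ => (Finsupp.mem_supported' R f).1 hf τ (hs τ)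
    simp [hf0]

variable [LinearOrder ι] [LinearOrder W]

lemma sub_totalBoundary_colMap_mem {h : Finset W → Module.End R (Finset ι →₀ R)}
    {c : Finset ι × Finset W →₀ R} (hc : c ∈ colFiltration R ι W (m + 1))
    (hDc : totalBoundary R ι W c ∈ colFiltration R ι W m)
    (hh : ∀ s, #s = m → augBoundary R ι (col s c) = 0 →
      augBoundary R ι (h s (col s c)) = col s c) :
    c - totalBoundary R ι W (colMap h c) ∈ colFiltration R ι W m := by
  have hhc : colMap h c ∈ colFiltration R ι W (m + 1) := colMap_mem_colFiltration h hc
  rw [totalBoundary_apply, ← sub_sub]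
  refine sub_mem (mem_colFiltration_of_succ (sub_mem hc (colMap_mem_colFiltration _ hhc)) ?_)
    (rowBoundary_mem_colFiltration hhc)
  intro s hs
  have hcycle : augBoundary R ι (col s c) = 0 := by
    rw [← col_colBoundary, eq_sub_of_add_eq (totalBoundary_apply c).symm]
    exact col_eq_zero_of_mem_colFiltration (sub_mem hDc (rowBoundary_mem_colFiltration hc)) hs.ge
  rw [map_sub, col_colBoundary, col_colMap, hh s hs hcycle, sub_self]

lemma sub_totalBoundary_rowMap_mem {h : Finset ι → Module.End R (Finset W →₀ R)}
    {c : Finset ι × Finset W →₀ R} (hc : c ∈ rowFiltration R ι W (m + 1))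
    (hDc : totalBoundary R ι W c ∈ rowFiltration R ι W m)
    (hh : ∀ τ, #τ = m → augBoundary R W (row τ c) = 0 →
      (-1 : ℤ) ^ #τ • augBoundary R W (h τ (row τ c)) = row τ c) :
    c - totalBoundary R ι W (rowMap h c) ∈ rowFiltration R ι W m := by
  have hhc : rowMap h c ∈ rowFiltration R ι W (m + 1) := rowMap_mem_rowFiltration h hc
  rw [totalBoundary_apply, add_comm, ← sub_sub]
  refine sub_mem (mem_rowFiltration_of_succ (sub_mem hc (rowMap_mem_rowFiltration _ hhc)) ?_)
    (colBoundary_mem_rowFiltration hhc)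
  intro τ hτ
  have hcycle : (-1 : ℤ) ^ #τ • augBoundary R W (row τ c) = 0 := by
    rw [← row_rowBoundary, eq_sub_of_add_eq' (totalBoundary_apply c).symm]
    exact row_eq_zero_of_mem_rowFiltration (sub_mem hDc (colBoundary_mem_rowFiltration hc)) hτ.ge
  rw [(isUnit_neg_one.pow #τ).smul_eq_zero] at hcycle
  rw [map_sub, row_rowBoundary, row_rowMap, hh τ hτ hcycle, sub_self]

/-- Columns are contracted one at a time, those at the largest faces first. -/
lemma exists_sub_totalBoundary_mem_colFiltration (hT : IsLowerSet T)
    (hcone : ∀ τ₀ s, (τ₀, s) ∈ T → m ≤ #s → ∃ i, ∀ τ, (τ, s) ∈ T → (insert i τ, s) ∈ T)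
    {c : Finset ι × Finset W →₀ R} (hc : c ∈ bichains R T n)
    (hDc : totalBoundary R ι W c ∈ colFiltration R ι W m) :
    ∃ e ∈ bichains R T (n + 1), c - totalBoundary R ι W e ∈ colFiltration R ι W m := by
  have hsection (s : Finset W) : ∃ h : Module.End R (Finset ι →₀ R),
      (∀ τ, (τ, s) ∈ T →
        h (Finsupp.single τ 1) ∈ Finsupp.supported R R {τ' | (τ', s) ∈ T ∧ #τ' = #τ + 1}) ∧
      (m ≤ #s → ∀ f ∈ Finsupp.supported R R {τ | (τ, s) ∈ T},
        augBoundary R ι f = 0 → augBoundary R ι (h f) = f) := by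
    by_cases hs : m ≤ #s
    · obtain ⟨h, hmem, hh⟩ := exists_column_section (R := R) fun τ₀ hτ₀ => hcone τ₀ s hτ₀ hs
      exact ⟨h, hmem, fun _ => hh⟩
    · exact ⟨0, fun τ _ => zero_mem _, fun h => absurd h hs⟩
  choose h hmem hh using hsection
  have hG : ∀ c ∈ bichains R T n, colMap h c ∈ bichains R T (n + 1) := fun c hc => by
    refine colMap_mem_supported (fun τ s hτs => ?_) hc
    refine Finsupp.supported_mono ?_ (hmem s τ hτs.1)
    rintro τ' ⟨hT', hcard⟩
    have : #τ + #s = n := hτs.2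
    exact ⟨hT', by dsimp only; omega⟩
  have hstep (q : ℕ) (c) (hc : c ∈ bichains R T n) (hq : c ∈ colFiltration R ι W (m + q + 1))
      (hDc : totalBoundary R ι W c ∈ colFiltration R ι W m) :
      c - totalBoundary R ι W (colMap h c) ∈ colFiltration R ι W (m + q) :=
    sub_totalBoundary_colMap_mem hq (colFiltration_mono (Nat.le_add_right m q) hDc) fun s hs =>
      hh s (by omega) _ (Finsupp.supported_mono (fun _ hτ => hτ.1) (col_mem_supported hc))
  exact ⟨_, pushDown_spec (C' := bichains R T (n + 1))
    (Fil := fun q => colFiltration R ι W (m + q)) totalBoundary_totalBoundary hG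
    (fun _ => totalBoundary_mem_bichains hT) hstep hc
    (bichains_le_colFiltration (show n < m + (n + 1) by omega) hc) hDc⟩

end ColumnPush

section JoinFaces

variable {ι W : Type*} {Γ : ι → Set (Finset W)}

lemma isLowerSet_insert_empty {S : Set (Finset W)} (hS : IsComplex S) :
    IsLowerSet (insert ∅ S) := by
  rintro s t hts (rfl | hs)
  · exact Or.inl (subset_empty.1 hts)
  · exact t.eq_empty_or_nonempty.imp id fun ht => hS.2 s hs t hts ht

lemma isComplex_iUnion {κ : Sort*} {S : κ → Set (Finset W)} (hS : ∀ k, IsComplex (S k)) :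
    IsComplex (⋃ k, S k) := by
  simp only [IsComplex, Set.mem_iUnion]
  exact ⟨fun s ⟨k, hs⟩ => (hS k).1 s hs, fun s ⟨k, hs⟩ t hts ht => ⟨k, (hS k).2 s hs t hts ht⟩⟩

lemma isComplex_biInter (hΓ : ∀ i, IsComplex (Γ i)) {σ : Finset ι} (hσ : σ.Nonempty) :
    IsComplex (⋂ i ∈ σ, Γ i) := by
  simp only [IsComplex, Set.mem_iInter]
  obtain ⟨i, hi⟩ := hσ
  exact ⟨fun s hs => (hΓ i).1 s (hs i hi), fun s hs t hts ht j hj => (hΓ j).2 s (hs j hj) t hts ht⟩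

lemma isComplex_nerveC (Γ : ι → Set (Finset W)) : IsComplex (nerveC Γ) := by
  refine ⟨fun σ hσ => hσ.1, fun σ ⟨_, s, hs⟩ τ hτσ hτ => ⟨hτ, s, ?_⟩⟩
  rw [Set.mem_iInter₂] at hs ⊢
  exact fun i hi => hs i (hτσ hi)

/-- The subcomplex of the join of `N(Γ)` and `X` that interpolates between the two, restricted to
the subfamily `σ`: a face of the nerve and a face of the union of the subfamily are joined when
the latter lies in every member of the former. The empty face of either factor is allowed. -/
def joinFaces (Γ : ι → Set (Finset W)) (σ : Set ι) : Set (Finset ι × Finset W) :=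
  {p | ↑p.1 ⊆ σ ∧ p.1 ∈ insert ∅ (nerveC Γ) ∧ p.2 ∈ insert ∅ (⋃ i ∈ σ, Γ i) ∧
    ∀ i ∈ p.1, p.2 ∈ insert ∅ (Γ i)}

lemma joinFaces_mono {σ σ' : Set ι} (h : σ ⊆ σ') : joinFaces Γ σ ⊆ joinFaces Γ σ' :=
  fun _ ⟨h₁, h₂, h₃, h₄⟩ =>
    ⟨h₁.trans h, h₂, Set.insert_subset_insert (Set.biUnion_subset_biUnion_left h) h₃, h₄⟩

lemma isLowerSet_joinFaces (hΓ : ∀ i, IsComplex (Γ i)) (σ : Set ι) :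
    IsLowerSet (joinFaces Γ σ) := by
  rintro ⟨τ, s⟩ ⟨τ', s'⟩ ⟨hτ, hs⟩ ⟨h₁, h₂, h₃, h₄⟩
  refine ⟨(coe_subset.2 hτ).trans h₁, isLowerSet_insert_empty (isComplex_nerveC Γ) hτ h₂, ?_,
    fun i hi => isLowerSet_insert_empty (hΓ i) hs (h₄ i (hτ hi))⟩
  exact isLowerSet_insert_empty (isComplex_iUnion fun i => isComplex_iUnion fun _ => hΓ i) hs h₃

lemma empty_mk_mem_joinFaces {σ : Set ι} {s : Finset W} :
    (∅, s) ∈ joinFaces Γ σ ↔ s ∈ insert ∅ (⋃ i ∈ σ, Γ i) := by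
  simp [joinFaces]

lemma mk_empty_mem_joinFaces {σ : Set ι} {τ : Finset ι} :
    (τ, ∅) ∈ joinFaces Γ σ ↔ ↑τ ⊆ σ ∧ τ ∈ insert ∅ (nerveC Γ) := by
  simp [joinFaces]

lemma mk_mem_joinFaces_of_mem_nerveC {σ : Set ι} {τ : Finset ι} (hτ : τ ∈ nerveC Γ)
    {s : Finset W} : (τ, s) ∈ joinFaces Γ σ ↔ ↑τ ⊆ σ ∧ s ∈ insert ∅ (⋂ i ∈ τ, Γ i) := by
  obtain ⟨i, hi⟩ := hτ.1
  rcases eq_or_ne s ∅ with rfl | hs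
  · simp [mk_empty_mem_joinFaces, hτ]
  · simp only [joinFaces, Set.mem_ofPred_eq, Set.mem_insert_iff, hτ, hs, false_or, or_true,
      true_and, Set.mem_iUnion, Set.mem_iInter, exists_prop]
    exact ⟨fun ⟨hτσ, _, h⟩ => ⟨hτσ, h⟩, fun ⟨hτσ, h⟩ => ⟨hτσ, ⟨i, hτσ hi, h i hi⟩, h⟩⟩

variable [DecidableEq ι]

lemma insert_mk_mem_joinFaces (hΓ : ∀ i, IsComplex (Γ i)) {σ : Set ι} {i : ι} (hi : i ∈ σ)
    {τ : Finset ι} {s : Finset W} (hs : s ∈ Γ i) (h : (τ, s) ∈ joinFaces Γ σ) :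
    (insert i τ, s) ∈ joinFaces Γ σ := by
  obtain ⟨hτσ, -, hsσ, hτ⟩ := h
  have hs_mem : ∀ j ∈ insert i τ, s ∈ Γ j :=
    forall_mem_insert _ _ _ |>.2
      ⟨hs, fun j hj => (hτ j hj).resolve_left ((hΓ i).1 s hs).ne_empty⟩
  refine ⟨?_, Or.inr ⟨insert_nonempty i τ, s, Set.mem_iInter₂.2 hs_mem⟩, hsσ,
    fun j hj => Or.inr (hs_mem j hj)⟩
  rw [coe_insert]
  exact Set.insert_subset hi hτσ

lemma insert_mk_empty_mem_joinFaces {σ τ : Finset ι} (hσ : σ ∈ nerveC Γ) {i : ι} (hi : i ∈ σ)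
    (h : (τ, ∅) ∈ joinFaces Γ ↑σ) : (insert i τ, ∅) ∈ joinFaces Γ ↑σ := by
  have hsub : insert i τ ⊆ σ := insert_subset hi (coe_subset.1 (mk_empty_mem_joinFaces.1 h).1)
  exact mk_empty_mem_joinFaces.2 ⟨coe_subset.2 hsub,
    Or.inr ((isComplex_nerveC Γ).2 σ hσ _ hsub (insert_nonempty i τ))⟩

lemma exists_insert_mk_mem_joinFaces (hΓ : ∀ i, IsComplex (Γ i)) {σ : Set ι} {τ₀ : Finset ι}
    {s : Finset W} (h₀ : (τ₀, s) ∈ joinFaces Γ σ) (hs : s.Nonempty) :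
    ∃ i, ∀ τ, (τ, s) ∈ joinFaces Γ σ → (insert i τ, s) ∈ joinFaces Γ σ := by
  obtain ⟨i, hi, hsi⟩ : ∃ i ∈ σ, s ∈ Γ i := by
    simpa using h₀.2.2.1.resolve_left hs.ne_empty
  exact ⟨i, fun τ => insert_mk_mem_joinFaces hΓ hi hsi⟩

end JoinFaces

section JoinChains

variable {R} {ι W : Type*} [LinearOrder ι] [LinearOrder W] {Γ : ι → Set (Finset W)} {n : ℕ}

/-- The columns at nonempty faces are cones. -/
lemma exists_sub_totalBoundary_mem_colFiltration_one (hΓ : ∀ i, IsComplex (Γ i)) (σ : Set ι)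
    {c : Finset ι × Finset W →₀ R} (hc : c ∈ bichains R (joinFaces Γ σ) n)
    (hDc : totalBoundary R ι W c ∈ colFiltration R ι W 1) :
    ∃ e ∈ bichains R (joinFaces Γ σ) (n + 1),
      c - totalBoundary R ι W e ∈ colFiltration R ι W 1 :=
  exists_sub_totalBoundary_mem_colFiltration (isLowerSet_joinFaces hΓ σ)
    (fun _ _ h₀ hs => exists_insert_mk_mem_joinFaces hΓ h₀ (card_pos.1 hs)) hc hDc

lemma exists_totalBoundary_eq_of_mem_nerveC (hΓ : ∀ i, IsComplex (Γ i)) {σ : Finset ι}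
    (hσ : σ ∈ nerveC Γ) {c : Finset ι × Finset W →₀ R}
    (hc : c ∈ bichains R (joinFaces Γ ↑σ) n) (hDc : totalBoundary R ι W c = 0) :
    ∃ e ∈ bichains R (joinFaces Γ ↑σ) (n + 1), totalBoundary R ι W e = c := by
  have hcone (τ₀ : Finset ι) (s : Finset W) (h₀ : (τ₀, s) ∈ joinFaces Γ ↑σ) (_ : 0 ≤ #s) :
      ∃ i, ∀ τ, (τ, s) ∈ joinFaces Γ ↑σ → (insert i τ, s) ∈ joinFaces Γ ↑σ := by
    obtain rfl | hs := s.eq_empty_or_nonempty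
    · obtain ⟨i, hi⟩ := hσ.1
      exact ⟨i, fun τ => insert_mk_empty_mem_joinFaces hσ hi⟩
    · exact exists_insert_mk_mem_joinFaces hΓ h₀ hs
  obtain ⟨e, he, hce⟩ := exists_sub_totalBoundary_mem_colFiltration (isLowerSet_joinFaces hΓ ↑σ)
    hcone hc (by rw [hDc]; exact zero_mem _)
  refine ⟨e, he, (sub_eq_zero.1 (Finsupp.ext fun p => ?_)).symm⟩
  exact (Finsupp.mem_supported' R _).1 hce p (Nat.not_lt_zero _)

end JoinChains

section AugHomology

variable {W : Type*} (S : Set (Finset W)) (n : ℕ)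

/-- The chains of the augmented chain complex of `S` on faces with `n` vertices, that is, of
dimension `n - 1`; the empty face counts as a face of every complex. -/
noncomputable def augChains : Submodule R (Finset W →₀ R) :=
  Finsupp.supported R R {s | s ∈ insert ∅ S ∧ #s = n}

variable [LinearOrder W]

/-- The cycles of the augmented chain complex of `S` on faces with `n` vertices. -/
noncomputable def augCycles : Submodule R (Finset W →₀ R) :=
  augChains R S n ⊓ LinearMap.ker (augBoundary R W)

/-- The boundaries of the augmented chain complex of `S` on faces with `n` vertices. -/
noncomputable def augBoundaries : Submodule R (Finset W →₀ R) :=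
  (augChains R S (n + 1)).map (augBoundary R W)

/-- Vanishing of the homology of the augmented chain complex of `S` at faces with `n` vertices,
that is, of `H̃ₙ₋₁(S)`. -/
def AugExact : Prop :=
  augCycles R S n ≤ augBoundaries R S n

end AugHomology

section Transfer

variable {R} {ι W : Type*} {Γ : ι → Set (Finset W)} {n : ℕ}

lemma ofCol_mem_supported_iff {α β : Type*} {b : β} {S : Set (α × β)} {f : α →₀ R} :
    ofCol b f ∈ Finsupp.supported R R S ↔ f ∈ Finsupp.supported R R {a | (a, b) ∈ S} :=
  ⟨fun h => col_ofCol b f ▸ col_mem_supported h, ofCol_mem_supported⟩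

lemma ofRow_mem_supported_iff {α β : Type*} {a : α} {S : Set (α × β)} {f : β →₀ R} :
    ofRow a f ∈ Finsupp.supported R R S ↔ f ∈ Finsupp.supported R R {b | (a, b) ∈ S} :=
  ⟨fun h => row_ofRow a f ▸ row_mem_supported h, ofRow_mem_supported⟩

lemma ofCol_empty_mem_bichains_iff {T : Set (Finset ι × Finset W)} {z : Finset ι →₀ R} :
    ofCol ∅ z ∈ bichains R T n ↔ z ∈ Finsupp.supported R R {τ | (τ, ∅) ∈ T ∧ #τ = n} :=
  ofCol_mem_supported_iff

lemma ofRow_empty_mem_bichains_iff {σ : Set ι} {y : Finset W →₀ R} :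
    ofRow ∅ y ∈ bichains R (joinFaces Γ σ) n ↔ y ∈ augChains R (⋃ i ∈ σ, Γ i) n := by
  rw [bichains, ofRow_mem_supported_iff]
  simp [augChains, empty_mk_mem_joinFaces]

lemma ofCol_empty_mem_bichains_univ_iff {z : Finset ι →₀ R} :
    ofCol ∅ z ∈ bichains R (joinFaces Γ Set.univ) n ↔ z ∈ augChains R (nerveC Γ) n := by
  rw [ofCol_empty_mem_bichains_iff]
  simp [augChains, mk_empty_mem_joinFaces]

lemma ofRow_empty_row_empty {c : Finset ι × Finset W →₀ R} (hc : c ∈ rowFiltration R ι W 1) :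
    ofRow ∅ (row ∅ c) = c :=
  ofRow_row (Finsupp.supported_mono (fun _ hp => card_eq_zero.1 (Nat.lt_one_iff.1 hp)) hc)

lemma ofCol_empty_col_empty {c : Finset ι × Finset W →₀ R} (hc : c ∈ colFiltration R ι W 1) :
    ofCol ∅ (col ∅ c) = c :=
  ofCol_col (Finsupp.supported_mono (fun _ hp => card_eq_zero.1 (Nat.lt_one_iff.1 hp)) hc)

lemma ofCol_empty_mem_colFiltration (z : Finset ι →₀ R) :
    ofCol ∅ z ∈ colFiltration R ι W 1 :=
  ofCol_mem_supported ((Finsupp.mem_supported' R z).2 fun _ hs => absurd Nat.one_pos hs)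

lemma ofRow_empty_mem_rowFiltration (y : Finset W →₀ R) :
    ofRow ∅ y ∈ rowFiltration R ι W 1 :=
  ofRow_mem_supported ((Finsupp.mem_supported' R y).2 fun _ hs => absurd Nat.one_pos hs)

variable {F : Type*} [Field F] [LinearOrder W]

lemma exists_row_section {K : ℕ} (τ : Finset ι)
    (hinter : τ ∈ nerveC Γ → #τ ≤ K → AugExact F (⋂ i ∈ τ, Γ i) (K - #τ)) :
    ∃ h : Module.End F (Finset W →₀ F),
      (∀ f, h f ∈ Finsupp.supported F F
        {s | τ ∈ nerveC Γ ∧ s ∈ insert ∅ (⋂ i ∈ τ, Γ i) ∧ #τ + #s = K + 1}) ∧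
      (τ ∈ nerveC Γ → ∀ f ∈ Finsupp.supported F F
        {s | s ∈ insert ∅ (⋂ i ∈ τ, Γ i) ∧ #τ + #s = K},
        augBoundary F W f = 0 → (-1 : ℤ) ^ #τ • augBoundary F W (h f) = f) := by
  by_cases hτ : τ ∈ nerveC Γ ∧ #τ ≤ K
  · obtain ⟨hτΓ, hτK⟩ := hτ
    obtain ⟨g, hg_mem, hg⟩ :=
      exists_section_on_map (augBoundary F W) (augChains F (⋂ i ∈ τ, Γ i) (K - #τ + 1))
    refine ⟨(-1 : ℤ) ^ #τ • g, fun f => zsmul_mem (Finsupp.supported_mono ?_ (hg_mem f)) _,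
      fun _ f hf hdf => ?_⟩
    · rintro s ⟨hs, hcard⟩
      exact ⟨hτΓ, hs, by omega⟩
    · have hcycle : f ∈ augCycles F (⋂ i ∈ τ, Γ i) (K - #τ) := by
        refine ⟨Finsupp.supported_mono ?_ hf, hdf⟩
        exact fun s hs => ⟨hs.1, Nat.eq_sub_of_add_eq' hs.2⟩
      rw [LinearMap.smul_apply, map_zsmul, smul_smul, ← mul_pow, hg f (hinter hτΓ hτK hcycle)]
      simp
  · refine ⟨0, fun _ => zero_mem _, fun hτΓ f hf _ => ?_⟩
    have hf0 : f = 0 := Finsupp.ext fun s => (Finsupp.mem_supported' F f).1 hf s fun hs =>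
      hτ ⟨hτΓ, (Nat.le_add_right _ _).trans_eq hs.2⟩
    simp [hf0]

variable [LinearOrder ι]

/-- `B` moves the cycles of the nerve on simplices with `n` vertices, through the join, to the row
of the empty simplex, where they become cycles of the union. The motion is local: a cycle of the
nerve of a subfamily moves inside the join of that subfamily. -/
def IsLocalTransfer (Γ : ι → Set (Finset W)) (n : ℕ)
    (B : (Finset ι →₀ R) →ₗ[R] Finset ι × Finset W →₀ R) : Prop :=
  ∀ (σ : Set ι) (z : Finset ι →₀ R), ofCol ∅ z ∈ bichains R (joinFaces Γ σ) n →
    augBoundary R ι z = 0 → B z ∈ bichains R (joinFaces Γ σ) (n + 1) ∧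
      ofCol ∅ z - totalBoundary R ι W (B z) ∈ rowFiltration R ι W 1

lemma exists_isLocalTransfer_of_inter (hΓ : ∀ i, IsComplex (Γ i)) {K : ℕ}
    (hinter : ∀ τ ∈ nerveC Γ, #τ ≤ K → AugExact F (⋂ i ∈ τ, Γ i) (K - #τ)) :
    ∃ B, IsLocalTransfer (R := F) Γ K B := by
  choose h h_mem hh using fun τ => exists_row_section (F := F) τ (hinter τ)
  have hG (σ : Set ι) (c) (hc : c ∈ bichains F (joinFaces Γ σ) K) :
      rowMap h c ∈ bichains F (joinFaces Γ σ) (K + 1) := by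
    refine rowMap_mem_supported (fun τ s hτs => Finsupp.supported_mono ?_ (h_mem τ _)) hc
    rintro s' ⟨hτ, hs', hcard⟩
    exact ⟨(mk_mem_joinFaces_of_mem_nerveC hτ).2 ⟨hτs.1.1, hs'⟩, hcard⟩
  have hstep (σ : Set ι) (q : ℕ) (c) (hc : c ∈ bichains F (joinFaces Γ σ) K)
      (hq : c ∈ rowFiltration F ι W (q + 1 + 1))
      (hDc : totalBoundary F ι W c ∈ rowFiltration F ι W 1) :
      c - totalBoundary F ι W (rowMap h c) ∈ rowFiltration F ι W (q + 1) := by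
    refine sub_totalBoundary_rowMap_mem hq (rowFiltration_mono (Nat.le_add_left 1 q) hDc)
      fun τ hτ hcycle => ?_
    have hτ_ne : τ ≠ ∅ := card_ne_zero.1 (hτ ▸ q.succ_ne_zero) |>.ne_empty
    by_cases hτΓ : τ ∈ nerveC Γ
    · refine hh τ hτΓ _ (Finsupp.supported_mono ?_ (row_mem_supported hc)) hcycle
      exact fun s hs => ⟨((mk_mem_joinFaces_of_mem_nerveC hτΓ).1 hs.1).2, hs.2⟩
    · have hrow : row τ c = 0 := row_eq_zero_of_mem_supported hc fun s hs =>
        hs.1.2.1.elim hτ_ne hτΓ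
      simp [hrow]
  refine ⟨pushDown (totalBoundary F ι W) (rowMap h) K ∘ₗ ofCol ∅, fun σ z hz hdz => ?_⟩
  exact pushDown_spec (Fil := fun q => rowFiltration F ι W (q + 1)) totalBoundary_totalBoundary
    (hG σ) (fun _ => totalBoundary_mem_bichains (isLowerSet_joinFaces hΓ σ)) (hstep σ) hz
    (bichains_le_rowFiltration K.lt_succ_self hz)
    (by rw [totalBoundary_ofCol_empty, hdz, map_zero]; exact zero_mem _)

lemma row_empty_mem_augCycles_of_mem_rowFiltration {σ : Set ι} {c : Finset ι × Finset W →₀ R}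
    (hc : c ∈ bichains R (joinFaces Γ σ) n) (hcrow : c ∈ rowFiltration R ι W 1)
    (hDc : totalBoundary R ι W c = 0) :
    row ∅ c ∈ augCycles R (⋃ i ∈ σ, Γ i) n := by
  rw [← ofRow_empty_row_empty hcrow] at hc hDc
  rw [totalBoundary_ofRow_empty] at hDc
  exact ⟨ofRow_empty_mem_bichains_iff.1 hc, (ofRow_injective _).eq_iff' (map_zero _) |>.1 hDc⟩

lemma IsLocalTransfer.row_empty_mem_augCycles (hΓ : ∀ i, IsComplex (Γ i))
    {B : (Finset ι →₀ R) →ₗ[R] Finset ι × Finset W →₀ R} (hB : IsLocalTransfer Γ n B)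
    {σ : Set ι} {z : Finset ι →₀ R} (hz : ofCol ∅ z ∈ bichains R (joinFaces Γ σ) n)
    (hdz : augBoundary R ι z = 0) :
    row ∅ (ofCol ∅ z - totalBoundary R ι W (B z)) ∈ augCycles R (⋃ i ∈ σ, Γ i) n := by
  obtain ⟨hBz, hrow⟩ := hB σ z hz hdz
  refine row_empty_mem_augCycles_of_mem_rowFiltration
    (sub_mem hz (totalBoundary_mem_bichains (isLowerSet_joinFaces hΓ σ) hBz)) hrow ?_
  rw [map_sub, totalBoundary_ofCol_empty, hdz, map_zero, totalBoundary_totalBoundary, sub_zero]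

lemma IsLocalTransfer.totalBoundary_add_ofRow_empty
    {B : (Finset ι →₀ R) →ₗ[R] Finset ι × Finset W →₀ R} (hB : IsLocalTransfer Γ n B)
    {σ : Set ι} {z : Finset ι →₀ R} (hz : ofCol ∅ z ∈ bichains R (joinFaces Γ σ) n)
    (hdz : augBoundary R ι z = 0) {u : Finset W →₀ R}
    (hdu : augBoundary R W u = row ∅ (ofCol ∅ z - totalBoundary R ι W (B z))) :
    totalBoundary R ι W (B z + ofRow ∅ u) = ofCol ∅ z := by
  rw [map_add, totalBoundary_ofRow_empty, hdu, ofRow_empty_row_empty (hB σ z hz hdz).2,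
    add_sub_cancel]

lemma IsLocalTransfer.exists_simplex_transfer (hΓ : ∀ i, IsComplex (Γ i))
    {B : (Finset ι →₀ R) →ₗ[R] Finset ι × Finset W →₀ R} (hB : IsLocalTransfer Γ n B)
    {σ : Finset ι} (hσ : σ ∈ nerveC Γ) (hcard : #σ = n + 1)
    (hexact : AugExact R (⋃ i ∈ σ, Γ i) n) :
    ∃ a ∈ bichains R (joinFaces Γ ↑σ) (n + 2),
      ofCol ∅ (Finsupp.single σ 1) - B (augBoundary R ι (Finsupp.single σ 1)) -
        totalBoundary R ι W a ∈ rowFiltration R ι W 1 := by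
  have hσ_mem : ofCol ∅ (Finsupp.single σ (1 : R)) ∈ bichains R (joinFaces Γ ↑σ) (n + 1) :=
    ofCol_empty_mem_bichains_iff.2
      (single_one_mem_supported ⟨mk_empty_mem_joinFaces.2 ⟨subset_rfl, Or.inr hσ⟩, hcard⟩)
  generalize Finsupp.single σ (1 : R) = x at hσ_mem ⊢
  have hDx : totalBoundary R ι W (ofCol ∅ x) = ofCol ∅ (augBoundary R ι x) :=
    totalBoundary_ofCol_empty x
  have hz : ofCol ∅ (augBoundary R ι x) ∈ bichains R (joinFaces Γ ↑σ) n := by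
    rw [← hDx]
    exact totalBoundary_mem_bichains (isLowerSet_joinFaces hΓ ↑σ) hσ_mem
  have hdz := augBoundary_augBoundary x
  obtain ⟨u, hu, hdu⟩ := hexact (hB.row_empty_mem_augCycles hΓ hz hdz)
  have hu_mem : ofRow ∅ u ∈ bichains R (joinFaces Γ ↑σ) (n + 1) :=
    ofRow_empty_mem_bichains_iff.2 hu
  obtain ⟨a, ha, hDa⟩ := exists_totalBoundary_eq_of_mem_nerveC hΓ hσ
    (sub_mem hσ_mem (add_mem (hB σ _ hz hdz).1 hu_mem))
    (by rw [map_sub, hDx, hB.totalBoundary_add_ofRow_empty hz hdz hdu, sub_self])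
  refine ⟨a, ha, ?_⟩
  rw [hDa, ← sub_sub, sub_sub_cancel]
  exact ofRow_empty_mem_rowFiltration u

lemma IsLocalTransfer.exists_succ (hΓ : ∀ i, IsComplex (Γ i))
    {B : (Finset ι →₀ R) →ₗ[R] Finset ι × Finset W →₀ R} (hB : IsLocalTransfer Γ n B)
    (hunion : ∀ σ ∈ nerveC Γ, #σ = n + 1 → AugExact R (⋃ i ∈ σ, Γ i) n) :
    ∃ B' : (Finset ι →₀ R) →ₗ[R] Finset ι × Finset W →₀ R, IsLocalTransfer Γ (n + 1) B' := by
  have hexists (τ : Finset ι) : ∃ a, τ ∈ nerveC Γ → #τ = n + 1 →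
      a ∈ bichains R (joinFaces Γ ↑τ) (n + 2) ∧
        ofCol ∅ (Finsupp.single τ 1) - B (augBoundary R ι (Finsupp.single τ 1)) -
          totalBoundary R ι W a ∈ rowFiltration R ι W 1 := by
    by_cases hτ : τ ∈ nerveC Γ ∧ #τ = n + 1
    · obtain ⟨a, ha⟩ := hB.exists_simplex_transfer hΓ hτ.1 hτ.2 (hunion τ hτ.1 hτ.2)
      exact ⟨a, fun _ _ => ha⟩
    · exact ⟨0, fun h₁ h₂ => (hτ ⟨h₁, h₂⟩).elim⟩
  choose a ha using hexists
  refine ⟨Finsupp.linearCombination R a, fun σ z hz hdz => ?_⟩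
  have hface (τ : Finset ι) (hτ : (τ, ∅) ∈ joinFaces Γ σ ∧ #τ = n + 1) :
      ↑τ ⊆ σ ∧ a τ ∈ bichains R (joinFaces Γ ↑τ) (n + 2) ∧
        ofCol ∅ (Finsupp.single τ 1) - B (augBoundary R ι (Finsupp.single τ 1)) -
          totalBoundary R ι W (a τ) ∈ rowFiltration R ι W 1 := by
    obtain ⟨hτσ, hτΓ⟩ := mk_empty_mem_joinFaces.1 hτ.1
    have hτ_ne : τ ≠ ∅ := (card_pos.1 (hτ.2 ▸ n.succ_pos)).ne_empty
    exact ⟨hτσ, ha τ (hτΓ.resolve_left hτ_ne) hτ.2⟩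
  rw [ofCol_empty_mem_bichains_iff] at hz
  constructor
  · refine map_mem_of_mem_supported _ (fun τ hτ => ?_) hz
    obtain ⟨hτσ, haτ, -⟩ := hface τ hτ
    rw [Finsupp.linearCombination_single, one_smul]
    exact bichains_mono R (joinFaces_mono hτσ) _ haτ
  · have hmem := map_mem_of_mem_supported
      (ofCol ∅ - B ∘ₗ augBoundary R ι - totalBoundary R ι W ∘ₗ Finsupp.linearCombination R a)
      (P := rowFiltration R ι W 1) (fun τ hτ => by simpa using (hface τ hτ).2.2) hz
    simpa [hdz] using hmem

lemma exists_isLocalTransfer_of_inter_of_union (hΓ : ∀ i, IsComplex (Γ i)) {K m : ℕ}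
    (hinter : ∀ τ ∈ nerveC Γ, #τ ≤ K → AugExact F (⋂ i ∈ τ, Γ i) (K - #τ))
    (hunion : ∀ σ ∈ nerveC Γ, K < #σ → #σ ≤ K + m → AugExact F (⋃ i ∈ σ, Γ i) (#σ - 1)) :
    ∃ B, IsLocalTransfer (R := F) Γ (K + m) B := by
  induction m with
  | zero => exact exists_isLocalTransfer_of_inter hΓ hinter
  | succ m ih =>
    obtain ⟨B, hB⟩ := ih fun σ hσ h₁ h₂ => hunion σ hσ h₁ (by omega)
    refine hB.exists_succ hΓ fun σ hσ (hcard : #σ = K + m + 1) => ?_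
    have hexact := hunion σ hσ (by omega) hcard.le
    rwa [hcard, Nat.add_sub_cancel] at hexact

end Transfer

section Comparison

variable {W : Type*} {S : Set (Finset W)} {n : ℕ}

/-- The inclusion of the `n`-chains into the augmented chain complex of the full simplex. -/
noncomputable def toAug [LinearOrder W] (n : ℕ) : Chains R W n →ₗ[R] Finset W →₀ R :=
  Finsupp.lmapDomain R R Subtype.val

/-- The projection of the augmented chain complex of the full simplex to the `n`-chains. -/
noncomputable def ofAug [LinearOrder W] (n : ℕ) : (Finset W →₀ R) →ₗ[R] Chains R W n :=
  Finsupp.lcomapDomain Subtype.val Subtype.val_injective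

variable {R} [LinearOrder W]

lemma toAug_single (s : {s : Finset W // #s = n + 1}) (r : R) :
    toAug R n (Finsupp.single s r) = Finsupp.single ↑s r :=
  Finsupp.mapDomain_single

lemma toAug_injective : Function.Injective (toAug R n : Chains R W n → Finset W →₀ R) :=
  Finsupp.mapDomain_injective Subtype.val_injective

lemma toAug_apply (x : Chains R W n) (s : {s : Finset W // #s = n + 1}) : toAug R n x s = x s :=
  Finsupp.mapDomain_apply Subtype.val_injective x s

lemma toAug_ofAug {f : Finset W →₀ R} (hf : f ∈ augChains R S (n + 1)) :
    toAug R n (ofAug R n f) = f :=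
  Finsupp.mapDomain_comapDomain _ Subtype.val_injective f fun _ hs => ⟨⟨_, (hf hs).2⟩, rfl⟩

lemma toAug_mem_augChains_iff {x : Chains R W n} :
    toAug R n x ∈ augChains R S (n + 1) ↔ x ∈ chainsIn R R W S n := by
  constructor
  · refine fun hx => (Finsupp.mem_supported' R x).2 fun s hs => ?_
    rw [← toAug_apply]
    refine (Finsupp.mem_supported' R _).1 hx s fun ⟨hsS, hcard⟩ => hs (hsS.resolve_left ?_)
    exact (card_pos.1 (n.succ_pos.trans_eq hcard.symm)).ne_empty
  · refine map_mem_of_mem_supported _ fun s hs => ?_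
    rw [toAug_single]
    exact single_one_mem_supported ⟨Or.inr hs, s.2⟩

lemma augBoundary_toAug_succ (x : Chains R W (n + 1)) :
    augBoundary R W (toAug R (n + 1) x) = toAug R n (bdry R R W n x) := by
  suffices augBoundary R W ∘ₗ toAug R (n + 1) = toAug R n ∘ₗ bdry R R W n from
    LinearMap.congr_fun this x
  refine Finsupp.lhom_ext' fun s => LinearMap.ext_ring ?_
  simp only [LinearMap.comp_apply, Finsupp.lsingle_apply, toAug_single, augBoundary_single, bdry,
    Finsupp.lsum_single, LinearMap.sum_apply, LinearMap.smul_apply, map_sum, map_zsmul]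
  exact (sum_attach _ fun v => faceSign v ↑s • Finsupp.single ((s : Finset W).erase v) (1 : R)).symm

lemma augBoundary_toAug_zero (x : Chains R W 0) :
    augBoundary R W (toAug R 0 x) = Finsupp.single ∅ (aug R R W x) := by
  suffices augBoundary R W ∘ₗ toAug R 0 = Finsupp.lsingle ∅ ∘ₗ aug R R W from
    LinearMap.congr_fun this x
  refine Finsupp.lhom_ext' fun ⟨s, hs⟩ => LinearMap.ext_ring ?_
  obtain ⟨v, rfl⟩ := card_eq_one.1 hs
  simp [toAug_single, augBoundary_single, aug, faceSign, filter_singleton]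

lemma augBoundary_toAug_eq_zero_iff {x : Chains R W n} :
    augBoundary R W (toAug R n x) = 0 ↔ x ∈ cycles R R W n := by
  cases n with
  | zero => rw [augBoundary_toAug_zero, Finsupp.single_eq_zero]; rfl
  | succ n => rw [augBoundary_toAug_succ, toAug_injective.eq_iff' (map_zero _)]; rfl

lemma toAug_mem_augCycles_iff {x : Chains R W n} :
    toAug R n x ∈ augCycles R S (n + 1) ↔ x ∈ cyclesIn R R W S n := by
  rw [augCycles, cyclesIn, Submodule.mem_inf, Submodule.mem_inf, toAug_mem_augChains_iff,
    LinearMap.mem_ker, augBoundary_toAug_eq_zero_iff, and_comm]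

lemma toAug_mem_augBoundaries_iff {x : Chains R W n} :
    toAug R n x ∈ augBoundaries R S (n + 1) ↔ x ∈ boundariesIn R R W S n := by
  constructor
  · rintro ⟨y, hy, hyx⟩
    have hyy := toAug_ofAug hy
    rw [← hyy] at hy hyx
    exact ⟨_, toAug_mem_augChains_iff.1 hy,
      toAug_injective (by rw [← augBoundary_toAug_succ, hyx])⟩
  · rintro ⟨y, hy, rfl⟩
    exact ⟨_, toAug_mem_augChains_iff.2 hy, augBoundary_toAug_succ y⟩

lemma subsingleton_redH_iff : Subsingleton (redH R R W S n) ↔ AugExact R S (n + 1) := by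
  rw [Submodule.Quotient.subsingleton_iff, Submodule.comap_subtype_eq_top]
  constructor
  · intro h f hf
    have hff := toAug_ofAug hf.1
    rw [← hff] at hf ⊢
    exact toAug_mem_augBoundaries_iff.2 (h (toAug_mem_augCycles_iff.1 hf))
  · exact fun h x hx => toAug_mem_augBoundaries_iff.1 (h (toAug_mem_augCycles_iff.2 hx))

lemma augExact_zero (hS : IsComplex S) (hne : S.Nonempty) : AugExact R S 0 := by
  obtain ⟨s, hs⟩ := hne
  obtain ⟨v, hv⟩ := hS.1 s hs
  have hvS : {v} ∈ S := hS.2 s hs _ (singleton_subset_iff.2 hv) (singleton_nonempty v)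
  rintro f ⟨hf, hdf⟩
  refine ⟨cone R v f, cone_mem_supported ?_ hf, ?_⟩
  · rintro t ⟨-, ht⟩ -
    rw [card_eq_zero.1 ht]
    exact ⟨Or.inr hvS, card_singleton v⟩
  · simpa [LinearMap.mem_ker.1 hdf] using augBoundary_cone_add v f

lemma redHVanish_natCast : RedHVanish R R W S n ↔ Subsingleton (redH R R W S n) := by
  rw [RedHVanish, if_neg (by omega), if_neg (by omega), Int.toNat_natCast]

lemma augExact_of_redHVanish (hS : IsComplex S) (h : RedHVanish R R W S (n - 1)) :
    AugExact R S n := by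
  cases n with
  | zero => exact augExact_zero hS (by simpa [RedHVanish] using h)
  | succ n => exact subsingleton_redH_iff.1 (redHVanish_natCast.1 (by simpa using h))

lemma redHRank_natCast : redHRank R R W S n = Module.rank R (redH R R W S n) := by
  rw [redHRank, if_neg (by omega), if_neg (by omega), Int.toNat_natCast]

end Comparison

section Rank

variable {R} {ι W : Type*} [LinearOrder ι] [LinearOrder W] {Γ : ι → Set (Finset W)} {n : ℕ}

lemma mem_augBoundaries_of_totalBoundary_eq_ofCol_empty (hΓ : ∀ i, IsComplex (Γ i))
    {z : Finset ι →₀ R} {e : Finset ι × Finset W →₀ R}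
    (he : e ∈ bichains R (joinFaces Γ Set.univ) (n + 1))
    (hDe : totalBoundary R ι W e = ofCol ∅ z) : z ∈ augBoundaries R (nerveC Γ) n := by
  obtain ⟨e', he', hcol⟩ := exists_sub_totalBoundary_mem_colFiltration_one hΓ Set.univ he
    (by rw [hDe]; exact ofCol_empty_mem_colFiltration z)
  have hmem := sub_mem he (totalBoundary_mem_bichains (isLowerSet_joinFaces hΓ Set.univ) he')
  rw [← ofCol_empty_col_empty hcol] at hmem
  refine ⟨_, ofCol_empty_mem_bichains_univ_iff.1 hmem, ofCol_injective (∅ : Finset W) ?_⟩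
  rw [← totalBoundary_ofCol_empty, ofCol_empty_col_empty hcol, map_sub,
    totalBoundary_totalBoundary, sub_zero, hDe]

lemma IsLocalTransfer.mem_augBoundaries_of_row_empty_mem (hΓ : ∀ i, IsComplex (Γ i))
    {B : (Finset ι →₀ R) →ₗ[R] Finset ι × Finset W →₀ R} (hB : IsLocalTransfer Γ n B)
    {z : Finset ι →₀ R} (hz : z ∈ augCycles R (nerveC Γ) n)
    (h : row ∅ (ofCol ∅ z - totalBoundary R ι W (B z)) ∈ augBoundaries R (⋃ i, Γ i) n) :
    z ∈ augBoundaries R (nerveC Γ) n := by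
  obtain ⟨u, hu, hdu⟩ := h
  rw [← Set.biUnion_univ Γ] at hu
  have hz_mem : ofCol ∅ z ∈ bichains R (joinFaces Γ Set.univ) n :=
    ofCol_empty_mem_bichains_univ_iff.2 hz.1
  exact mem_augBoundaries_of_totalBoundary_eq_ofCol_empty hΓ
    (add_mem (hB _ _ hz_mem hz.2).1 (ofRow_empty_mem_bichains_iff.2 hu))
    (hB.totalBoundary_add_ofRow_empty hz_mem hz.2 hdu)

theorem IsLocalTransfer.lift_rank_redH_le {R : Type r} [CommRing R] {ι : Type v} {W : Type w}
    [LinearOrder ι] [LinearOrder W] {Γ : ι → Set (Finset W)} (hΓ : ∀ i, IsComplex (Γ i))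
    {B : (Finset ι →₀ R) →ₗ[R] Finset ι × Finset W →₀ R} (hB : IsLocalTransfer Γ (n + 1) B) :
    Cardinal.lift.{max r w} (Module.rank R (redH R R ι (nerveC Γ) n)) ≤
      Cardinal.lift.{max r v} (Module.rank R (redH R R W (⋃ i, Γ i) n)) := by
  let φ : (Finset ι →₀ R) →ₗ[R] Finset W →₀ R :=
    row ∅ ∘ₗ (ofCol ∅ - totalBoundary R ι W ∘ₗ B)
  have hφ {z : Chains R ι n} (hz : z ∈ cyclesIn R R ι (nerveC Γ) n) :
      φ (toAug R n z) ∈ augCycles R (⋃ i, Γ i) (n + 1) := by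
    have hz' := toAug_mem_augCycles_iff.2 hz
    rw [← Set.biUnion_univ Γ]
    exact hB.row_empty_mem_augCycles hΓ (ofCol_empty_mem_bichains_univ_iff.2 hz'.1) hz'.2
  refine lift_rank_quotient_comap_subtype_le (ofAug R n ∘ₗ φ ∘ₗ toAug R n)
    (fun z hz => toAug_mem_augCycles_iff.1 ?_) fun z hz hbound => ?_
  · rw [LinearMap.comp_apply, LinearMap.comp_apply, toAug_ofAug (hφ hz).1]
    exact hφ hz
  · have hbound' := toAug_mem_augBoundaries_iff.2 hbound
    rw [LinearMap.comp_apply, LinearMap.comp_apply, toAug_ofAug (hφ hz).1] at hbound'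
    exact toAug_mem_augBoundaries_iff.1
      (hB.mem_augBoundaries_of_row_empty_mem hΓ (toAug_mem_augCycles_iff.2 hz) hbound')

end Rank

section Main

variable {ι : Type v} {V : Type w} {Γ : ι → Set (Finset V)}

lemma nerveC_nonempty (h : (⋃ i, Γ i).Nonempty) : (nerveC Γ).Nonempty := by
  obtain ⟨s, hs⟩ := h
  obtain ⟨i, hi⟩ := Set.mem_iUnion.1 hs
  exact ⟨{i}, singleton_nonempty i, s, by simpa using hi⟩

variable [LinearOrder ι] [LinearOrder V]

lemma lift_redHRank_neg_one_le (R : Type r) [CommRing R] :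
    Cardinal.lift.{max r w} (redHRank R R ι (nerveC Γ) (-1)) ≤
      Cardinal.lift.{max r v} (redHRank R R V (⋃ i, Γ i) (-1)) := by
  have hne : (⋃ i, Γ i).Nonempty → (nerveC Γ).Nonempty := nerveC_nonempty
  simp only [redHRank]
  split_ifs <;> simp_all

lemma exists_isLocalTransfer_of_redHVanish {F : Type*} [Field F] (hΓ : ∀ i, IsComplex (Γ i))
    {k : ℤ} {n : ℕ} (hk : -1 ≤ k) (hkn : k ≤ n)
    (hinter : ∀ σ ∈ nerveC Γ, (#σ : ℤ) - 1 ≤ k → RedHVanish F F V (⋂ i ∈ σ, Γ i) (k - #σ))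
    (hunion : ∀ σ ∈ nerveC Γ, k + 1 ≤ (#σ : ℤ) - 1 → (#σ : ℤ) - 1 ≤ n →
      RedHVanish F F V (⋃ i ∈ σ, Γ i) (#σ - 2)) :
    ∃ B, IsLocalTransfer (R := F) Γ (n + 1) B := by
  obtain ⟨K, hK⟩ : ∃ K : ℕ, (K : ℤ) = k + 1 := ⟨_, Int.toNat_of_nonneg (by omega)⟩
  obtain ⟨m, hm⟩ : ∃ m, n + 1 = K + m := Nat.exists_eq_add_of_le (by omega)
  rw [hm]
  refine exists_isLocalTransfer_of_inter_of_union hΓ (fun σ hσ hσK => ?_) fun σ hσ hKσ hσm => ?_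
  · refine augExact_of_redHVanish (isComplex_biInter hΓ hσ.1) ?_
    convert hinter σ hσ (by omega) using 1
    omega
  · refine augExact_of_redHVanish (isComplex_iUnion fun i => isComplex_iUnion fun _ => hΓ i) ?_
    convert hunion σ hσ (by omega) (by omega) using 1
    omega

end Main

end MixedNerve

theorem mixed_nerve_theorem_general {ι : Type v} {V : Type w} [LinearOrder ι] [LinearOrder V]
    (F : Type r) [Field F] (Γ : ι → Set (Finset V)) (hΓ : ∀ i, IsComplex (Γ i))
    (k ℓ : ℤ) (hk : -1 ≤ k) (hkℓ : k ≤ ℓ)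
    (hinter : ∀ σ ∈ nerveC Γ, (#σ : ℤ) - 1 ≤ k → RedHVanish F F V (⋂ i ∈ σ, Γ i) (k - #σ))
    (hunion : ∀ σ ∈ nerveC Γ, k + 1 ≤ (#σ : ℤ) - 1 → (#σ : ℤ) - 1 ≤ ℓ →
      RedHVanish F F V (⋃ i ∈ σ, Γ i) (#σ - 2)) :
    Cardinal.lift.{max r w} (redHRank F F ι (nerveC Γ) ℓ) ≤
      Cardinal.lift.{max r v} (redHRank F F V (⋃ i, Γ i) ℓ) := by
  obtain rfl | hℓ := (hk.trans hkℓ).eq_or_lt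
  · exact MixedNerve.lift_redHRank_neg_one_le F
  · lift ℓ to ℕ using hℓ
    obtain ⟨B, hB⟩ := MixedNerve.exists_isLocalTransfer_of_redHVanish hΓ hk hkℓ hinter hunion
    rw [MixedNerve.redHRank_natCast, MixedNerve.redHRank_natCast]
    exact hB.lift_rank_redH_le hΓ

/-- The mixed nerve theorem: interpolating between intersection and union conditions. -/
theorem mixed_nerve_theorem {V : Type u} [LinearOrder V] [Fintype V]
    (F : Type u) [Field F] {N : ℕ}
    (X : Set (Finset V)) (hX : IsComplex X)
    (Γ : Fin N → Set (Finset V))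
    (hΓ : ∀ i, IsComplex (Γ i) ∧ Γ i ⊆ X)
    (hcover : (⋃ i, Γ i) = X)
    (k ℓ : ℤ) (hk : -1 ≤ k) (hkℓ : k ≤ ℓ) (hℓ : ℓ < N)
    (hinter : ∀ σ ∈ nerveC Γ, (σ.card : ℤ) - 1 ≤ k →
      RedHVanish F F V (⋂ i ∈ σ, Γ i) (k - σ.card))
    (hunion : ∀ σ ∈ nerveC Γ, k + 1 ≤ (σ.card : ℤ) - 1 → (σ.card : ℤ) - 1 ≤ ℓ →
      RedHVanish F F V (⋃ i ∈ σ, Γ i) ((σ.card : ℤ) - 2)) :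
    redHRank F F (Fin N) (nerveC Γ) ℓ ≤ redHRank F F V X ℓ := by
  subst hcover
  simpa only [Cardinal.lift_id] using
    mixed_nerve_theorem_general F Γ (fun i => (hΓ i).1) k ℓ hk hkℓ hinter hunion
end

section
/- Let X be a simplicial complex embedded in ℝ^d and Γ a finite collection of subcomplexes of X. If H̃_{|Γ'|-2}(⋃Γ', F) = 0 for every nonempty subcollection Γ' ⊆ Γ with |Γ'| ≤ d+1, then ⋂Γ ≠ ∅. -/
open Finset

variable (R : Type*) [CommRing R] (A : Type*) [AddCommGroup A] [Module R A]
variable (V : Type*) [LinearOrder V]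

/-!
Suppose that no vertex is common to all the `Γ i`, and choose for each vertex `v` an index `c v`
with `v ∉ Γ (c v)`. If the union of every nonempty subcollection `σ` has vanishing homology in
degree `|σ| - 2`, then the method of acyclic carriers gives a chain map from the full simplex on
the indices that sends `σ` into the union of its members, and another one back that sends a face
`s` into the full simplex on its image `c(s)`. If `s` belongs to a member of `σ`, then `c(s)` does
not contain `σ`; so the composite has zero diagonal coefficient at each `σ ≠ ∅`, and coefficient
one at `∅`. Its Lefschetz number is therefore nonzero, whereas the full simplex is contractible.

Subcollections with more than `d + 1` members satisfy the assumption automatically: consider a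
chain of top-dimensional faces, and a generic ray at the last point where it meets one of them.
That point is interior to a facet, which cannot belong to a second face of the chain, so the chain
is not a cycle.
-/

open Finsupp (single linearCombination supported)

section AugmentedChains

variable {α : Type*} {R V}

/-- Augmented chains on the faces of cardinality `n` (that is, of dimension `n - 1`) belonging to
`S`. The empty face, in cardinality `0`, carries the augmentation. -/
def faceChains (R : Type*) [CommRing R] (S : Set (Finset α)) (n : ℕ) :
    Submodule R (Finset α →₀ R) :=
  supported R R {s | s ∈ S ∧ #s = n}

lemma single_mem_faceChains {S : Set (Finset α)} {s : Finset α} (hs : s ∈ S) (a : R) :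
    single s a ∈ faceChains R S #s :=
  Finsupp.single_mem_supported R a ⟨hs, rfl⟩

lemma faceChains_mono {S T : Set (Finset α)} (hST : S ⊆ T) (n : ℕ) :
    faceChains R S n ≤ faceChains R T n :=
  Finsupp.supported_mono fun _ hs => ⟨hST hs.1, hs.2⟩

lemma map_mem_of_mem_faceChains {M : Type*} [AddCommGroup M] [Module R M] {S : Set (Finset α)}
    {n : ℕ} {P : Submodule R M} (f : (Finset α →₀ R) →ₗ[R] M)
    (hf : ∀ s ∈ S, #s = n → f (single s 1) ∈ P) {z : Finset α →₀ R} (hz : z ∈ faceChains R S n) :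
    f z ∈ P := by
  have hspan : faceChains R S n ≤ P.comap f := by
    rw [faceChains, Finsupp.supported_eq_span_single, Submodule.span_le]
    rintro _ ⟨s, ⟨hs, hcard⟩, rfl⟩
    exact hf s hs hcard
  exact hspan hz

variable (R) in
/-- The incidence sign of the vertex `v` in the face `s`. -/
def vertexSign (v : V) (s : Finset V) : R :=
  (-1) ^ #{w ∈ s | w < v}

lemma vertexSign_mul_self (v : V) (s : Finset V) : vertexSign R v s * vertexSign R v s = 1 := by
  rw [vertexSign, ← mul_pow, neg_one_mul, neg_neg, one_pow]

lemma vertexSign_insert_of_le {v i : V} (s : Finset V) (h : v ≤ i) :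
    vertexSign R v (insert i s) = vertexSign R v s := by
  rw [vertexSign, vertexSign, filter_insert, if_neg h.not_gt]

lemma vertexSign_insert_of_lt {v i : V} {s : Finset V} (hi : i ∉ s) (h : i < v) :
    vertexSign R v (insert i s) = -vertexSign R v s := by
  rw [vertexSign, vertexSign, filter_insert, if_pos h,
    card_insert_of_notMem fun h' => hi (mem_filter.1 h').1, pow_succ, mul_neg_one]

lemma vertexSign_erase_self {v : V} {s : Finset V} (hv : v ∈ s) :
    vertexSign R v (s.erase v) = vertexSign R v s := by
  rw [← vertexSign_insert_of_le (s.erase v) le_rfl, insert_erase hv]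

lemma vertexSign_mul_vertexSign_insert {v i : V} {s : Finset V} (hi : i ∉ s) (hv : v ∈ s) :
    vertexSign R i s * vertexSign R v (insert i s) =
      -(vertexSign R v s * vertexSign R i (s.erase v)) := by
  have hs : insert v (s.erase v) = s := insert_erase hv
  rcases lt_or_gt_of_ne (ne_of_mem_of_not_mem hv hi) with h | h
  · have hsign := vertexSign_insert_of_lt (R := R) (notMem_erase v s) h
    rw [hs] at hsign
    rw [vertexSign_insert_of_le s h.le, hsign]
    ring
  · have hsign := vertexSign_insert_of_le (R := R) (s.erase v) h.le
    rw [hs] at hsign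
    rw [vertexSign_insert_of_lt hi h, hsign]
    ring

variable (R V) in
/-- The boundary operator on augmented chains in all degrees at once. On vertices it is the
augmentation, with values in the multiples of the empty face. -/
noncomputable def augBdry : Module.End R (Finset V →₀ R) :=
  linearCombination R fun s => ∑ v ∈ s, vertexSign R v s • single (s.erase v) 1

lemma augBdry_single (s : Finset V) :
    augBdry R V (single s 1) = ∑ v ∈ s, vertexSign R v s • single (s.erase v) 1 := by
  rw [augBdry, Finsupp.linearCombination_single, one_smul]

variable (R) in
/-- The cone operator with apex `i`, a contracting homotopy of the augmented chains of the full
simplex. -/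
noncomputable def coneOp (i : V) : Module.End R (Finset V →₀ R) :=
  linearCombination R fun s => if i ∈ s then 0 else vertexSign R i s • single (insert i s) 1

lemma coneOp_single_of_mem {i : V} {s : Finset V} (hi : i ∈ s) :
    coneOp R i (single s 1) = 0 := by
  rw [coneOp, Finsupp.linearCombination_single, one_smul, if_pos hi]

lemma coneOp_single_of_notMem {i : V} {s : Finset V} (hi : i ∉ s) :
    coneOp R i (single s 1) = vertexSign R i s • single (insert i s) 1 := by
  rw [coneOp, Finsupp.linearCombination_single, one_smul, if_neg hi]

lemma coneOp_augBdry_single_of_mem {i : V} {s : Finset V} (hi : i ∈ s) :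
    coneOp R i (augBdry R V (single s 1)) = single s 1 := by
  rw [augBdry_single, map_sum, sum_eq_single_of_mem i hi]
  · rw [map_smul, coneOp_single_of_notMem (notMem_erase i s), insert_erase hi,
      vertexSign_erase_self hi, smul_smul, vertexSign_mul_self, one_smul]
  · intro v _ hvi
    rw [map_smul, coneOp_single_of_mem (mem_erase.2 ⟨hvi.symm, hi⟩), smul_zero]

lemma augBdry_coneOp_single_of_notMem {i : V} {s : Finset V} (hi : i ∉ s) :
    augBdry R V (coneOp R i (single s 1)) =
      single s 1 - coneOp R i (augBdry R V (single s 1)) := by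
  have hlink : ∀ v ∈ s, vertexSign R i s • vertexSign R v (insert i s) •
      (single ((insert i s).erase v) 1 : Finset V →₀ R) =
        -coneOp R i (vertexSign R v s • single (s.erase v) 1) := fun v hv => by
    rw [map_smul, coneOp_single_of_notMem fun h => hi (mem_of_mem_erase h),
      erase_insert_of_ne (ne_of_mem_of_not_mem hv hi).symm, smul_smul, smul_smul,
      vertexSign_mul_vertexSign_insert hi hv, neg_smul]
  rw [coneOp_single_of_notMem hi, map_smul, augBdry_single, augBdry_single, sum_insert hi,
    erase_insert hi, vertexSign_insert_of_le s le_rfl, smul_add, smul_smul, vertexSign_mul_self,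
    one_smul, smul_sum, sum_congr rfl hlink, sum_neg_distrib, map_sum, sub_eq_add_neg]

lemma augBdry_mul_coneOp_add_coneOp_mul_augBdry (i : V) :
    augBdry R V * coneOp R i + coneOp R i * augBdry R V = 1 := by
  refine Finsupp.lhom_ext' fun s => LinearMap.ext_ring ?_
  change augBdry R V (coneOp R i (single s 1)) + coneOp R i (augBdry R V (single s 1)) = single s 1
  by_cases hi : i ∈ s
  · rw [coneOp_single_of_mem hi, map_zero, zero_add, coneOp_augBdry_single_of_mem hi]
  · rw [augBdry_coneOp_single_of_notMem hi, sub_add_cancel]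

lemma augBdry_augBdry_coneOp (i : V) (z : Finset V →₀ R) :
    augBdry R V (augBdry R V (coneOp R i z)) = coneOp R i (augBdry R V (augBdry R V z)) := by
  have hhom (y : Finset V →₀ R) : augBdry R V (coneOp R i y) = y - coneOp R i (augBdry R V y) :=
    eq_sub_of_add_eq (LinearMap.congr_fun (augBdry_mul_coneOp_add_coneOp_mul_augBdry i) y)
  rw [hhom z, map_sub, hhom (augBdry R V z), sub_sub_cancel]

/-- A face is, up to sign, a cone over a smaller one, and cones transport `∂∂ = 0`. -/
theorem augBdry_augBdry (z : Finset V →₀ R) : augBdry R V (augBdry R V z) = 0 := by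
  suffices h : augBdry R V ∘ₗ augBdry R V = 0 from LinearMap.congr_fun h z
  refine Finsupp.lhom_ext' fun s => LinearMap.ext_ring ?_
  change augBdry R V (augBdry R V (single s 1)) = 0
  induction s using Finset.induction_on with
  | empty => rw [augBdry_single, sum_empty, map_zero]
  | insert i s hi ih =>
    have hcone : single (insert i s) (1 : R) = vertexSign R i s • coneOp R i (single s 1) := by
      rw [coneOp_single_of_notMem hi, smul_smul, vertexSign_mul_self, one_smul]
    rw [hcone, map_smul, map_smul, augBdry_augBdry_coneOp, ih, map_zero, smul_zero]

lemma augBdry_apply_erase {z : Finset V →₀ R} {s : Finset V} {v : V} (hv : v ∈ s)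
    (hfree : ∀ t ∈ z.support, s.erase v ⊆ t → t = s) :
    augBdry R V z (s.erase v) = z s * vertexSign R v s := by
  have hother : ∀ t ∈ z.support, t ≠ s →
      (z t • ∑ w ∈ t, vertexSign R w t • (single (t.erase w) 1 : Finset V →₀ R)) (s.erase v) =
        0 := by
    intro t ht hts
    rw [Finsupp.smul_apply, Finsupp.finsetSum_apply, sum_eq_zero, smul_zero]
    intro w _
    rw [Finsupp.smul_apply, Finsupp.single_eq_of_ne, smul_zero]
    exact fun h => hts (hfree t ht (h ▸ erase_subset w t))
  rw [augBdry, Finsupp.linearCombination_apply, Finsupp.sum, Finsupp.finsetSum_apply,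
    sum_eq_single s hother, Finsupp.smul_apply, Finsupp.finsetSum_apply, sum_eq_single_of_mem v hv]
  · simp only [Finsupp.smul_apply, Finsupp.single_eq_same, smul_eq_mul, mul_one]
  · intro w hw hwv
    rw [Finsupp.smul_apply, Finsupp.single_eq_of_ne, smul_zero]
    exact fun h => hwv (erase_injOn s hw hv h.symm)
  · intro hs
    rw [Finsupp.notMem_support_iff.1 hs, zero_smul, Finsupp.zero_apply]

variable (R) in
/-- Exactness, at faces of cardinality `n`, of the augmented chains of `S`; when `S` consists of
the faces of a complex and the empty face, this is the vanishing of `H̃ₙ₋₁`. -/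
def IsExactAt (S : Set (Finset V)) (n : ℕ) : Prop :=
  ∀ z ∈ faceChains R S n, augBdry R V z = 0 → ∃ w ∈ faceChains R S (n + 1), augBdry R V w = z

lemma isExactAt_Iic {T : Finset V} (hT : T.Nonempty) (n : ℕ) : IsExactAt R (Set.Iic T) n := by
  obtain ⟨i, hi⟩ := hT
  intro z hz hcycle
  refine ⟨coneOp R i z, map_mem_of_mem_faceChains _ (fun s hs hcard => ?_) hz, ?_⟩
  · by_cases his : i ∈ s
    · rw [coneOp_single_of_mem his]
      exact zero_mem _
    · rw [coneOp_single_of_notMem his, ← hcard, ← card_insert_of_notMem his]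
      exact Submodule.smul_mem _ _ (single_mem_faceChains (insert_subset hi hs) 1)
  · simpa only [LinearMap.add_apply, Module.End.mul_apply, hcycle, map_zero, add_zero,
      Module.End.one_apply] using
      LinearMap.congr_fun (augBdry_mul_coneOp_add_coneOp_mul_augBdry (R := R) i) z

end AugmentedChains

section AcyclicCarriers

variable {R V} {W : Type*} [LinearOrder W]

variable (R) in
/-- A chain-map image of the face `s` inside the acyclic carrier `Φ`, built by recursion on `s`:
any filling of the image of `∂s` by a chain of `Φ s`. It is a junk value where no filling exists. -/
noncomputable def carriedImage (Φ : Finset V → Set (Finset W)) (s : Finset V) : Finset W →₀ R :=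
  if s = ∅ then single ∅ 1 else
    Classical.epsilon fun w => w ∈ faceChains R (Φ s) #s ∧
      augBdry R W w = ∑ v : s, vertexSign R v.1 s • carriedImage Φ (s.erase v)
termination_by #s
decreasing_by exact card_erase_lt_of_mem v.2

variable (R) in
/-- The linear extension of `carriedImage`. -/
noncomputable def carriedMap (Φ : Finset V → Set (Finset W)) :
    (Finset V →₀ R) →ₗ[R] (Finset W →₀ R) :=
  linearCombination R (carriedImage R Φ)

lemma carriedMap_single (Φ : Finset V → Set (Finset W)) (s : Finset V) :
    carriedMap R Φ (single s 1) = carriedImage R Φ s := by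
  rw [carriedMap, Finsupp.linearCombination_single, one_smul]

lemma carriedMap_single_empty (Φ : Finset V → Set (Finset W)) :
    carriedMap R Φ (single ∅ 1) = single ∅ 1 := by
  rw [carriedMap_single, carriedImage, if_pos rfl]

lemma carriedMap_augBdry_single (Φ : Finset V → Set (Finset W)) (s : Finset V) :
    carriedMap R Φ (augBdry R V (single s 1)) =
      ∑ v ∈ s, vertexSign R v s • carriedMap R Φ (single (s.erase v) 1) := by
  simp only [augBdry_single, map_sum, map_smul]

lemma carriedMap_single_of_nonempty (Φ : Finset V → Set (Finset W)) {s : Finset V}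
    (hs : s.Nonempty) :
    carriedMap R Φ (single s 1) = Classical.epsilon fun w => w ∈ faceChains R (Φ s) #s ∧
      augBdry R W w = carriedMap R Φ (augBdry R V (single s 1)) := by
  rw [carriedMap_augBdry_single, carriedMap_single, carriedImage, if_neg hs.ne_empty]
  simp only [carriedMap_single,
    sum_coe_sort s fun v => vertexSign R v s • carriedImage R Φ (s.erase v)]

lemma carriedMap_single_spec {Φ : Finset V → Set (Finset W)} (hmono : Monotone Φ)
    (hempty : ∅ ∈ Φ ∅) (hexact : ∀ s n, #s = n + 1 → IsExactAt R (Φ s) n) (s : Finset V) :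
    carriedMap R Φ (single s 1) ∈ faceChains R (Φ s) #s ∧
      augBdry R W (carriedMap R Φ (single s 1)) =
        carriedMap R Φ (augBdry R V (single s 1)) := by
  induction s using Finset.strongInduction with
  | H s ih =>
    rcases s.eq_empty_or_nonempty with rfl | hs
    · rw [carriedMap_single_empty]
      exact ⟨single_mem_faceChains hempty 1, by simp only [augBdry_single, sum_empty, map_zero]⟩
    obtain ⟨n, hn⟩ : ∃ n, #s = n + 1 := Nat.exists_eq_add_one.2 hs.card_pos
    have hmem : carriedMap R Φ (augBdry R V (single s 1)) ∈ faceChains R (Φ s) n := by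
      rw [carriedMap_augBdry_single]
      refine sum_mem fun v hv => Submodule.smul_mem _ _ ?_
      have hface := (ih _ (erase_ssubset hv)).1
      rw [card_erase_of_mem hv, hn, Nat.add_sub_cancel] at hface
      exact faceChains_mono (hmono (erase_subset v s)) n hface
    have hcycle : augBdry R W (carriedMap R Φ (augBdry R V (single s 1))) = 0 := calc
      _ = ∑ v ∈ s, vertexSign R v s • carriedMap R Φ (augBdry R V (single (s.erase v) 1)) := by
        rw [carriedMap_augBdry_single, map_sum]
        exact sum_congr rfl fun v hv => by rw [map_smul, (ih _ (erase_ssubset hv)).2]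
      _ = carriedMap R Φ (augBdry R V (augBdry R V (single s 1))) := by
        rw [augBdry_single s]
        simp only [map_sum, map_smul]
      _ = 0 := by rw [augBdry_augBdry, map_zero]
    obtain ⟨w, hw, hbdry⟩ := hexact s n hn _ hmem hcycle
    rw [carriedMap_single_of_nonempty Φ hs]
    exact Classical.epsilon_spec (p := fun w => w ∈ faceChains R (Φ s) #s ∧
      augBdry R W w = carriedMap R Φ (augBdry R V (single s 1))) ⟨w, hn ▸ hw, hbdry⟩

theorem exists_chainMap_carriedBy {Φ : Finset V → Set (Finset W)} (hmono : Monotone Φ)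
    (hempty : ∅ ∈ Φ ∅) (hexact : ∀ s n, #s = n + 1 → IsExactAt R (Φ s) n) :
    ∃ f : (Finset V →₀ R) →ₗ[R] (Finset W →₀ R),
      (∀ z, augBdry R W (f z) = f (augBdry R V z)) ∧ f (single ∅ 1) = single ∅ 1 ∧
        ∀ s, f (single s 1) ∈ faceChains R (Φ s) #s := by
  have hspec := carriedMap_single_spec hmono hempty hexact
  refine ⟨carriedMap R Φ, LinearMap.congr_fun (?_ : augBdry R W ∘ₗ carriedMap R Φ =
    carriedMap R Φ ∘ₗ augBdry R V), carriedMap_single_empty Φ, fun s => (hspec s).1⟩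
  exact Finsupp.lhom_ext' fun s => LinearMap.ext_ring (hspec s).2

end AcyclicCarriers

section LefschetzNumber

variable {α : Type*} {R V}

/-- The operator multiplying a face by the parity sign of its cardinality; `trace (parityOp * ψ)`
is the alternating sum of the degreewise traces of `ψ`. -/
noncomputable def parityOp (R α : Type*) [CommRing R] : Module.End R (Finset α →₀ R) :=
  linearCombination R fun s => (-1 : R) ^ #s • single s 1

lemma parityOp_single (s : Finset α) :
    parityOp R α (single s 1) = (-1 : R) ^ #s • single s 1 := by
  rw [parityOp, Finsupp.linearCombination_single, one_smul]

lemma parityOp_apply (z : Finset α →₀ R) (s : Finset α) :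
    parityOp R α z s = (-1) ^ #s * z s := by
  suffices h : Finsupp.lapply s ∘ₗ parityOp R α = (-1 : R) ^ #s • Finsupp.lapply s from
    LinearMap.congr_fun h z
  refine Finsupp.lhom_ext' fun t => LinearMap.ext_ring ?_
  change parityOp R α (single t 1) s = (-1) ^ #s * single t 1 s
  rw [parityOp_single, Finsupp.smul_apply, smul_eq_mul]
  rcases eq_or_ne s t with rfl | hst
  · rfl
  · rw [Finsupp.single_eq_of_ne hst, mul_zero, mul_zero]

lemma parityOp_mul_augBdry : parityOp R V * augBdry R V = -(augBdry R V * parityOp R V) := by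
  refine Finsupp.lhom_ext' fun s => LinearMap.ext_ring ?_
  change parityOp R V (augBdry R V (single s 1)) = -augBdry R V (parityOp R V (single s 1))
  rw [parityOp_single, map_smul, augBdry_single, map_sum, smul_sum, ← sum_neg_distrib]
  refine sum_congr rfl fun v hv => ?_
  rw [map_smul, parityOp_single, ← card_erase_add_one hv, pow_succ, mul_neg_one, neg_smul, neg_neg,
    smul_comm]

/-- Cyclicity of the trace makes the two halves of `P ψ (D H + H D)` cancel. -/
lemma trace_mul_eq_zero_of_contraction {M : Type*} [AddCommGroup M] [Module R M]
    {D H P ψ : Module.End R M} (hcontract : D * H + H * D = 1) (hP : P * D = -(D * P))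
    (hψ : Commute ψ D) : LinearMap.trace R M (P * ψ) = 0 := by
  have hleft : P * ψ * (D * H) = -(D * (P * ψ * H)) := calc
    P * ψ * (D * H) = P * (ψ * D) * H := by noncomm_ring
    _ = P * D * ψ * H := by rw [hψ.eq]; noncomm_ring
    _ = -(D * (P * ψ * H)) := by rw [hP]; noncomm_ring
  rw [← mul_one (P * ψ), ← hcontract, mul_add, hleft, map_add, map_neg, LinearMap.trace_mul_comm,
    mul_assoc _ H D, neg_add_cancel]

/-- The full simplex is contractible, so every chain endomorphism of its augmented chains has
Lefschetz number zero. -/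
theorem sum_neg_one_pow_card_mul_apply_single_eq_zero [Fintype V] [Nonempty V]
    {ψ : Module.End R (Finset V →₀ R)} (hψ : Commute ψ (augBdry R V)) :
    ∑ s, (-1) ^ #s * ψ (single s 1) s = 0 := by
  obtain ⟨i⟩ := ‹Nonempty V›
  rw [← trace_mul_eq_zero_of_contraction (augBdry_mul_coneOp_add_coneOp_mul_augBdry i)
    parityOp_mul_augBdry hψ, LinearMap.trace_eq_matrix_trace R Finsupp.basisSingleOne,
    Matrix.trace]
  refine sum_congr rfl fun s _ => ?_
  rw [Matrix.diag_apply, LinearMap.toMatrix_apply, Finsupp.coe_basisSingleOne,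
    Finsupp.basisSingleOne_repr, LinearEquiv.refl_apply, Module.End.mul_apply, parityOp_apply]

end LefschetzNumber

section HellyFromExactness

variable {R V} {ι : Type*}

lemma exists_singleton_notMem_of_iInter_eq_empty {α : Type*} {Γ : ι → Set (Finset α)}
    (hΓ : ⋂ i, Γ i = ∅) (v : α) : ∃ i, {v} ∉ Γ i := by
  have hv : {v} ∉ ⋂ i, Γ i := hΓ ▸ Set.notMem_empty _
  simpa only [Set.mem_iInter, not_forall] using hv

lemma not_subset_image_of_mem_biUnion {α : Type*} [DecidableEq ι] {Γ : ι → Set (Finset α)}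
    (hΓ : ∀ i, IsComplex (Γ i)) {c : α → ι} (hc : ∀ v, {v} ∉ Γ (c v)) {σ : Finset ι}
    {s : Finset α} (hs : s ∈ ⋃ i ∈ σ, Γ i) : ¬ σ ⊆ s.image c := by
  intro hσ
  obtain ⟨i, hi, hsi⟩ := Set.mem_iUnion₂.1 hs
  obtain ⟨v, hv, rfl⟩ := mem_image.1 (hσ hi)
  exact hc v ((hΓ _).2 s hsi {v} (singleton_subset_iff.2 hv) (singleton_nonempty v))

theorem nonempty_iInter_of_isExactAt [Nontrivial R] [Finite ι] {Γ : ι → Set (Finset V)}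
    (hΓ : ∀ i, IsComplex (Γ i))
    (hexact : ∀ (σ : Finset ι) n, #σ = n + 1 → IsExactAt R (insert ∅ (⋃ i ∈ σ, Γ i)) n) :
    (⋂ i, Γ i).Nonempty := by
  obtain ⟨_, -⟩ := exists_wellFoundedLT ι
  have := Fintype.ofFinite ι
  rcases isEmpty_or_nonempty ι with _ | _
  · exact ⟨∅, Set.mem_iInter.2 isEmptyElim⟩
  by_contra hempty
  choose c hc using
    exists_singleton_notMem_of_iInter_eq_empty (Set.not_nonempty_iff_eq_empty.1 hempty)
  have himage (s : Finset V) (n : ℕ) (hs : #s = n + 1) :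
      IsExactAt R (Set.Iic (s.image c)) n :=
    isExactAt_Iic ((card_pos.1 (hs ▸ n.succ_pos)).image c) n
  obtain ⟨f, hf, hf_empty, hf_mem⟩ := exists_chainMap_carriedBy
    (fun _ _ h => Set.insert_subset_insert (Set.biUnion_subset_biUnion_left h))
    (Set.mem_insert ∅ _) hexact
  obtain ⟨g, hg, hg_empty, hg_mem⟩ := exists_chainMap_carriedBy
    (fun _ _ h => Set.Iic_subset_Iic.2 (image_subset_image h)) (Set.mem_Iic.2 (empty_subset _))
    himage
  have hcomm : Commute (g ∘ₗ f) (augBdry R ι) := LinearMap.ext fun z => by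
    simp only [Module.End.mul_apply, LinearMap.comp_apply, hf, hg]
  have hdiag (σ : Finset ι) (hσ : σ ≠ ∅) : g (f (single σ 1)) σ = 0 := by
    refine map_mem_of_mem_faceChains (P := LinearMap.ker (Finsupp.lapply σ)) g
      (fun s hs hcard => ?_) (hf_mem σ)
    refine Finsupp.notMem_support_iff.1 fun hσs => ?_
    rcases hs with rfl | hs
    · exact hσ (card_eq_zero.1 hcard.symm)
    · exact not_subset_image_of_mem_biUnion hΓ hc hs (hg_mem s hσs).1
  have hlefschetz := sum_neg_one_pow_card_mul_apply_single_eq_zero hcomm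
  rw [Fintype.sum_eq_single ∅ fun σ hσ => by rw [LinearMap.comp_apply, hdiag σ hσ, mul_zero],
    LinearMap.comp_apply, hf_empty, hg_empty, Finsupp.single_eq_same, card_empty, pow_zero,
    mul_one] at hlefschetz
  exact one_ne_zero hlefschetz

end HellyFromExactness

section ReducedHomology

variable {R V} {S : Set (Finset V)}

lemma isComplex_biUnion {ι α : Type*} {Γ : ι → Set (Finset α)} (hΓ : ∀ i, IsComplex (Γ i))
    (σ : Finset ι) : IsComplex (⋃ i ∈ σ, Γ i) := by
  refine ⟨fun s hs => ?_, fun s hs t hts ht => ?_⟩ <;>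
    obtain ⟨i, hi, hsi⟩ := Set.mem_iUnion₂.1 hs
  · exact (hΓ i).1 s hsi
  · exact Set.mem_biUnion hi ((hΓ i).2 s hsi t hts ht)

lemma redHVanish_neg_one_iff : RedHVanish R R V S (-1) ↔ S.Nonempty := by
  rw [RedHVanish, if_neg (lt_irrefl _), if_pos rfl]

lemma redHVanish_natCast_iff (n : ℕ) :
    RedHVanish R R V S n ↔ cyclesIn R R V S n ≤ boundariesIn R R V S n := by
  rw [RedHVanish, if_neg (by lia), if_neg (by lia), Int.toNat_natCast,
    Submodule.Quotient.subsingleton_iff, Submodule.comap_subtype_eq_top]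

variable (R V) in
/-- The inclusion of the ordinary `n`-chains into the augmented chains. -/
noncomputable def toAug (n : ℕ) : Chains R V n →ₗ[R] (Finset V →₀ R) :=
  Finsupp.lmapDomain R R Subtype.val

lemma toAug_single {n : ℕ} (s : {s : Finset V // #s = n + 1}) (a : R) :
    toAug R V n (single s a) = single s.1 a := by
  rw [toAug, Finsupp.lmapDomain_apply, Finsupp.mapDomain_single]

lemma toAug_injective (n : ℕ) : Function.Injective (toAug R V n) :=
  Finsupp.mapDomain_injective Subtype.val_injective

lemma augBdry_toAug_succ {n : ℕ} (z : Chains R V (n + 1)) :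
    augBdry R V (toAug R V (n + 1) z) = toAug R V n (bdry R R V n z) := by
  suffices h : augBdry R V ∘ₗ toAug R V (n + 1) = toAug R V n ∘ₗ bdry R R V n from
    LinearMap.congr_fun h z
  refine Finsupp.lhom_ext' fun s => LinearMap.ext_ring ?_
  change augBdry R V (toAug R V (n + 1) (single s 1)) = toAug R V n (bdry R R V n (single s 1))
  rw [toAug_single, augBdry_single, bdry, Finsupp.lsum_single, LinearMap.sum_apply, map_sum,
    ← sum_attach]
  refine sum_congr rfl fun v _ => ?_
  rw [LinearMap.smul_apply, map_zsmul, Finsupp.lsingle_apply, toAug_single, vertexSign,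
    ← Int.cast_smul_eq_zsmul R]
  push_cast
  rfl

lemma augBdry_toAug_zero (z : Chains R V 0) :
    augBdry R V (toAug R V 0 z) = single ∅ (aug R R V z) := by
  suffices h : augBdry R V ∘ₗ toAug R V 0 = Finsupp.lsingle ∅ ∘ₗ aug R R V from
    LinearMap.congr_fun h z
  refine Finsupp.lhom_ext' fun ⟨s, hs⟩ => LinearMap.ext_ring ?_
  obtain ⟨v, rfl⟩ := card_eq_one.1 hs
  change augBdry R V (toAug R V 0 (single ⟨{v}, hs⟩ 1)) =
    single ∅ (aug R R V (single ⟨{v}, hs⟩ 1))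
  rw [toAug_single, augBdry_single, sum_singleton, vertexSign, aug, Finsupp.lsum_single,
    filter_singleton, if_neg (lt_irrefl v), card_empty, pow_zero, one_smul, erase_singleton,
    LinearMap.id_apply]

lemma mem_cycles_of_augBdry_toAug_eq_zero {n : ℕ} {z : Chains R V n}
    (hz : augBdry R V (toAug R V n z) = 0) : z ∈ cycles R R V n := by
  cases n with
  | zero => exact Finsupp.single_eq_zero.1 (augBdry_toAug_zero z ▸ hz)
  | succ n =>
    rw [augBdry_toAug_succ] at hz
    exact (map_eq_zero_iff _ (toAug_injective n)).1 hz

lemma map_toAug_chainsIn (n : ℕ) :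
    (chainsIn R R V S n).map (toAug R V n) = faceChains R (insert ∅ S) (n + 1) := by
  rw [chainsIn, toAug, Finsupp.lmapDomain_supported, faceChains]
  congr 1
  ext s
  constructor
  · rintro ⟨t, ht, rfl⟩
    exact ⟨Or.inr ht, t.2⟩
  · rintro ⟨rfl | hs, hcard⟩
    · cases hcard
    · exact ⟨⟨s, hcard⟩, hs, rfl⟩

lemma isExactAt_zero_of_nonempty (hS : IsComplex S) (hne : S.Nonempty) :
    IsExactAt R (insert ∅ S) 0 := by
  obtain ⟨s, hs⟩ := hne
  obtain ⟨v, hv⟩ := hS.1 s hs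
  have hvS : {v} ∈ S := hS.2 s hs {v} (singleton_subset_iff.2 hv) (singleton_nonempty v)
  intro z hz _
  have hz_eq : z = single ∅ (z ∅) := by
    refine Finsupp.eq_single_iff.2 ⟨fun t ht => ?_, rfl⟩
    exact mem_singleton.2 (card_eq_zero.1 (hz ht).2)
  refine ⟨z ∅ • single {v} 1, Submodule.smul_mem _ _
    (single_mem_faceChains (Or.inr hvS) 1), ?_⟩
  rw [map_smul, augBdry_single, sum_singleton, vertexSign, filter_singleton,
    if_neg (lt_irrefl v), card_empty, pow_zero, one_smul, erase_singleton, Finsupp.smul_single_one,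
    ← hz_eq]

lemma isExactAt_succ_of_cyclesIn_le {n : ℕ} (h : cyclesIn R R V S n ≤ boundariesIn R R V S n) :
    IsExactAt R (insert ∅ S) (n + 1) := by
  intro z hz hcycle
  rw [← map_toAug_chainsIn] at hz
  obtain ⟨y, hy, rfl⟩ := hz
  obtain ⟨w, hw, rfl⟩ := h ⟨mem_cycles_of_augBdry_toAug_eq_zero hcycle, hy⟩
  refine ⟨toAug R V (n + 1) w, ?_, augBdry_toAug_succ w⟩
  rw [← map_toAug_chainsIn]
  exact Submodule.mem_map_of_mem hw

theorem isExactAt_of_redHVanish (hS : IsComplex S) {n : ℕ}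
    (h : RedHVanish R R V S ((n : ℤ) - 1)) : IsExactAt R (insert ∅ S) n := by
  cases n with
  | zero => exact isExactAt_zero_of_nonempty hS (redHVanish_neg_one_iff.1 h)
  | succ n =>
    rw [Nat.cast_succ, add_sub_cancel_right, redHVanish_natCast_iff] at h
    exact isExactAt_succ_of_cyclesIn_le h

end ReducedHomology

section FreeFacet

open Module (finrank)

variable {𝕜 E : Type*} [Field 𝕜] [AddCommGroup E] [Module 𝕜 E]

lemma range_eq_coe {s : Finset E} {b : AffineBasis s 𝕜 E} (hb : ⇑b = Subtype.val) :
    Set.range b = s := by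
  rw [hb, Subtype.range_coe]

section MaximalFaces

variable [PartialOrder 𝕜] [FiniteDimensional 𝕜 E] {X : Geometry.SimplicialComplex 𝕜 E}
  {s : Finset E}

lemma card_le_finrank_add_one_of_mem_faces (hs : s ∈ X.faces) : #s ≤ finrank 𝕜 E + 1 := by
  have hcard := (X.indep hs).card_le_finrank_succ
  rw [Fintype.card_coe] at hcard
  exact hcard.trans (Nat.succ_le_succ (Submodule.finrank_le _))

lemma exists_affineBasis_of_mem_faces (hs : s ∈ X.faces) (hcard : #s = finrank 𝕜 E + 1) :
    ∃ b : AffineBasis s 𝕜 E, ⇑b = Subtype.val := by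
  refine ⟨⟨_, X.indep hs, ?_⟩, rfl⟩
  rwa [(X.indep hs).affineSpan_eq_top_iff_card_eq_finrank_add_one, Fintype.card_coe]

end MaximalFaces

lemma affineMap_add_smul_apply (f : E →ᵃ[𝕜] 𝕜) (x u : E) (t : 𝕜) :
    f (x + t • u) = f x + t * f.linear u := by
  rw [add_comm, ← vadd_eq_add, f.map_vadd, map_smul, vadd_eq_add, smul_eq_mul, add_comm]

section Genericity

variable {ι : Type*} (b : AffineBasis ι 𝕜 E)

lemma coord_linear_sub_apply (i : ι) (x y : E) :
    (b.coord i).linear (x - y) = b.coord i x - b.coord i y := by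
  rw [← vsub_eq_sub, AffineMap.linearMap_vsub, vsub_eq_sub]

/-- Eliminating the parameter `t` between the equations of two facets gives a linear equation on
the direction `u`. -/
lemma exists_ne_zero_forall_apply_eq_zero_of_coord_eq_zero {i j : ι} (hij : i ≠ j) (x : E) :
    ∃ φ : E →ₗ[𝕜] 𝕜, φ ≠ 0 ∧ ∀ (u : E) (t : 𝕜), t ≠ 0 → b.coord i (x + t • u) = 0 →
      b.coord j (x + t • u) = 0 → φ u = 0 := by
  by_cases hi : b.coord i x = 0
  · refine ⟨(b.coord i).linear, fun h => ?_, fun u t ht hiu _ => ?_⟩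
    · have heval := LinearMap.congr_fun h (b i - b j)
      rw [coord_linear_sub_apply, b.coord_apply_eq, b.coord_apply_ne hij, sub_zero] at heval
      exact one_ne_zero heval
    · rw [affineMap_add_smul_apply, hi, zero_add] at hiu
      exact (mul_eq_zero.1 hiu).resolve_left ht
  · refine ⟨b.coord j x • (b.coord i).linear - b.coord i x • (b.coord j).linear, fun h => ?_,
      fun u t ht hiu hju => ?_⟩
    · have heval := LinearMap.congr_fun h (b j - x)
      simp only [LinearMap.sub_apply, LinearMap.smul_apply, coord_linear_sub_apply,
        b.coord_apply_eq, b.coord_apply_ne hij, smul_eq_mul, LinearMap.zero_apply] at heval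
      exact hi (by linear_combination -heval)
    · rw [affineMap_add_smul_apply] at hiu hju
      refine (mul_eq_zero.1 ?_).resolve_left ht
      simp only [LinearMap.sub_apply, LinearMap.smul_apply, smul_eq_mul]
      linear_combination b.coord j x * hiu - b.coord i x * hju

end Genericity

variable [LinearOrder 𝕜] [IsStrictOrderedRing 𝕜]

lemma exists_ne_zero_forall_apply_ne_zero [Nontrivial E] {ι : Type*} [Finite ι]
    {φ : ι → E →ₗ[𝕜] 𝕜} (hφ : ∀ i, φ i ≠ 0) : ∃ u ≠ 0, ∀ i, φ i u ≠ 0 := by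
  by_contra! h
  obtain ⟨_ | i, hi⟩ := Subspace.exists_eq_top_of_iUnion_eq_univ
    (p := fun o : Option ι => o.elim ⊥ fun i => LinearMap.ker (φ i)) <| by
      refine Set.eq_univ_of_forall fun u => Set.mem_iUnion.2 ?_
      rcases eq_or_ne u 0 with hu | hu
      · exact ⟨none, hu⟩
      · obtain ⟨i, hi⟩ := h u hu
        exact ⟨some i, hi⟩
  · exact bot_ne_top hi
  · exact hφ i (LinearMap.ker_eq_top.1 hi)

lemma exists_generic_direction [Nontrivial E] {κ : Type*} [Finite κ] {ι : κ → Type*}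
    [∀ k, Finite (ι k)] (b : ∀ k, AffineBasis (ι k) 𝕜 E) (x : E) :
    ∃ u ≠ 0, ∀ (k : κ) (i j : ι k) (t : 𝕜), i ≠ j → t ≠ 0 → (b k).coord i (x + t • u) = 0 →
      (b k).coord j (x + t • u) ≠ 0 := by
  choose φ hφ_ne hφ using fun p : Σ k, {q : ι k × ι k // q.1 ≠ q.2} =>
    exists_ne_zero_forall_apply_eq_zero_of_coord_eq_zero (b p.1) p.2.2 x
  obtain ⟨u, hu, hgen⟩ := exists_ne_zero_forall_apply_ne_zero hφ_ne
  exact ⟨u, hu, fun k i j t hij ht hi hj =>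
    hgen ⟨k, ⟨(i, j), hij⟩⟩ (hφ ⟨k, ⟨(i, j), hij⟩⟩ u t ht hi hj)⟩

section Exit

variable {ι : Type*} (b : AffineBasis ι 𝕜 E)

lemma mem_convexHull_range_iff_coord_nonneg {x : E} :
    x ∈ convexHull 𝕜 (Set.range b) ↔ ∀ i, 0 ≤ b.coord i x := by
  rw [b.convexHull_eq_nonneg_coord, Set.mem_ofPred_eq]

/-- The ray from the point `y` of the simplex `b` in the direction `u` leaves the simplex at `y`,
through the relative interior of the facet opposite to the vertex `i`. That `y` lies in the
simplex is not part of the definition. -/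
def ExitsThrough (y u : E) (i : ι) : Prop :=
  b.coord i y = 0 ∧ (b.coord i).linear u < 0 ∧ ∀ j ≠ i, b.coord j y ≠ 0

lemma ExitsThrough.coord_sub_smul_pos {b : AffineBasis ι 𝕜 E} {y u : E} {i : ι}
    (h : ExitsThrough b y u i) {ε : 𝕜} (hε : 0 < ε) : 0 < b.coord i (y - ε • u) := by
  rw [sub_eq_add_neg, ← neg_smul, affineMap_add_smul_apply, h.1, zero_add]
  exact mul_pos_of_neg_of_neg (neg_neg_of_pos hε) h.2.1

variable [Finite ι]

lemma exists_coord_linear_neg {u : E} (hu : u ≠ 0) : ∃ i, (b.coord i).linear u < 0 := by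
  have := Fintype.ofFinite ι
  have hsub (i : ι) : (b.coord i).linear u = b.coord i u - b.coord i 0 := by
    rw [← coord_linear_sub_apply, sub_zero]
  have hsum : ∑ i, (b.coord i).linear u = 0 := by
    simp only [hsub, sum_sub_distrib, b.sum_coord_apply_eq_one, sub_self]
  by_contra! hnonneg
  refine hu (b.ext_elem fun i => sub_eq_zero.1 ?_)
  rw [← hsub]
  exact (sum_eq_zero_iff_of_nonneg fun i _ => hnonneg i).1 hsum i (mem_univ i)

/-- Where the line leaves the simplex: `T` is the least parameter at which a decreasing barycentric
coordinate vanishes. -/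
lemma exists_exit_parameter (x : E) {u : E} (hu : u ≠ 0) :
    ∃ (T : 𝕜) (i : ι), b.coord i (x + T • u) = 0 ∧ (b.coord i).linear u < 0 ∧
      ∀ t, x + t • u ∈ convexHull 𝕜 (Set.range b) →
        t ≤ T ∧ x + T • u ∈ convexHull 𝕜 (Set.range b) := by
  obtain ⟨i₀, hi₀⟩ := exists_coord_linear_neg b hu
  have : Nonempty {i // (b.coord i).linear u < 0} := ⟨⟨i₀, hi₀⟩⟩
  obtain ⟨⟨i, hi⟩, hmin⟩ := Finite.exists_min fun j : {j // (b.coord j).linear u < 0} =>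
    b.coord j x / -(b.coord j).linear u
  have hle {t : 𝕜} (j : ι) (hj : (b.coord j).linear u < 0) :
      0 ≤ b.coord j (x + t • u) ↔ t ≤ b.coord j x / -(b.coord j).linear u := by
    rw [le_div_iff₀ (neg_pos.2 hj), affineMap_add_smul_apply, mul_neg, neg_le_iff_add_nonneg]
  refine ⟨b.coord i x / -(b.coord i).linear u, i, ?_, hi, fun t ht => ?_⟩
  · rw [affineMap_add_smul_apply, div_neg, neg_mul, div_mul_cancel₀ _ hi.ne, add_neg_cancel]
  rw [mem_convexHull_range_iff_coord_nonneg] at ht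
  have htT := (hle i hi).1 (ht i)
  refine ⟨htT, (mem_convexHull_range_iff_coord_nonneg b).2 fun j => ?_⟩
  rcases lt_or_ge ((b.coord j).linear u) 0 with hj | hj
  · exact (hle j hj).2 (hmin ⟨j, hj⟩)
  · have hjt := ht j
    rw [affineMap_add_smul_apply] at hjt ⊢
    exact hjt.trans (by gcongr)

variable {b}

lemma ExitsThrough.exists_forall_sub_smul_mem {y u : E} {i : ι} (h : ExitsThrough b y u i)
    (hy : y ∈ convexHull 𝕜 (Set.range b)) :
    ∃ δ > (0 : 𝕜), ∀ ε ∈ Set.Icc 0 δ, y - ε • u ∈ convexHull 𝕜 (Set.range b) := by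
  obtain ⟨-, hi, hne⟩ := h
  have hu : u ≠ 0 := fun h => hi.ne (by rw [h, map_zero])
  obtain ⟨δ, j, hj, hneg, hδ⟩ := exists_exit_parameter b y (neg_ne_zero.2 hu)
  obtain ⟨hδ_nonneg, hδ_mem⟩ := hδ 0 (by rwa [zero_smul, add_zero])
  rw [map_neg, neg_lt_zero] at hneg
  have hδ_ne : δ ≠ 0 := by
    rintro rfl
    rw [zero_smul, add_zero] at hj
    exact hne j (fun h => hi.not_gt (h ▸ hneg)) hj
  refine ⟨δ, hδ_nonneg.lt_of_ne' hδ_ne, fun ε hε => ?_⟩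
  have hseg := (convex_convexHull 𝕜 _).add_smul_mem hy hδ_mem (t := ε / δ)
    ⟨div_nonneg hε.1 hδ_nonneg, div_le_one_of_le₀ hε.2 hδ_nonneg⟩
  rwa [smul_smul, div_mul_cancel₀ _ hδ_ne, smul_neg, ← sub_eq_add_neg] at hseg

lemma convexHull_image_compl_singleton (i : ι) :
    convexHull 𝕜 (b '' {i}ᶜ) = convexHull 𝕜 (Set.range b) ∩ b.coord i ⁻¹' {0} := by
  have := Fintype.ofFinite ι
  classical
  refine Set.Subset.antisymm (convexHull_min ?_ ?_) ?_
  · rintro _ ⟨j, hj, rfl⟩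
    exact ⟨subset_convexHull 𝕜 _ (Set.mem_range_self j), b.coord_apply_ne (Ne.symm hj)⟩
  · exact (convex_convexHull 𝕜 _).inter ((convex_singleton 0).affine_preimage _)
  · rintro x ⟨hx, hi : b.coord i x = 0⟩
    have hsum := b.sum_coord_apply_eq_one x
    have hcomb := b.linear_combination_coord_eq_self x
    rw [← add_sum_erase _ _ (mem_univ i), hi] at hsum hcomb
    rw [zero_add] at hsum
    rw [zero_smul, zero_add] at hcomb
    rw [← hcomb]
    exact (convex_convexHull 𝕜 _).sum_mem
      (fun j _ => (mem_convexHull_range_iff_coord_nonneg b).1 hx j) hsum fun j hj =>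
        subset_convexHull 𝕜 _ ⟨j, ne_of_mem_erase hj, rfl⟩

end Exit

/-- Shoot a generic ray from the barycentre of one of the simplices and stop at the last point of
their union. -/
lemma exists_forall_exitsThrough [Nontrivial E] {κ : Type*} [Finite κ] [Nonempty κ]
    {ι : κ → Type*} [∀ k, Finite (ι k)] (b : ∀ k, AffineBasis (ι k) 𝕜 E) :
    ∃ y u, (∃ k, y ∈ convexHull 𝕜 (Set.range (b k))) ∧
      ∀ k, y ∈ convexHull 𝕜 (Set.range (b k)) → ∃ i, ExitsThrough (b k) y u i := by
  obtain ⟨k₀⟩ := ‹Nonempty κ›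
  obtain ⟨x, hx⟩ : ∃ x, ∀ i, 0 < (b k₀).coord i x := by
    have := Fintype.ofFinite (ι k₀)
    refine ⟨univ.centroid 𝕜 (b k₀), fun i => ?_⟩
    rw [(b k₀).coord_apply_centroid (mem_univ i), inv_pos, Nat.cast_pos]
    exact card_pos.2 ⟨i, mem_univ i⟩
  obtain ⟨u, hu, hgen⟩ := exists_generic_direction b x
  choose T i hzero hneg hexit using fun k => exists_exit_parameter (b k) x hu
  let H := {k // ∃ t : 𝕜, x + t • u ∈ convexHull 𝕜 (Set.range (b k))}
  have hk₀ : x + (0 : 𝕜) • u ∈ convexHull 𝕜 (Set.range (b k₀)) := by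
    rw [zero_smul, add_zero, mem_convexHull_range_iff_coord_nonneg]
    exact fun i => (hx i).le
  have : Nonempty H := ⟨⟨k₀, 0, hk₀⟩⟩
  obtain ⟨⟨m, t, ht⟩, hmax⟩ := Finite.exists_max fun k : H => T k
  have hTm : 0 < T m := calc
    0 < T k₀ := (hexit k₀ 0 hk₀).1.lt_of_ne fun h => by
      have hzero₀ := hzero k₀
      rw [← h, zero_smul, add_zero] at hzero₀
      exact (hx _).ne' hzero₀
    _ ≤ T m := hmax ⟨k₀, 0, hk₀⟩
  refine ⟨x + T m • u, u, ⟨m, (hexit m t ht).2⟩, fun k hk => ⟨i k, ?_⟩⟩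
  have hTk : T k = T m := (hmax ⟨k, T m, hk⟩).antisymm (hexit k (T m) hk).1
  have hik : (b k).coord (i k) (x + T m • u) = 0 := hTk ▸ hzero k
  exact ⟨hik, hneg k, fun j hj => hgen k (i k) j (T m) hj.symm hTm.ne' hik⟩

section SimplicialComplex

variable {X : Geometry.SimplicialComplex 𝕜 E} {s t : Finset E} {b : AffineBasis s 𝕜 E}
  {c : AffineBasis t 𝕜 E}

lemma mem_convexHull_erase_iff [DecidableEq E] (hb : ⇑b = Subtype.val) (v : s) {x : E} :
    x ∈ convexHull 𝕜 (s.erase v : Set E) ↔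
      x ∈ convexHull 𝕜 (s : Set E) ∧ b.coord v x = 0 := by
  have himage : b '' {v}ᶜ = (s.erase v : Set E) := by
    rw [hb, Set.image_val_compl, coe_erase]
    simp only [SetLike.coe_sort_coe, Set.image_singleton]
  rw [← himage, convexHull_image_compl_singleton, range_eq_coe hb]
  rfl

/-- Just before the ray leaves both simplices at `y`, it is in both, hence in the convex hull of
their common vertices; there the barycentric coordinate at `v` is positive. -/
lemma mem_of_exitsThrough (hs : s ∈ X.faces) (ht : t ∈ X.faces) (hb : ⇑b = Subtype.val)
    (hc : ⇑c = Subtype.val) {y u : E} {v : s} {w : t} (hv : ExitsThrough b y u v)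
    (hw : ExitsThrough c y u w) (hys : y ∈ convexHull 𝕜 (s : Set E))
    (hyt : y ∈ convexHull 𝕜 (t : Set E)) : (v : E) ∈ t := by
  classical
  rw [← range_eq_coe hb] at hys
  rw [← range_eq_coe hc] at hyt
  obtain ⟨δ₁, hδ₁, hmem₁⟩ := hv.exists_forall_sub_smul_mem hys
  obtain ⟨δ₂, hδ₂, hmem₂⟩ := hw.exists_forall_sub_smul_mem hyt
  have hε : 0 < min δ₁ δ₂ := lt_min hδ₁ hδ₂
  have hys' := hmem₁ _ ⟨hε.le, min_le_left _ _⟩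
  have hyt' := hmem₂ _ ⟨hε.le, min_le_right _ _⟩
  rw [range_eq_coe hb] at hys'
  rw [range_eq_coe hc] at hyt'
  by_contra hvt
  have hsub : (s ∩ t : Set E) ⊆ s.erase v := fun z hz =>
    mem_coe.2 (mem_erase.2 ⟨ne_of_mem_of_not_mem hz.2 hvt, hz.1⟩)
  have hface := convexHull_mono hsub (X.inter_subset_convexHull hs ht ⟨hys', hyt'⟩)
  exact (hv.coord_sub_smul_pos hε).ne' ((mem_convexHull_erase_iff hb v).1 hface).2

variable [FiniteDimensional 𝕜 E] [DecidableEq E]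

theorem exists_free_facet {S : Finset (Finset E)} (hne : S.Nonempty) (hS : ↑S ⊆ X.faces)
    (hcard : ∀ s ∈ S, #s = finrank 𝕜 E + 1) :
    ∃ s ∈ S, ∃ v ∈ s, ∀ t ∈ S, s.erase v ⊆ t → t = s := by
  rcases subsingleton_or_nontrivial E with _ | _
  · obtain ⟨s, hs⟩ := hne
    obtain ⟨v, hv⟩ := card_pos.1 (by rw [hcard s hs]; exact Nat.succ_pos _)
    exact ⟨s, hs, v, hv, fun t ht _ => eq_of_subset_of_card_le
      (fun x _ => Subsingleton.elim v x ▸ hv) (by rw [hcard s hs, hcard t ht])⟩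
  have := hne.to_subtype
  choose b hb using fun s : S => exists_affineBasis_of_mem_faces (hS s.2) (hcard s s.2)
  obtain ⟨y, u, ⟨s, hys⟩, hexit⟩ := exists_forall_exitsThrough b
  obtain ⟨v, hv⟩ := hexit s hys
  rw [range_eq_coe (hb s)] at hys
  refine ⟨s, s.2, v, v.2, fun t ht hst => ?_⟩
  have hyt : y ∈ convexHull 𝕜 (t : Set E) :=
    convexHull_mono (coe_subset.2 hst) ((mem_convexHull_erase_iff (hb s) v).2 ⟨hys, hv.1⟩)
  obtain ⟨w, hw⟩ := hexit ⟨t, ht⟩ (by rwa [range_eq_coe (hb ⟨t, ht⟩)])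
  have hvt := mem_of_exitsThrough (hS s.2) (hS ht) (hb s) (hb ⟨t, ht⟩) hv hw hys hyt
  have hsub : s.1 ⊆ t := insert_erase v.2 ▸ insert_subset hvt hst
  exact (eq_of_subset_of_card_le hsub (by rw [hcard s s.2, hcard t ht])).symm

end SimplicialComplex

end FreeFacet

section Helly

open Module (finrank)

variable {R} {𝕜 E : Type*} [Field 𝕜] [LinearOrder 𝕜] [IsStrictOrderedRing 𝕜] [AddCommGroup E]
  [Module 𝕜 E] [FiniteDimensional 𝕜 E] [LinearOrder E]

/-- The boundary determines, up to sign, the coefficient of a chain on a face with a free facet. -/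
lemma eq_zero_of_augBdry_eq_zero {X : Geometry.SimplicialComplex 𝕜 E} {z : Finset E →₀ R}
    (hX : ↑z.support ⊆ X.faces) (hcard : ∀ s ∈ z.support, #s = finrank 𝕜 E + 1)
    (hz : augBdry R E z = 0) : z = 0 := by
  by_contra hne
  obtain ⟨s, hs, v, hv, hfree⟩ := exists_free_facet (Finsupp.support_nonempty_iff.2 hne) hX hcard
  have hcoeff := augBdry_apply_erase hv hfree
  rw [hz, Finsupp.zero_apply] at hcoeff
  refine Finsupp.mem_support_iff.1 hs ?_
  rw [← mul_one (z s), ← vertexSign_mul_self v s, ← mul_assoc, ← hcoeff, zero_mul]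

lemma isExactAt_insert_empty_of_finrank_lt {X : Geometry.SimplicialComplex 𝕜 E} {S : Set (Finset E)}
    (hS : S ⊆ X.faces) {n : ℕ} (hn : finrank 𝕜 E < n) : IsExactAt R (insert ∅ S) n := by
  intro z hz hcycle
  have hX : ↑z.support ⊆ X.faces := fun s hs => by
    obtain ⟨rfl | hsS, hcard⟩ := hz hs
    · exact absurd hcard (Nat.ne_of_lt (Nat.zero_lt_of_lt hn))
    · exact hS hsS
  have hcard : ∀ s ∈ z.support, #s = finrank 𝕜 E + 1 := fun s hs =>
    (card_le_finrank_add_one_of_mem_faces (hX hs)).antisymm ((hz hs).2 ▸ hn)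
  rw [eq_zero_of_augBdry_eq_zero hX hcard hcycle]
  exact ⟨0, zero_mem _, map_zero _⟩

theorem topological_helly_unions_general [Nontrivial R] {ι : Type*} [Finite ι]
    (X : Geometry.SimplicialComplex 𝕜 E) (Γ : ι → Set (Finset E))
    (hΓ : ∀ i, IsComplex (Γ i) ∧ Γ i ⊆ X.faces)
    (h : ∀ Γ' : Finset ι, Γ'.Nonempty → #Γ' ≤ finrank 𝕜 E + 1 →
      RedHVanish R R E (⋃ i ∈ Γ', Γ i) ((#Γ' : ℤ) - 2)) :
    (⋂ i, Γ i).Nonempty := by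
  refine nonempty_iInter_of_isExactAt (R := R) (fun i => (hΓ i).1) fun σ n hσ => ?_
  rcases le_or_gt #σ (finrank 𝕜 E + 1) with hcard | hcard
  · refine isExactAt_of_redHVanish (isComplex_biUnion (fun i => (hΓ i).1) σ) ?_
    have hvanish := h σ (card_pos.1 (hσ ▸ n.succ_pos)) hcard
    rwa [hσ, Nat.cast_succ, add_sub_assoc] at hvanish
  · refine isExactAt_insert_empty_of_finrank_lt (Set.iUnion₂_subset fun i _ => (hΓ i).2) ?_
    rwa [hσ, add_lt_add_iff_right] at hcard

end Helly

/-- Topological Helly theorem for unions: for a simplicial complex embedded in `ℝ^d`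
(formalized via Mathlib's geometric simplicial complexes) and a finite collection of
subcomplexes, vanishing of `H̃_{|Γ'|-2}(⋃Γ')` for all subcollections of size `≤ d+1`
forces a common face. -/
theorem topological_helly_unions (d : ℕ) [LinearOrder (EuclideanSpace ℝ (Fin d))]
    (F : Type*) [Field F] {ι : Type*} [Fintype ι]
    (X : Geometry.SimplicialComplex ℝ (EuclideanSpace ℝ (Fin d)))
    (Γ : ι → Set (Finset (EuclideanSpace ℝ (Fin d))))
    (hΓ : ∀ i, IsComplex (Γ i) ∧ Γ i ⊆ X.faces)
    (h : ∀ Γ' : Finset ι, Γ'.Nonempty → Γ'.card ≤ d + 1 →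
      RedHVanish F F (EuclideanSpace ℝ (Fin d)) (⋃ i ∈ Γ', Γ i) ((Γ'.card : ℤ) - 2)) :
    (⋂ i, Γ i).Nonempty :=
  topological_helly_unions_general X Γ hΓ <| by rwa [finrank_euclideanSpace_fin]
end
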